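/- For every r, Δ ∈ ℕ and δ, α > 0 there exist ε, β > 0 and a constant C such that the following holds. Let R be a graph on the vertex set [r], and for each i ∈ [r] let V_i be a set of size N, the sets V_1, …, V_r pairwise disjoint. Let G be a graph on V = V_1 ∪ … ∪ V_r such that the pair (V_i, V_j) is (ε, δ)-super-regular for every edge {i, j} of R. Let H be a graph with maximum degree at most Δ and let h : V(H) → [r] be a graph homomorphism from H to R such that |h⁻¹(i)| ≤ N for every i ∈ [r]. Let W ⊆ V(H) be a set of size |W| ≤ βN, and for each x ∈ W let W_x ⊆ V_{h(x)} be a set of size at least αN; for x ∈ V(H) \ W set W_x = V_{h(x)}. Then there exists a (C/N)-vertex-spread probability distribution λ over graph embeddings φ : H ↪ G (injective maps sending every edge of H to an edge of G) with the property that φ(x) ∈ W_x for every x ∈ V(H). -/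

import Mathlib

open Finset
open scoped Classical

/-- The density of the pair of vertex sets `(A, B)` in the graph `G`. -/
noncomputable def edgeDensityR {V : Type} (G : SimpleGraph V) (A B : Finset V) : ℝ :=
  (∑ a ∈ A, ((B.filter fun b => G.Adj a b).card : ℝ)) / ((A.card : ℝ) * (B.card : ℝ))

/-- The pair `(A, B)` is `ε`-regular in `G`. -/
noncomputable def IsRegularPair {V : Type} (G : SimpleGraph V) (A B : Finset V) (ε : ℝ) : Prop :=
  ∀ X ⊆ A, ∀ Y ⊆ B, ε * A.card ≤ X.card → ε * B.card ≤ Y.card →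
    |edgeDensityR G X Y - edgeDensityR G A B| ≤ ε

/-- The pair `(A, B)` is `(ε, δ)`-super-regular in `G`: it is `ε`-regular,
`|A| = |B| = N`, and every vertex of one side has at least `δN` neighbours
in the other side. -/
noncomputable def IsSuperRegularPair {V : Type} (G : SimpleGraph V) (A B : Finset V)
    (ε δ : ℝ) (N : ℕ) : Prop :=
  IsRegularPair G A B ε ∧ A.card = N ∧ B.card = N ∧
    (∀ v ∈ A, δ * N ≤ ((B.filter fun b => G.Adj v b).card : ℝ)) ∧
    (∀ v ∈ B, δ * N ≤ ((A.filter fun a => G.Adj v a).card : ℝ))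

theorem process_exists {σ V : Type} [Fintype σ] (opts : σ → Finset V) (ext : σ → V → σ)
    (Inv : σ → Prop) (rk : σ → ℕ) (M : ℕ) (hM : ∀ s, rk s ≤ M)
    (hrk : ∀ s, Inv s → ∀ v ∈ opts s, rk s < rk (ext s v))
    (hInv : ∀ s, Inv s → ∀ v ∈ opts s, Inv (ext s v)) :
    ∀ s, Inv s → ∃ p : σ → ℝ, (∀ s', 0 ≤ p s') ∧ ∑ s', p s' = 1 ∧
      (∀ s', p s' ≠ 0 → Inv s' ∧ opts s' = ∅) ∧
      ∀ Φ : σ → ℝ, (∀ s, Inv s → (opts s).Nonempty →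
        ∑ v ∈ opts s, Φ (ext s v) ≤ (opts s).card * Φ s) → ∑ s', p s' * Φ s' ≤ Φ s := by
  have key : ∀ k : ℕ, ∀ s, M - rk s = k → Inv s → ∃ p : σ → ℝ, (∀ s', 0 ≤ p s') ∧
      ∑ s', p s' = 1 ∧ (∀ s', p s' ≠ 0 → Inv s' ∧ opts s' = ∅) ∧
      ∀ Φ : σ → ℝ, (∀ s, Inv s → (opts s).Nonempty →
        ∑ v ∈ opts s, Φ (ext s v) ≤ (opts s).card * Φ s) → ∑ s', p s' * Φ s' ≤ Φ s := by
    intro k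
    induction k using Nat.strong_induction_on with
    | _ k ih =>
      intro s hk hs
      by_cases ho : opts s = ∅
      · refine ⟨fun s' => if s' = s then 1 else 0, ?_, ?_, ?_, ?_⟩
        · intro s'; dsimp only; split_ifs <;> norm_num
        · simp
        · intro s' h
          by_cases h' : s' = s
          · subst h'; exact ⟨hs, ho⟩
          · simp [h'] at h
        · intro Φ _; simp
      · have hne : (opts s).Nonempty := Finset.nonempty_iff_ne_empty.mpr ho
        have hch : ∀ v : V, v ∈ opts s → ∃ p : σ → ℝ, (∀ s', 0 ≤ p s') ∧ ∑ s', p s' = 1 ∧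
            (∀ s', p s' ≠ 0 → Inv s' ∧ opts s' = ∅) ∧
            ∀ Φ : σ → ℝ, (∀ s, Inv s → (opts s).Nonempty →
            ∑ v ∈ opts s, Φ (ext s v) ≤ (opts s).card * Φ s) →
            ∑ s', p s' * Φ s' ≤ Φ (ext s v) := by
          intro v hv
          have h1 := hrk s hs v hv
          have h2 := hM (ext s v)
          exact ih (M - rk (ext s v)) (by omega) _ rfl (hInv s hs v hv)
        choose! P hP using hch
        have hc : (0 : ℝ) < (opts s).card := by exact_mod_cast hne.card_pos
        refine ⟨fun s' => (∑ v ∈ opts s, P v s') / (opts s).card, ?_, ?_, ?_, ?_⟩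
        · intro s'
          exact div_nonneg (Finset.sum_nonneg fun v hv => (hP v hv).1 s') hc.le
        · rw [← Finset.sum_div, Finset.sum_comm,
            Finset.sum_congr rfl (fun v hv => (hP v hv).2.1)]
          simp [hc.ne']
        · intro s' h
          have : ∃ v ∈ opts s, P v s' ≠ 0 := by
            by_contra! hcon
            exact h (by simp [Finset.sum_eq_zero hcon])
          obtain ⟨v, hv, h0⟩ := this
          exact (hP v hv).2.2.1 s' h0
        · intro Φ hΦ
          have : ∑ s', (∑ v ∈ opts s, P v s') / (opts s).card * Φ s'
              = (∑ v ∈ opts s, ∑ s', P v s' * Φ s') / (opts s).card := by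
            rw [Finset.sum_comm, Finset.sum_div]
            refine Finset.sum_congr rfl fun s' _ => ?_
            rw [← Finset.sum_mul]; ring
          rw [this, div_le_iff₀ hc, mul_comm]
          exact (Finset.sum_le_sum fun v hv => (hP v hv).2.2.2 Φ hΦ).trans (hΦ s hs hne)
  intro s hs
  exact key _ s rfl hs

/-- one step of a product potential -/
theorem prod_potential_step {ι V : Type} (I : Finset ι) (O : Finset V) (a : ι → ℝ)
    (b : ι → V → ℝ) (i0 : ι) (hb : ∀ i v, 0 ≤ b i v) (ha : ∀ i, 0 ≤ a i)
    (h1 : ∀ i ∈ I, i ≠ i0 → ∀ v ∈ O, b i v ≤ a i)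
    (h2 : i0 ∈ I → ∑ v ∈ O, b i0 v ≤ O.card * a i0) :
    ∑ v ∈ O, ∏ i ∈ I, b i v ≤ O.card * ∏ i ∈ I, a i := by
  by_cases hi : i0 ∈ I
  · rw [← Finset.mul_prod_erase I a hi]
    calc ∑ v ∈ O, ∏ i ∈ I, b i v ≤ ∑ v ∈ O, b i0 v * ∏ i ∈ I.erase i0, a i := by
          refine Finset.sum_le_sum fun v hv => ?_
          rw [← Finset.mul_prod_erase I (fun i => b i v) hi]
          refine mul_le_mul_of_nonneg_left ?_ (hb _ _)
          refine Finset.prod_le_prod (fun i _ => hb i v) fun i hi' => ?_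
          exact h1 i (Finset.mem_of_mem_erase hi') (Finset.ne_of_mem_erase hi') v hv
      _ = (∑ v ∈ O, b i0 v) * ∏ i ∈ I.erase i0, a i := by rw [Finset.sum_mul]
      _ ≤ (O.card * a i0) * ∏ i ∈ I.erase i0, a i :=
          mul_le_mul_of_nonneg_right (h2 hi) (Finset.prod_nonneg fun i _ => ha i)
      _ = _ := by ring
  · calc ∑ v ∈ O, ∏ i ∈ I, b i v ≤ ∑ v ∈ O, ∏ i ∈ I, a i := by
          refine Finset.sum_le_sum fun v hv => ?_
          refine Finset.prod_le_prod (fun i _ => hb i v) fun i hi' => ?_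
          exact h1 i hi' (fun h => hi (h ▸ hi')) v hv
      _ = _ := by simp

/-- number of elements of `Ω` satisfying `P`, as a real number -/
noncomputable def cnt {α : Type} (Ω : Finset α) (P : α → Prop) : ℝ :=
  ((@Finset.filter α P (Classical.decPred P) Ω).card : ℝ)

theorem cnt_eq {α : Type} (Ω : Finset α) (P : α → Prop) [DecidablePred P] :
    cnt Ω P = ((Ω.filter P).card : ℝ) := by
  unfold cnt; congr!

theorem cnt_nonneg {α : Type} (Ω : Finset α) (P : α → Prop) : 0 ≤ cnt Ω P := Nat.cast_nonneg _

theorem cnt_le_card {α : Type} (Ω : Finset α) (P : α → Prop) : cnt Ω P ≤ Ω.card := by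
  unfold cnt; exact_mod_cast Finset.card_filter_le _ _

theorem cnt_mono {α : Type} (Ω : Finset α) (P Q : α → Prop) (h : ∀ a ∈ Ω, P a → Q a) :
    cnt Ω P ≤ cnt Ω Q := by
  unfold cnt
  norm_cast
  refine Finset.card_le_card fun a ha => ?_
  rw [mem_filter] at ha ⊢
  exact ⟨ha.1, h a ha.1 ha.2⟩

theorem cnt_congr {α : Type} (Ω : Finset α) (P Q : α → Prop) (h : ∀ a ∈ Ω, P a ↔ Q a) :
    cnt Ω P = cnt Ω Q :=
  le_antisymm (cnt_mono _ _ _ fun a ha => (h a ha).1) (cnt_mono _ _ _ fun a ha => (h a ha).2)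

theorem cnt_add_not {α : Type} (Ω : Finset α) (P : α → Prop) :
    cnt Ω P + cnt Ω (fun a => ¬ P a) = Ω.card := by
  rw [cnt_eq, cnt_eq]
  exact_mod_cast Finset.card_filter_add_card_filter_not _

theorem cnt_exists_le {α ι : Type} (Ω : Finset α) (I : Finset ι) (P : ι → α → Prop)
    (R : α → Prop) (h : ∀ a ∈ Ω, R a → ∃ i ∈ I, P i a) :
    cnt Ω R ≤ ∑ i ∈ I, cnt Ω (P i) := by
  unfold cnt
  have : (@Finset.filter α R (Classical.decPred _) Ω) ⊆
      I.biUnion (fun i => @Finset.filter α (P i) (Classical.decPred _) Ω) := by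
    intro a ha
    rw [mem_filter] at ha
    obtain ⟨i, hi, hp⟩ := h a ha.1 ha.2
    exact mem_biUnion.mpr ⟨i, hi, mem_filter.mpr ⟨ha.1, hp⟩⟩
  have h2 := (Finset.card_le_card this).trans card_biUnion_le
  exact_mod_cast h2

theorem cnt_prod {α β : Type} (A : Finset α) (B : Finset β) (P : α → Prop) (Q : β → Prop) :
    cnt (A ×ˢ B) (fun ω => P ω.1 ∧ Q ω.2) = cnt A P * cnt B Q := by
  rw [cnt_eq, cnt_eq, cnt_eq, Finset.filter_product, Finset.card_product]
  push_cast; ring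

theorem cnt_true {α : Type} (Ω : Finset α) : cnt Ω (fun _ => True) = Ω.card := by
  rw [cnt_eq]; simp

/-- counting in product spaces -/
theorem pi_count {Z Y : Type} [Fintype Z] [DecidableEq Z] (N : Z → Finset Y) (Q : Finset Z)
    (T : Z → Y → Prop) (b : ℝ)
    (h : ∀ q ∈ Q, cnt (N q) (T q) ≤ b * (N q).card) :
    cnt (Fintype.piFinset N) (fun ω => ∀ q ∈ Q, T q (ω q))
      ≤ b ^ Q.card * (Fintype.piFinset N).card := by
  have h1 : @Finset.filter _ (fun ω => ∀ q ∈ Q, T q (ω q)) (Classical.decPred _)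
      (Fintype.piFinset N)
      = Fintype.piFinset (fun q => if q ∈ Q then
        @Finset.filter _ (T q) (Classical.decPred _) (N q) else N q) := by
    ext ω
    simp only [mem_filter, Fintype.mem_piFinset]
    constructor
    · rintro ⟨h1, h2⟩ q
      split_ifs with hq
      · exact mem_filter.mpr ⟨h1 q, h2 q hq⟩
      · exact h1 q
    · intro h1
      refine ⟨fun q => ?_, fun q hq => ?_⟩
      · have := h1 q
        split_ifs at this
        · exact (mem_filter.mp this).1
        · exact this
      · have := h1 q
        rw [if_pos hq] at this
        exact (mem_filter.mp this).2
  rw [cnt, h1, Fintype.card_piFinset, Fintype.card_piFinset]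
  push_cast
  have h2 : b ^ Q.card * ∏ i, ((N i).card : ℝ)
      = ∏ i, ((if i ∈ Q then b else 1) * ((N i).card : ℝ)) := by
    rw [Finset.prod_mul_distrib]
    congr 1
    rw [Finset.prod_ite_mem]
    simp
  rw [h2]
  refine Finset.prod_le_prod (fun _ _ => Nat.cast_nonneg _) fun i _ => ?_
  split_ifs with hi
  · exact h i hi
  · simp

/-- The `K`-fold choice space. -/
noncomputable def kout {X Y : Type} [Fintype X] (K : ℕ) (N : X → Finset Y) :
    Finset (X → Fin K → Y) :=
  Fintype.piFinset (fun x => Fintype.piFinset (fun _ : Fin K => N x))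

theorem kout_mem {X Y : Type} [Fintype X] {K : ℕ} {N : X → Finset Y} {ω : X → Fin K → Y} :
    ω ∈ kout K N ↔ ∀ x j, ω x j ∈ N x := by
  simp [kout, Fintype.mem_piFinset]

/-- probability that edges `(x, g x)`, `x ∈ D`, are all chosen -/
theorem kout_spread {X Y : Type} [Fintype X] (K : ℕ) (N : X → Finset Y) (D : Finset X)
    (g : X → Y) (b : ℝ) (hb : ∀ x ∈ D, 1 ≤ b * (N x).card) :
    cnt (kout K N) (fun ω => ∀ x ∈ D, ∃ j, ω x j = g x)
      ≤ (K * b) ^ D.card * (kout K N).card := by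
  refine pi_count _ D (fun x (u : Fin K → Y) => ∃ j, u j = g x) (K * b) ?_
  intro x hx
  have h2 := cnt_exists_le (Fintype.piFinset fun _ : Fin K => N x) (univ : Finset (Fin K))
    (fun j u => u j = g x) (fun u => ∃ j, u j = g x) (by rintro a - ⟨j, hj⟩; exact ⟨j, by simp, hj⟩)
  refine h2.trans ?_
  have h3 : ∀ j : Fin K, cnt (Fintype.piFinset fun _ : Fin K => N x) (fun u => u j = g x)
      ≤ b * ((Fintype.piFinset fun _ : Fin K => N x).card : ℝ) := by
    intro j
    have := pi_count (fun _ : Fin K => N x) {j} (fun _ y => y = g x) b ?_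
    · simpa using this
    · intro q _
      refine le_trans ?_ (hb x hx)
      rw [cnt_eq]
      have : ((N x).filter (fun y => y = g x)).card ≤ 1 :=
        Finset.card_le_one.mpr fun a ha b hb =>
          (mem_filter.mp ha).2.trans (mem_filter.mp hb).2.symm
      exact_mod_cast this
  calc _ ≤ ∑ j : Fin K, b * ((Fintype.piFinset fun _ : Fin K => N x).card : ℝ) :=
        Finset.sum_le_sum fun j _ => h3 j
    _ = _ := by rw [Finset.sum_const, Finset.card_univ, Fintype.card_fin, nsmul_eq_mul]; ring

/-- probability that all choices of vertices in `S` satisfy `T`. -/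
theorem kout_inside {X Y : Type} [Fintype X] (K : ℕ) (N : X → Finset Y) (S : Finset X)
    (T : Y → Prop) (b : ℝ)
    (hb : ∀ x ∈ S, cnt (N x) T ≤ b * (N x).card) :
    cnt (kout K N) (fun ω => ∀ x ∈ S, ∀ j, T (ω x j))
      ≤ (b ^ K) ^ S.card * (kout K N).card := by
  refine pi_count _ S (fun x (u : Fin K → Y) => ∀ j, T (u j)) (b ^ K) ?_
  intro x hx
  have := pi_count (fun _ : Fin K => N x) univ (fun _ y => T y) b (fun q _ => hb x hx)
  simpa using this

theorem choose_bound (n s : ℕ) (hn : 0 < n) :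
    (n.choose s : ℝ) * ((s : ℝ) / n) ^ s ≤ 3 ^ s := by
  have h1 : (n.choose s : ℝ) ≤ (n : ℝ) ^ s / s.factorial := Nat.choose_le_pow_div s n
  have h2 : (s : ℝ) ^ s / s.factorial ≤ Real.exp s :=
    Real.pow_div_factorial_le_exp (x := (s : ℝ)) (by positivity) s
  have h3 : Real.exp s ≤ 3 ^ s := by
    have : Real.exp (s : ℝ) = Real.exp 1 ^ s := by rw [← Real.exp_nat_mul]; simp
    rw [this]
    exact pow_le_pow_left₀ (Real.exp_pos _).le (by linarith [Real.exp_one_lt_d9]) _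
  have hn' : (0 : ℝ) < n := by exact_mod_cast hn
  calc (n.choose s : ℝ) * ((s : ℝ) / n) ^ s
      ≤ ((n : ℝ) ^ s / s.factorial) * ((s : ℝ) / n) ^ s := by gcongr
    _ = (s : ℝ) ^ s / s.factorial := by
        rw [div_pow]; field_simp
    _ ≤ _ := h2.trans h3

theorem small_term (n s K : ℕ) (c : ℝ) (hc : 0 < c) (hn : 0 < n) (hs : (s : ℝ) ≤ c / 2 * n)
    (hK : 9 * (1 / 2 : ℝ) ^ K ≤ c ^ 2 / 32) :
    (n.choose s : ℝ) * (n.choose s : ℝ) * (((s : ℝ) / (c * n)) ^ (K + 2)) ^ s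
      ≤ (1 / 32 : ℝ) ^ s := by
  have hn' : (0 : ℝ) < n := by exact_mod_cast hn
  have h1 := choose_bound n s hn
  have e1 : (((s : ℝ) / (c * n)) ^ (K + 2)) ^ s
      = ((s : ℝ) / n) ^ s * ((s : ℝ) / n) ^ s * ((1 / c ^ 2) * ((s : ℝ) / (c * n)) ^ K) ^ s := by
    rw [← mul_pow, ← mul_pow]
    congr 1
    rw [pow_add]
    have : (s : ℝ) / (c * n) = (s / n) * (1 / c) := by field_simp
    rw [this]; field_simp
  have h2 : (s : ℝ) / (c * n) ≤ 1 / 2 := by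
    rw [div_le_iff₀ (by positivity)]; linarith
  have h3 : ((s : ℝ) / (c * n)) ^ K ≤ (1 / 2) ^ K := pow_le_pow_left₀ (by positivity) h2 _
  rw [e1]
  calc (n.choose s : ℝ) * (n.choose s : ℝ) *
        (((s : ℝ) / n) ^ s * ((s : ℝ) / n) ^ s * ((1 / c ^ 2) * ((s : ℝ) / (c * n)) ^ K) ^ s)
      = ((n.choose s : ℝ) * ((s : ℝ) / n) ^ s) * ((n.choose s : ℝ) * ((s : ℝ) / n) ^ s)
        * ((1 / c ^ 2) * ((s : ℝ) / (c * n)) ^ K) ^ s := by ring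
    _ ≤ 3 ^ s * 3 ^ s * ((1 / c ^ 2) * (1 / 2) ^ K) ^ s := by gcongr
    _ = (9 * (1 / c ^ 2 * (1 / 2) ^ K)) ^ s := by
        rw [← mul_pow, ← mul_pow]; norm_num
    _ ≤ _ := by
        refine pow_le_pow_left₀ (by positivity) ?_ _
        have : 9 * (1 / c ^ 2 * (1 / 2) ^ K) = (9 * (1 / 2) ^ K) / c ^ 2 := by ring
        rw [this, div_le_iff₀ (by positivity)]
        linarith

/-- small sets expand -/
theorem kout_small {X Y : Type} [Fintype X] [Fintype Y] (K n : ℕ) (N : X → Finset Y)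
    (hX : Fintype.card X = n) (hY : Fintype.card Y = n) (c : ℝ) (hc : 0 < c) (hn : 0 < n)
    (hN : ∀ x, c * n ≤ (N x).card) (hK : 9 * (1 / 2 : ℝ) ^ K ≤ c ^ 2 / 32) :
    cnt (kout (K + 2) N) (fun ω => ∃ S : Finset X, ∃ T : Finset Y, S.card = T.card ∧
      1 ≤ S.card ∧ (S.card : ℝ) ≤ c / 2 * n ∧ ∀ x ∈ S, ∀ j, ω x j ∈ T)
      ≤ 1 / 16 * (kout (K + 2) N).card := by
  have hn' : (0 : ℝ) < n := by exact_mod_cast hn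
  set Ω := kout (K + 2) N with hΩ
  set I := (Finset.range n).filter (fun s : ℕ => ((s + 1 : ℕ) : ℝ) ≤ c / 2 * n) with hI
  have h1 : cnt Ω (fun ω => ∃ S : Finset X, ∃ T : Finset Y, S.card = T.card ∧
      1 ≤ S.card ∧ (S.card : ℝ) ≤ c / 2 * n ∧ ∀ x ∈ S, ∀ j, ω x j ∈ T) ≤
      ∑ s ∈ I, cnt Ω (fun ω => ∃ S : Finset X, ∃ T : Finset Y, S.card = s + 1 ∧ T.card = s + 1 ∧
        ∀ x ∈ S, ∀ j, ω x j ∈ T) := by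
    refine cnt_exists_le _ _ _ _ ?_
    rintro ω - ⟨S, T, h1, h2, h3, h4⟩
    have h5 : S.card ≤ n := hX ▸ Finset.card_le_univ S
    have h6 : S.card - 1 + 1 = S.card := by omega
    refine ⟨S.card - 1, ?_, S, T, by omega, by omega, h4⟩
    rw [hI, mem_filter, mem_range, h6]
    exact ⟨by omega, h3⟩
  have h3 : ∀ s ∈ I, cnt Ω (fun ω => ∃ S : Finset X, ∃ T : Finset Y, S.card = s + 1 ∧
      T.card = s + 1 ∧ ∀ x ∈ S, ∀ j, ω x j ∈ T) ≤ (1 / 32 : ℝ) ^ (s + 1) * Ω.card := by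
    intro s hs
    have hs' : ((s + 1 : ℕ) : ℝ) ≤ c / 2 * n := (mem_filter.mp hs).2
    have hterm := small_term n (s + 1) K c hc hn hs' hK
    have hu := cnt_exists_le Ω ((powersetCard (s + 1) (univ : Finset X)) ×ˢ
      (powersetCard (s + 1) (univ : Finset Y))) (fun P ω => ∀ x ∈ P.1, ∀ j, ω x j ∈ P.2)
      (fun ω => ∃ S : Finset X, ∃ T : Finset Y, S.card = s + 1 ∧
      T.card = s + 1 ∧ ∀ x ∈ S, ∀ j, ω x j ∈ T) (by
        rintro ω - ⟨S, T, hS, hT, h⟩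
        refine ⟨(S, T), ?_, h⟩
        rw [mem_product, mem_powersetCard, mem_powersetCard]
        exact ⟨⟨subset_univ _, hS⟩, subset_univ _, hT⟩)
    refine hu.trans ?_
    calc _ ≤ ∑ P ∈ (powersetCard (s + 1) (univ : Finset X)) ×ˢ
        (powersetCard (s + 1) (univ : Finset Y)),
        ((((s + 1 : ℕ) : ℝ) / (c * n)) ^ (K + 2)) ^ (s + 1) * (Ω.card : ℝ) := by
          refine Finset.sum_le_sum fun P hP => ?_
          rw [mem_product] at hP
          have hS' := (mem_powersetCard.mp hP.1).2
          have hT' := (mem_powersetCard.mp hP.2).2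
          have := kout_inside (K + 2) N P.1 (fun y => y ∈ P.2) (((s + 1 : ℕ) : ℝ) / (c * n)) ?_
          · rw [hS'] at this; exact this
          · intro x _
            have e1 : cnt (N x) (fun y => y ∈ P.2) ≤ ((s + 1 : ℕ) : ℝ) := by
              rw [cnt_eq]
              have : ((N x).filter (fun y => y ∈ P.2)).card ≤ P.2.card :=
                Finset.card_le_card fun y hy => (mem_filter.mp hy).2
              rw [hT'] at this
              exact_mod_cast this
            have e2 := hN x
            refine e1.trans ?_
            rw [div_mul_eq_mul_div, le_div_iff₀ (by positivity)]
            exact mul_le_mul_of_nonneg_left e2 (by positivity)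
      _ = (n.choose (s + 1) : ℝ) * (n.choose (s + 1) : ℝ)
          * ((((s + 1 : ℕ) : ℝ) / (c * n)) ^ (K + 2)) ^ (s + 1) * (Ω.card : ℝ) := by
          rw [Finset.sum_const, card_product, card_powersetCard, card_powersetCard,
            Finset.card_univ, Finset.card_univ, hX, hY, nsmul_eq_mul]
          push_cast
          ring
      _ ≤ _ := mul_le_mul_of_nonneg_right hterm (Nat.cast_nonneg _)
  have h4 : ∑ s ∈ I, (1 / 32 : ℝ) ^ (s + 1) * Ω.card ≤ 1 / 16 * Ω.card := by
    rw [← Finset.sum_mul]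
    refine mul_le_mul_of_nonneg_right ?_ (Nat.cast_nonneg _)
    calc _ ≤ ∑ s ∈ Finset.range n, (1 / 32 : ℝ) ^ (s + 1) :=
          Finset.sum_le_sum_of_subset_of_nonneg (filter_subset _ _) (fun _ _ _ => by positivity)
      _ = (1 / 32) * ∑ s ∈ Finset.range n, (1 / 32 : ℝ) ^ s := by
          rw [Finset.mul_sum]; refine Finset.sum_congr rfl fun s _ => by ring
      _ ≤ 1 / 16 := by
          rw [geom_sum_eq (by norm_num)]
          have : (0 : ℝ) ≤ (1 / 32) ^ n := by positivity
          generalize (1 / 32 : ℝ) ^ n = t at this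
          rw [div_eq_mul_inv]
          norm_num
          linarith
  exact h1.trans ((Finset.sum_le_sum h3).trans h4)

/-- middle-size sets expand -/
theorem kout_mid {X Y : Type} [Fintype X] [Fintype Y] (K n : ℕ) (N : X → Finset Y)
    (hX : Fintype.card X = n) (hY : Fintype.card Y = n) (c' θ θ' : ℝ) (hc' : 0 < c')
    (hc1 : c' ≤ 1) (hn : 0 < n)
    (hreg : ∀ S : Finset X, ∀ T : Finset Y, θ * n ≤ S.card → θ * n ≤ T.card →
      θ' * n ≤ cnt S (fun x => c' * n ≤ cnt (N x) (· ∈ T)))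
    (hK : Real.exp (-(c' * K * θ')) ≤ 1 / 64) :
    cnt (kout K N) (fun ω => ∃ S : Finset X, ∃ T : Finset Y, θ * n ≤ S.card ∧
      θ * n ≤ T.card ∧ ∀ x ∈ S, ∀ j, ω x j ∉ T)
      ≤ 1 / 16 * (kout K N).card := by
  have hn' : (0 : ℝ) < n := by exact_mod_cast hn
  set Ω := kout K N with hΩ
  have h1 := cnt_exists_le Ω ((univ : Finset (Finset X × Finset Y)).filter
        (fun P => θ * n ≤ P.1.card ∧ θ * n ≤ P.2.card)) (fun P ω => ∀ x ∈ P.1, ∀ j, ω x j ∉ P.2)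
    (fun ω => ∃ S : Finset X, ∃ T : Finset Y, θ * n ≤ S.card ∧
      θ * n ≤ T.card ∧ ∀ x ∈ S, ∀ j, ω x j ∉ T) (by
      rintro ω - ⟨S, T, h1, h2, h3⟩
      exact ⟨(S, T), mem_filter.mpr ⟨mem_univ _, h1, h2⟩, h3⟩)
  have h2 : ∀ P ∈ (univ : Finset (Finset X × Finset Y)).filter
        (fun P => θ * n ≤ P.1.card ∧ θ * n ≤ P.2.card),
        cnt Ω (fun ω => ∀ x ∈ P.1, ∀ j, ω x j ∉ P.2) ≤ (1 / 64 : ℝ) ^ n * Ω.card := by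
    intro P hP
    have hP' := (mem_filter.mp hP).2
    set S' := P.1.filter fun x => c' * n ≤ cnt (N x) (· ∈ P.2) with hS'
    have hcard := hreg P.1 P.2 hP'.1 hP'.2
    rw [cnt_eq] at hcard
    have := kout_inside K N S' (fun y => y ∉ P.2) (1 - c') ?_
    · have hle : cnt Ω (fun ω => ∀ x ∈ P.1, ∀ j, ω x j ∉ P.2) ≤
        cnt Ω (fun ω => ∀ x ∈ S', ∀ j, ω x j ∉ P.2) :=
        cnt_mono _ _ _ fun ω _ hω x hx => hω x (mem_filter.mp hx).1
      refine hle.trans (this.trans ?_)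
      refine mul_le_mul_of_nonneg_right ?_ (Nat.cast_nonneg _)
      rw [← pow_mul]
      have e1 : (1 - c') ^ (K * S'.card) ≤ Real.exp (-c') ^ (K * S'.card) :=
        pow_le_pow_left₀ (by linarith) (by linarith [Real.add_one_le_exp (-c')]) _
      refine e1.trans ?_
      rw [← Real.exp_nat_mul]
      refine le_trans ?_ (pow_le_pow_left₀ (Real.exp_pos _).le hK n)
      rw [← Real.exp_nat_mul]
      apply Real.exp_le_exp.mpr
      push_cast
      have : c' * K * (θ' * n) ≤ c' * K * S'.card :=
        mul_le_mul_of_nonneg_left hcard (by positivity)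
      nlinarith
    · intro x hx
      have e1 := (mem_filter.mp hx).2
      have e2 := cnt_add_not (N x) (· ∈ P.2)
      have e3 : ((N x).card : ℝ) ≤ n := by
        have := Finset.card_le_univ (N x)
        rw [hY] at this
        exact_mod_cast this
      nlinarith
  have h3 : ∑ P ∈ (univ : Finset (Finset X × Finset Y)).filter
        (fun P => θ * n ≤ P.1.card ∧ θ * n ≤ P.2.card), (1 / 64 : ℝ) ^ n * Ω.card
        ≤ 1 / 16 * Ω.card := by
    rw [Finset.sum_const, nsmul_eq_mul, ← mul_assoc]
    refine mul_le_mul_of_nonneg_right ?_ (Nat.cast_nonneg _)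
    have e1 : ((univ : Finset (Finset X × Finset Y)).filter
        (fun P => θ * n ≤ P.1.card ∧ θ * n ≤ P.2.card)).card ≤ 2 ^ n * 2 ^ n := by
      refine (Finset.card_filter_le _ _).trans ?_
      rw [Finset.card_univ, Fintype.card_prod, Fintype.card_finset, Fintype.card_finset, hX, hY]
    have e2 : (((univ : Finset (Finset X × Finset Y)).filter
        (fun P => θ * n ≤ P.1.card ∧ θ * n ≤ P.2.card)).card : ℝ) ≤ 4 ^ n := by
      have : (2 : ℕ) ^ n * 2 ^ n = 4 ^ n := by rw [← mul_pow]; norm_num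
      rw [this] at e1
      exact_mod_cast e1
    calc _ ≤ (4 : ℝ) ^ n * (1 / 64) ^ n := by gcongr
      _ = (1 / 16) ^ n := by rw [← mul_pow]; norm_num
      _ ≤ (1 / 16) ^ 1 := pow_le_pow_of_le_one (by norm_num) (by norm_num) hn
      _ = _ := by norm_num
  exact h1.trans ((Finset.sum_le_sum h2).trans h3)

/-- total weight of the elements satisfying `P` -/
noncomputable def wt {ι : Type} [Fintype ι] (w : ι → ℝ) (P : ι → Prop) : ℝ :=
  ∑ i, @ite ℝ (P i) (Classical.propDecidable _) (w i) 0

theorem wt_mono {ι : Type} [Fintype ι] (w : ι → ℝ) (hw : ∀ i, 0 ≤ w i) (P Q : ι → Prop)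
    (h : ∀ i, w i ≠ 0 → P i → Q i) : wt w P ≤ wt w Q := by
  unfold wt
  refine Finset.sum_le_sum fun i _ => ?_
  by_cases h0 : w i = 0
  · simp [h0]
  by_cases hp : P i
  · rw [if_pos hp, if_pos (h i h0 hp)]
  · rw [if_neg hp]; split_ifs
    · exact hw i
    · exact le_rfl

theorem wt_nonneg {ι : Type} [Fintype ι] (w : ι → ℝ) (hw : ∀ i, 0 ≤ w i) (P : ι → Prop) :
    0 ≤ wt w P := by
  unfold wt
  refine Finset.sum_nonneg fun i _ => ?_
  split_ifs
  · exact hw i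
  · exact le_rfl

theorem wt_true {ι : Type} [Fintype ι] (w : ι → ℝ) : wt w (fun _ => True) = ∑ i, w i := by
  simp [wt]

theorem hall_kout {X Y : Type} [Fintype X] [Fintype Y] (K n : ℕ)
    (hX : Fintype.card X = n) (hY : Fintype.card Y = n) (c : ℝ)
    (ω1 : X → Fin K → Y) (ω2 : Y → Fin K → X)
    (hA : ¬ ∃ S : Finset X, ∃ T : Finset Y, S.card = T.card ∧
      1 ≤ S.card ∧ (S.card : ℝ) ≤ c / 2 * n ∧ ∀ x ∈ S, ∀ j, ω1 x j ∈ T)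
    (hB : ¬ ∃ S : Finset X, ∃ T : Finset Y, c / 2 * n ≤ S.card ∧
      c / 2 * n ≤ T.card ∧ ∀ x ∈ S, ∀ j, ω1 x j ∉ T)
    (hA' : ¬ ∃ S : Finset Y, ∃ T : Finset X, S.card = T.card ∧
      1 ≤ S.card ∧ (S.card : ℝ) ≤ c / 2 * n ∧ ∀ x ∈ S, ∀ j, ω2 x j ∈ T) :
    ∃ φ : X → Y, Function.Injective φ ∧
      ∀ x, (∃ j, ω1 x j = φ x) ∨ (∃ j, ω2 (φ x) j = x) := by
  set t : X → Finset Y := fun x => univ.filter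
    (fun y => (∃ j, ω1 x j = y) ∨ (∃ j, ω2 y j = x)) with ht
  have key : ∀ S : Finset X, S.card ≤ (S.biUnion t).card := by
    intro S
    by_contra! hlt
    set U := S.biUnion t with hU
    have hSn : S.card ≤ n := hX ▸ Finset.card_le_univ S
    rcases le_or_gt (S.card : ℝ) (c / 2 * n) with h1 | h1
    · obtain ⟨T, hT1, hT2⟩ := Finset.exists_superset_card_eq (s := U) (n := S.card) hlt.le
        (by rw [hY]; exact hSn)
      refine hA ⟨S, T, hT2.symm, by omega, h1, fun x hx j => hT1 ?_⟩
      exact mem_biUnion.mpr ⟨x, hx, mem_filter.mpr ⟨mem_univ _, Or.inl ⟨j, rfl⟩⟩⟩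
    · have hc1 : (Uᶜ).card = n - U.card := by rw [Finset.card_compl, hY]
      have hc2 : (Sᶜ).card = n - S.card := by rw [Finset.card_compl, hX]
      rcases le_or_gt (c / 2 * n) ((Uᶜ).card : ℝ) with h2 | h2
      · refine hB ⟨S, Uᶜ, h1.le, h2, fun x hx j => ?_⟩
        rw [mem_compl, not_not]
        exact mem_biUnion.mpr ⟨x, hx, mem_filter.mpr ⟨mem_univ _, Or.inl ⟨j, rfl⟩⟩⟩
      · obtain ⟨T, hT1, hT2⟩ := Finset.exists_superset_card_eq (s := Sᶜ) (n := (Uᶜ).card)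
          (by omega) (by rw [hX]; omega)
        refine hA' ⟨Uᶜ, T, hT2.symm, by omega, h2.le, fun y hy j => hT1 ?_⟩
        rw [mem_compl] at hy ⊢
        intro hS
        exact hy (mem_biUnion.mpr ⟨ω2 y j, hS, mem_filter.mpr ⟨mem_univ _, Or.inr ⟨j, rfl⟩⟩⟩)
  obtain ⟨φ, h1, h2⟩ := (Finset.all_card_le_biUnion_card_iff_exists_injective t).mp key
  refine ⟨φ, h1, fun x => ?_⟩
  exact (mem_filter.mp (h2 x)).2

/-- spread of the two-sided choices -/
theorem kout_spread_two {X Y : Type} [Fintype X] [Fintype Y] (K : ℕ)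
    (N : X → Finset Y) (M : Y → Finset X) (b : ℝ) (hb0 : 0 ≤ b)
    (hN : ∀ x, 1 ≤ b * (N x).card) (hM : ∀ y, 1 ≤ b * (M y).card)
    (D : Finset X) (g : X → Y) (hg : Set.InjOn g D) :
    cnt (kout K N ×ˢ kout K M) (fun ω => ∀ x ∈ D,
      (∃ j, ω.1 x j = g x) ∨ (∃ j, ω.2 (g x) j = x))
      ≤ (2 * (K * b)) ^ D.card * (kout K N ×ˢ kout K M).card := by
  have h1 := cnt_exists_le (kout K N ×ˢ kout K M) D.powerset
    (fun D1 ω => (∀ x ∈ D1, ∃ j, ω.1 x j = g x) ∧ (∀ x ∈ D \ D1, ∃ j, ω.2 (g x) j = x))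
    (fun ω => ∀ x ∈ D, (∃ j, ω.1 x j = g x) ∨ (∃ j, ω.2 (g x) j = x)) (by
      intro ω _ h
      refine ⟨D.filter (fun x => ∃ j, ω.1 x j = g x), mem_powerset.mpr (filter_subset _ _),
        fun x hx => (mem_filter.mp hx).2, fun x hx => ?_⟩
      rw [mem_sdiff, mem_filter] at hx
      rcases h x hx.1 with h' | h'
      · exact absurd ⟨hx.1, h'⟩ hx.2
      · exact h')
  refine h1.trans ?_
  have h2 : ∀ D1 ∈ D.powerset, cnt (kout K N ×ˢ kout K M)
      (fun ω => (∀ x ∈ D1, ∃ j, ω.1 x j = g x) ∧ (∀ x ∈ D \ D1, ∃ j, ω.2 (g x) j = x))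
      ≤ (K * b) ^ D.card * (kout K N ×ˢ kout K M).card := by
    intro D1 hD1
    rw [mem_powerset] at hD1
    rw [cnt_prod (kout K N) (kout K M) (fun ω1 => ∀ x ∈ D1, ∃ j, ω1 x j = g x)
      (fun ω2 => ∀ x ∈ D \ D1, ∃ j, ω2 (g x) j = x)]
    have e1 := kout_spread K N D1 g b (fun x _ => hN x)
    have hinj : Set.InjOn g (D \ D1 : Finset X) :=
      hg.mono (by intro x hx; simp at hx ⊢; exact hx.1)
    by_cases hX : Nonempty X
    · have e2 := kout_spread K M ((D \ D1).image g) (Function.invFunOn g (D \ D1 : Finset X)) b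
        (fun x _ => hM x)
      rw [Finset.card_image_of_injOn hinj] at e2
      have e3 : cnt (kout K M) (fun ω2 => ∀ x ∈ D \ D1, ∃ j, ω2 (g x) j = x) ≤
          cnt (kout K M) (fun ω => ∀ y ∈ (D \ D1).image g, ∃ j, ω y j =
            Function.invFunOn g (D \ D1 : Finset X) y) := by
        refine cnt_mono _ _ _ fun ω _ h y hy => ?_
        obtain ⟨x, hx, rfl⟩ := mem_image.mp hy
        have : Function.invFunOn g (D \ D1 : Finset X) (g x) = x :=
          hinj.leftInvOn_invFunOn (Finset.mem_coe.mpr hx)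
        rw [this]
        exact h x hx
      have e4 : D1.card + (D \ D1).card = D.card := by
        rw [add_comm]; exact Finset.card_sdiff_add_card_eq_card hD1
      calc _ ≤ ((K * b) ^ D1.card * (kout K N).card) *
            ((K * b) ^ (D \ D1).card * (kout K M).card) :=
            mul_le_mul e1 (e3.trans e2) (cnt_nonneg _ _) (by positivity)
        _ = _ := by
            rw [← e4, pow_add, card_product]; push_cast; ring
    · have hD : D = ∅ := Finset.eq_empty_of_forall_notMem fun x _ => hX ⟨x⟩
      have hD1' : D1 = ∅ := Finset.eq_empty_of_forall_notMem fun x _ => hX ⟨x⟩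
      rw [hD, card_product]
      simp only [card_empty, pow_zero, one_mul]
      push_cast
      exact mul_le_mul (cnt_le_card _ _) (cnt_le_card _ _) (cnt_nonneg _ _) (Nat.cast_nonneg _)
  refine le_trans (Finset.sum_le_sum h2) (le_of_eq ?_)
  rw [Finset.sum_const, card_powerset, nsmul_eq_mul, mul_pow, ← mul_assoc]
  push_cast
  ring

theorem matching_lemma (c c' : ℝ) (hc : 0 < c) (hc' : 0 < c') (hc'1 : c' ≤ 1) :
    ∃ C : ℝ, 0 < C ∧ ∀ (X Y : Type) [Fintype X] [Fintype Y] (n : ℕ)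
      (_ : Fintype.card X = n) (_ : Fintype.card Y = n) (_ : 0 < n) (E : X → Y → Prop),
      (∀ x, c * n ≤ cnt univ (E x)) → (∀ y, c * n ≤ cnt univ (fun x => E x y)) →
      (∀ (S : Finset X) (T : Finset Y), c / 2 * n ≤ S.card → c / 2 * n ≤ T.card →
        c / 4 * n ≤ cnt S (fun x => c' * n ≤ cnt T (E x))) →
      ∃ w : (X → Y) → ℝ, (∀ φ, 0 ≤ w φ) ∧ ∑ φ, w φ = 1 ∧
        (∀ φ, w φ ≠ 0 → Function.Injective φ ∧ ∀ x, E x (φ x)) ∧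
        ∀ (D : Finset X) (g : X → Y), wt w (fun φ => ∀ x ∈ D, φ x = g x) ≤ (C / n) ^ D.card := by
  obtain ⟨K1, hK1⟩ := exists_pow_lt_of_lt_one (show 0 < c ^ 2 / 32 / 9 by positivity)
    (show (1 / 2 : ℝ) < 1 by norm_num)
  obtain ⟨K2, hK2⟩ := exists_nat_ge (Real.log 64 / (c' * (c / 4)))
  set K := max K1 K2 with hKdef
  have hKa : 9 * (1 / 2 : ℝ) ^ K ≤ c ^ 2 / 32 := by
    have : (1 / 2 : ℝ) ^ K ≤ (1 / 2) ^ K1 :=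
      pow_le_pow_of_le_one (by norm_num) (by norm_num) (le_max_left _ _)
    linarith
  have hKb : Real.exp (-(c' * ((K + 2 : ℕ) : ℝ) * (c / 4))) ≤ 1 / 64 := by
    have h1 : (K2 : ℝ) ≤ ((K + 2 : ℕ) : ℝ) := by
      exact_mod_cast (le_max_right K1 K2).trans (by omega)
    have h2 : Real.log 64 ≤ c' * ((K + 2 : ℕ) : ℝ) * (c / 4) := by
      rw [div_le_iff₀ (by positivity)] at hK2
      have : (K2 : ℝ) * (c' * (c / 4)) ≤ ((K + 2 : ℕ) : ℝ) * (c' * (c / 4)) :=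
        mul_le_mul_of_nonneg_right h1 (by positivity)
      linarith
    rw [Real.exp_neg, one_div]
    apply inv_anti₀ (by norm_num)
    rw [← Real.exp_log (show (0 : ℝ) < 64 by norm_num)]
    exact Real.exp_le_exp.mpr h2
  refine ⟨4 * ((K + 2 : ℕ) : ℝ) / c, by positivity, ?_⟩
  intro X Y _ _ n hX hY hn E hdX hdY hreg
  have hn' : (0 : ℝ) < n := by exact_mod_cast hn
  set N : X → Finset Y := fun x => univ.filter (E x) with hN
  set M : Y → Finset X := fun y => univ.filter (fun x => E x y) with hM
  have hNc : ∀ x, c * n ≤ (N x).card := by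
    intro x; have := hdX x; rw [cnt_eq] at this; exact this
  have hMc : ∀ y, c * n ≤ (M y).card := by
    intro y; have := hdY y; rw [cnt_eq] at this; exact this
  set Ω := kout (K + 2) N ×ˢ kout (K + 2) M with hΩ
  have hcN : cnt (kout (K + 2) N) (fun _ => True) = (kout (K + 2) N).card := cnt_true _
  have hcM : cnt (kout (K + 2) M) (fun _ => True) = (kout (K + 2) M).card := cnt_true _
  have hΩc : (Ω.card : ℝ) = (kout (K + 2) N).card * (kout (K + 2) M).card := by
    rw [hΩ, card_product]; push_cast; rfl
  have hNpos : 0 < (kout (K + 2) N).card := by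
    rw [Finset.card_pos]
    have : ∀ x, ∃ y, y ∈ N x := by
      intro x
      have : (0 : ℝ) < (N x).card := lt_of_lt_of_le (by positivity) (hNc x)
      exact Finset.card_pos.mp (by exact_mod_cast this)
    choose f hf using this
    exact ⟨fun x _ => f x, kout_mem.mpr fun x _ => hf x⟩
  have hMpos : 0 < (kout (K + 2) M).card := by
    rw [Finset.card_pos]
    have : ∀ x, ∃ y, y ∈ M x := by
      intro x
      have : (0 : ℝ) < (M x).card := lt_of_lt_of_le (by positivity) (hMc x)
      exact Finset.card_pos.mp (by exact_mod_cast this)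
    choose f hf using this
    exact ⟨fun x _ => f x, kout_mem.mpr fun x _ => hf x⟩
  have hΩpos : (0 : ℝ) < Ω.card := by
    rw [hΩc]; exact_mod_cast Nat.mul_pos hNpos hMpos
  -- good outcomes
  let good : (X → Fin (K + 2) → Y) × (Y → Fin (K + 2) → X) → Prop := fun ω =>
    ∃ φ : X → Y, Function.Injective φ ∧
      ∀ x, (∃ j, ω.1 x j = φ x) ∨ (∃ j, ω.2 (φ x) j = x)
  have hbad : cnt Ω (fun ω => ¬ good ω) ≤ 3 / 16 * Ω.card := by
    have s1 := kout_small K n N hX hY c hc hn hNc hKa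
    have s2 := kout_mid (K + 2) n N hX hY c' (c / 2) (c / 4) hc' hc'1 hn (by
      intro S T hS hT
      refine (hreg S T hS hT).trans (cnt_mono _ _ _ fun x _ h => h.trans (le_of_eq ?_))
      rw [cnt_eq, cnt_eq]
      congr 2
      ext y
      simp [hN, and_comm]) hKb
    have s3 := kout_small K n M hY hX c hc hn hMc hKa
    set A1 : (X → Fin (K + 2) → Y) → Prop := fun ω => ∃ S : Finset X, ∃ T : Finset Y,
      S.card = T.card ∧ 1 ≤ S.card ∧ (S.card : ℝ) ≤ c / 2 * n ∧ ∀ x ∈ S, ∀ j, ω x j ∈ T with hA1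
    set A2 : (X → Fin (K + 2) → Y) → Prop := fun ω => ∃ S : Finset X, ∃ T : Finset Y,
      c / 2 * n ≤ S.card ∧ c / 2 * n ≤ T.card ∧ ∀ x ∈ S, ∀ j, ω x j ∉ T with hA2
    set A3 : (Y → Fin (K + 2) → X) → Prop := fun ω => ∃ S : Finset Y, ∃ T : Finset X,
      S.card = T.card ∧ 1 ≤ S.card ∧ (S.card : ℝ) ≤ c / 2 * n ∧ ∀ x ∈ S, ∀ j, ω x j ∈ T with hA3
    have u := cnt_exists_le Ω (univ : Finset (Fin 3))
      (![fun ω => A1 ω.1 ∧ True, fun ω => A2 ω.1 ∧ True, fun ω => True ∧ A3 ω.2])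
      (fun ω => ¬ good ω) (by
        intro ω _ h
        by_contra hcon
        apply h
        refine hall_kout (K + 2) n hX hY c ω.1 ω.2 ?_ ?_ ?_
        · intro h1; exact hcon ⟨0, mem_univ _, h1, trivial⟩
        · intro h1; exact hcon ⟨1, mem_univ _, h1, trivial⟩
        · intro h1; exact hcon ⟨2, mem_univ _, trivial, h1⟩)
    rw [Fin.sum_univ_three] at u
    have u1 : cnt Ω (fun ω => A1 ω.1 ∧ True) ≤ 1 / 16 * Ω.card := by
      rw [hΩ, cnt_prod (kout (K + 2) N) (kout (K + 2) M) A1 (fun _ => True), hcM, ← hΩ, hΩc,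
        ← mul_assoc]
      exact mul_le_mul_of_nonneg_right s1 (Nat.cast_nonneg _)
    have u2 : cnt Ω (fun ω => A2 ω.1 ∧ True) ≤ 1 / 16 * Ω.card := by
      rw [hΩ, cnt_prod (kout (K + 2) N) (kout (K + 2) M) A2 (fun _ => True), hcM, ← hΩ, hΩc,
        ← mul_assoc]
      exact mul_le_mul_of_nonneg_right s2 (Nat.cast_nonneg _)
    have u3 : cnt Ω (fun ω => True ∧ A3 ω.2) ≤ 1 / 16 * Ω.card := by
      rw [hΩ, cnt_prod (kout (K + 2) N) (kout (K + 2) M) (fun _ => True) A3, hcN, ← hΩ, hΩc]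
      calc _ ≤ ((kout (K + 2) N).card : ℝ) * (1 / 16 * (kout (K + 2) M).card) :=
            mul_le_mul_of_nonneg_left s3 (Nat.cast_nonneg _)
        _ = _ := by ring
    have u' : cnt Ω (fun ω => ¬ good ω) ≤ cnt Ω (fun ω => A1 ω.1 ∧ True)
      + cnt Ω (fun ω => A2 ω.1 ∧ True) + cnt Ω (fun ω => True ∧ A3 ω.2) := u
    linarith
  have hgood : 1 / 2 * (Ω.card : ℝ) ≤ cnt Ω good := by
    have := cnt_add_not Ω good
    linarith
  set Gd := @Finset.filter _ good (Classical.decPred _) Ω with hGd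
  have hGc : cnt Ω good = (Gd.card : ℝ) := rfl
  have hGpos : (0 : ℝ) < Gd.card := by rw [← hGc]; linarith
  have hch : ∀ ω, ∃ φ : X → Y, good ω → (Function.Injective φ ∧
      ∀ x, (∃ j, ω.1 x j = φ x) ∨ (∃ j, ω.2 (φ x) j = x)) := by
    intro ω
    by_cases h : good ω
    · obtain ⟨φ, hφ⟩ := h; exact ⟨φ, fun _ => hφ⟩
    · have ω' := Finset.card_pos.mp hNpos
      obtain ⟨ω', _⟩ := ω'
      exact ⟨fun x => ω' x 0, fun h' => absurd h' h⟩
  choose Φ hΦ using hch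
  have hmem : ∀ ω ∈ Gd, ω ∈ Ω ∧ good ω := fun ω h =>
    (@Finset.mem_filter _ _ (Classical.decPred _) _ _).mp h
  clear_value Gd
  have hmemΩ : ∀ ω ∈ Ω, (∀ x j, ω.1 x j ∈ N x) ∧ (∀ y j, ω.2 y j ∈ M y) := fun ω h => by
    rw [hΩ, mem_product, kout_mem, kout_mem] at h; exact h
  refine ⟨fun φ => ((Gd.filter fun ω => Φ ω = φ).card : ℝ) / Gd.card, fun φ => by positivity,
    ?_, ?_, ?_⟩
  · rw [← Finset.sum_div, div_eq_one_iff_eq hGpos.ne']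
    norm_cast
    exact (Finset.card_eq_sum_card_fiberwise (f := Φ) (t := univ) (fun _ _ => by simp)).symm
  · intro φ h
    have : (Gd.filter fun ω => Φ ω = φ).Nonempty := by
      by_contra hcon
      rw [Finset.not_nonempty_iff_eq_empty] at hcon
      exact h (by simp [hcon])
    obtain ⟨ω, hω⟩ := this
    rw [mem_filter] at hω
    obtain ⟨hω1, rfl⟩ := hω
    obtain ⟨h1, h2⟩ := hΦ ω (hmem ω hω1).2
    refine ⟨h1, fun x => ?_⟩
    obtain ⟨h3, h4⟩ := hmemΩ ω (hmem ω hω1).1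
    rcases h2 x with ⟨j, hj⟩ | ⟨j, hj⟩
    · have := h3 x j
      rw [hj] at this
      exact (mem_filter.mp this).2
    · have := h4 (Φ ω x) j
      rw [hj] at this
      exact (mem_filter.mp this).2
  · intro D g
    have hsum : wt (fun φ => ((Gd.filter fun ω => Φ ω = φ).card : ℝ) / Gd.card)
        (fun φ => ∀ x ∈ D, φ x = g x) = cnt Gd (fun ω => ∀ x ∈ D, Φ ω x = g x) / Gd.card := by
      have hfib := Finset.card_eq_sum_card_fiberwise
        (s := Gd.filter (fun ω => ∀ x ∈ D, Φ ω x = g x)) (f := Φ) (t := univ) (fun _ _ => by simp)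
      rw [cnt_eq, eq_div_iff hGpos.ne', wt, Finset.sum_mul, hfib]
      push_cast
      refine Finset.sum_congr rfl fun φ _ => ?_
      split_ifs with h
      · rw [div_mul_cancel₀ _ hGpos.ne']
        congr 2
        ext ω
        rw [mem_filter, mem_filter, mem_filter]
        constructor
        · rintro ⟨h1, rfl⟩; exact ⟨⟨h1, h⟩, rfl⟩
        · rintro ⟨⟨h1, _⟩, h3⟩; exact ⟨h1, h3⟩
      · rw [zero_mul]
        symm
        rw [Nat.cast_eq_zero, Finset.card_eq_zero, Finset.filter_eq_empty_iff]
        rintro ω hω rfl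
        exact h (mem_filter.mp hω).2
    rw [hsum]
    rcases D.eq_empty_or_nonempty with rfl | hDne
    · simp only [card_empty, pow_zero]
      rw [div_le_one hGpos]
      exact cnt_le_card _ _
    by_cases hg : Set.InjOn g D
    · set b : ℝ := 1 / (c * n) with hb
      have hb0 : 0 ≤ b := by positivity
      have hsp := kout_spread_two (K + 2) N M b hb0
        (fun x => by rw [hb, one_div, ← div_eq_inv_mul, le_div_iff₀ (by positivity), one_mul]; exact hNc x)
        (fun x => by rw [hb, one_div, ← div_eq_inv_mul, le_div_iff₀ (by positivity), one_mul]; exact hMc x)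
        D g hg
      have hle : cnt Gd (fun ω => ∀ x ∈ D, Φ ω x = g x) ≤ cnt Ω (fun ω => ∀ x ∈ D,
          (∃ j, ω.1 x j = g x) ∨ (∃ j, ω.2 (g x) j = x)) := by
        unfold cnt
        norm_cast
        refine Finset.card_le_card fun ω hω => ?_
        simp only [mem_filter] at hω ⊢
        refine ⟨(hmem ω hω.1).1, fun x hx => ?_⟩
        have := (hΦ ω (hmem ω hω.1).2).2 x
        rw [hω.2 x hx] at this
        exact this
      rw [div_le_iff₀ hGpos]
      refine hle.trans (hsp.trans ?_)
      have hk : 1 ≤ D.card := hDne.card_pos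
      have e1 : (4 * ((K + 2 : ℕ) : ℝ) / c / n) ^ D.card
          = 2 ^ D.card * (2 * (((K + 2 : ℕ) : ℝ) * b)) ^ D.card := by
        rw [← mul_pow, hb]; congr 1; field_simp; ring
      have e2 : (2 : ℝ) ≤ 2 ^ D.card := by
        calc (2 : ℝ) = 2 ^ 1 := by norm_num
          _ ≤ 2 ^ D.card := pow_le_pow_right₀ (by norm_num) hk
      rw [e1]
      have e3 : (Ω.card : ℝ) ≤ 2 * Gd.card := by rw [← hGc]; linarith
      have e4 : (0 : ℝ) ≤ (2 * (((K + 2 : ℕ) : ℝ) * b)) ^ D.card := by positivity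
      calc _ ≤ (2 * (((K + 2 : ℕ) : ℝ) * b)) ^ D.card * (2 * Gd.card) :=
            mul_le_mul_of_nonneg_left e3 e4
        _ = 2 * (2 * (((K + 2 : ℕ) : ℝ) * b)) ^ D.card * Gd.card := by ring
        _ ≤ _ := by gcongr
    · have : cnt Gd (fun ω => ∀ x ∈ D, Φ ω x = g x) = 0 := by
        rw [cnt_eq, Nat.cast_eq_zero, Finset.card_eq_zero, Finset.filter_eq_empty_iff]
        intro ω hω h
        apply hg
        intro x hx y hy hxy
        apply (hΦ ω (hmem ω hω).2).1
        rw [h x hx, h y hy, hxy]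
      rw [this, zero_div]
      positivity

/-- number of elements satisfying a predicate -/
noncomputable def nct {α : Type} [Fintype α] (P : α → Prop) : ℕ :=
  (@Finset.filter α P (Classical.decPred P) univ).card

/-- number of elements satisfying a predicate, as a real -/
noncomputable def ct {α : Type} [Fintype α] (P : α → Prop) : ℝ := (nct P : ℝ)

section ct
variable {α : Type} [Fintype α]

theorem nct_eq (P : α → Prop) [DecidablePred P] : nct P = (univ.filter P).card := by
  unfold nct; congr!

theorem cnt_univ (P : α → Prop) : cnt univ P = ct P := rfl

theorem nct_mono {P Q : α → Prop} (h : ∀ a, P a → Q a) : nct P ≤ nct Q := by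
  rw [nct_eq, nct_eq]
  exact Finset.card_le_card (Finset.monotone_filter_right _ (fun a _ => h a))

theorem nct_congr {P Q : α → Prop} (h : ∀ a, P a ↔ Q a) : nct P = nct Q := by
  have : P = Q := funext fun a => propext (h a)
  rw [this]

theorem ct_mono {P Q : α → Prop} (h : ∀ a, P a → Q a) : ct P ≤ ct Q := by
  unfold ct; exact_mod_cast nct_mono h

theorem ct_congr {P Q : α → Prop} (h : ∀ a, P a ↔ Q a) : ct P = ct Q := by
  unfold ct; rw [nct_congr h]

theorem ct_nonneg (P : α → Prop) : 0 ≤ ct P := Nat.cast_nonneg _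

theorem nct_split (P Q : α → Prop) :
    nct P = nct (fun a => P a ∧ Q a) + nct (fun a => P a ∧ ¬ Q a) := by
  rw [nct_eq, nct_eq, nct_eq, ← Finset.filter_filter, ← Finset.filter_filter]
  exact (Finset.card_filter_add_card_filter_not _).symm

theorem ct_split (P Q : α → Prop) :
    ct P = ct (fun a => P a ∧ Q a) + ct (fun a => P a ∧ ¬ Q a) := by
  unfold ct; exact_mod_cast nct_split P Q

theorem ct_le_add {P Q S : α → Prop} (h : ∀ a, P a → Q a ∨ S a) : ct P ≤ ct Q + ct S := by
  rw [ct_split P Q]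
  exact add_le_add (ct_mono fun a ha => ha.2) (ct_mono fun a ha => (h a ha.1).resolve_left ha.2)

theorem nct_zero {P : α → Prop} (h : ∀ a, ¬ P a) : nct P = 0 := by
  rw [nct_eq, Finset.card_eq_zero, Finset.filter_eq_empty_iff]
  exact fun a _ => h a

theorem nct_single (a : α) : nct (fun x => x = a) = 1 := by
  rw [nct_eq, Finset.card_eq_one]
  exact ⟨a, by ext; simp⟩

theorem ct_single (a : α) : ct (fun x => x = a) = 1 := by
  unfold ct; rw [nct_single]; norm_num

theorem nct_pos {P : α → Prop} (a : α) (h : P a) : 0 < nct P := by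
  rw [nct_eq, Finset.card_pos]
  exact ⟨a, by simp [h]⟩

theorem exists_of_ct_pos {P : α → Prop} (h : 0 < ct P) : ∃ a, P a := by
  by_contra! hcon
  unfold ct at h
  rw [nct_zero hcon] at h
  simp at h

/-- union bound: at most `K` indices, each bad set of size at most `b` -/
theorem ct_union {β : Type} [Fintype β] (I : β → Prop) (P : β → α → Prop) (S : α → Prop) (K b : ℝ)
    (hI : ct I ≤ K) (hb0 : 0 ≤ b) (hb : ∀ i, I i → ct (P i) ≤ b)
    (h : ∀ a, S a → ∃ i, I i ∧ P i a) :
    ct S ≤ K * b := by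
  have := cnt_exists_le (univ : Finset α) (univ.filter I) P S (by
    intro a _ ha
    obtain ⟨i, hi, hp⟩ := h a ha
    exact ⟨i, by simp [hi], hp⟩)
  rw [cnt_univ] at this
  refine this.trans ?_
  refine (Finset.sum_le_card_nsmul _ _ b (fun i hi => ?_)).trans ?_
  · exact hb i (mem_filter.mp hi).2
  · rw [nsmul_eq_mul, ← nct_eq]
    exact mul_le_mul_of_nonneg_right hI hb0

theorem ct_le_of_inj {β : Type} [Fintype β] (P : α → Prop) (Q : β → Prop) (f : α → β)
    (h : ∀ a, P a → Q (f a)) (hi : ∀ a b, P a → P b → f a = f b → a = b) : ct P ≤ ct Q := by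
  unfold ct
  rw [nct_eq, nct_eq]
  norm_cast
  refine Finset.card_le_card_of_injOn f (fun a ha => ?_) (fun a ha b hb => ?_)
  · simp at ha ⊢; exact h a ha
  · simp at ha hb; exact hi a b ha hb
end ct

/-- All data of the blow-up situation, including the buffer. -/
structure BU (r Δ N m : ℕ) (V VH : Type) [Fintype V] [Fintype VH] where
  G : SimpleGraph V
  H : SimpleGraph VH
  R : SimpleGraph (Fin r)
  h : VH → Fin r
  c : V → Fin r
  A : VH → V → Prop
  W : VH → Prop
  B : VH → Prop
  (ε d δ α β μ κ γ c0 q τ γ' c2 : ℝ)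
  hc : ∀ i, ct (fun v => c v = i) = N
  hX : ∀ i, ct (fun x => h x = i) = N
  reg : ∀ i j, R.Adj i j → ∀ Y : V → Prop, (∀ v, Y v → c v = j) → ε * N ≤ ct Y →
    ct (fun v => c v = i ∧ ct (fun u => Y u ∧ G.Adj u v) < d * ct Y) ≤ ε * N
  mindeg : ∀ v j, R.Adj (c v) j → δ * N ≤ ct (fun u => c u = j ∧ G.Adj u v)
  deg : ∀ x, nct (fun y => H.Adj x y) ≤ Δ
  hom : ∀ x y, H.Adj x y → R.Adj (h x) (h y)
  hA : ∀ x v, A x v → c v = h x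
  hAα : ∀ x, α * N ≤ ct (A x)
  hAW : ∀ x, ¬ W x → ∀ v, c v = h x → A x v
  hW : ct W ≤ β * N
  hBm : ∀ i, ct (fun x => B x ∧ h x = i) = m
  hB1 : ∀ x y, B x → B y → ¬ H.Adj x y
  hB2 : ∀ x x' y, B x → B x' → H.Adj x y → H.Adj x' y → x = x'
  hB3 : ∀ x x' y y', B x → B x' → H.Adj x y → H.Adj x' y' → H.Adj y y' → x = x'
  hBW : ∀ x, B x → ¬ W x
  hBNW : ∀ x y, B x → H.Adj x y → ¬ W y
  hd0 : 0 < d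
  hd1 : d ≤ 1
  hδ0 : 0 < δ
  hα0 : 0 < α
  hε0 : 0 < ε
  hκ0 : 0 < κ
  hγ0 : 0 < γ
  hc00 : 0 < c0
  hμ0 : 0 < μ
  hq0 : 0 < q
  hq1 : q ≤ 1
  hN : 0 < N
  hm1 : μ * N ≤ m
  hm2 : (m : ℝ) ≤ 2 * μ * N
  -- inequalities between the constants
  i1 : r * m * Δ ≤ d ^ Δ * α * N / 2
  i2 : κ * N + 1 ≤ d ^ Δ * α * N / 2
  i3 : r * (γ * N + 1) ≤ d ^ Δ * κ * N / 2
  i4 : c0 ≤ d ^ Δ * κ / 4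
  i5 : Δ * ε ≤ c0
  i6 : ε ≤ c0
  i7 : r * m * Δ + 2 * (Δ * ε * N) ≤ (d ^ Δ * δ - q) * N
  i8 : ε ≤ d ^ Δ * δ
  i9 : ε ≤ d ^ Δ * τ
  i10 : Δ * (ε / c0) ≤ 1
  i11 : β ≤ γ / 2
  i12 : γ * N + 1 ≤ μ * N / 2
  i13 : τ ≤ μ / 2
  i14 : κ * N + 1 ≤ d ^ Δ * (μ * N / 2)
  hγ'0 : 0 < γ'
  hγ' : (1 + Δ * Δ) * γ' ≤ γ / 2
  i15 : Δ * (ε / c0) ≤ Real.exp (-(4 / γ'))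
  i16 : r * N * Real.exp (-(q ^ Δ * μ * N / 4)) ≤ 1 / 4
  i17 : r * Real.exp (-(2 * N)) ≤ 1 / 4
  hc20 : 0 < c2
  i18 : c2 * (2 * μ) + γ ≤ q ^ Δ * μ / 4
  i19 : c2 * (2 * μ) ≤ κ
  i20 : τ ≤ c2 * μ / 4
  i21 : γ ≤ c2 * μ / 8

namespace BU
variable {r Δ N m : ℕ} {V VH : Type} [Fintype V] [Fintype VH] (D : BU r Δ N m V VH)

/-- candidates -/
def F (f : VH → Option V) (y : VH) (v : V) : Prop :=
  D.A y v ∧ ∀ z w, D.H.Adj y z → f z = some w → D.G.Adj v w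

/-- used vertices -/
def used (_D : BU r Δ N m V VH) (f : VH → Option V) (v : V) : Prop := ∃ x, f x = some v

/-- available candidates -/
def FA (f : VH → Option V) (y : VH) (v : V) : Prop := D.F f y v ∧ ¬ D.used f v

/-- number of embedded neighbours -/
noncomputable def e (f : VH → Option V) (y : VH) : ℕ := nct (fun z => D.H.Adj y z ∧ f z ≠ none)

/-- number of unembedded neighbours -/
noncomputable def u (f : VH → Option V) (y : VH) : ℕ := nct (fun z => D.H.Adj y z ∧ f z = none)

/-- neighbours of buffer vertices -/
def NB (x : VH) : Prop := ∃ b, D.B b ∧ D.H.Adj b x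

theorem F_mono_class {f : VH → Option V} {y v} (h : D.F f y v) : D.c v = D.h y := D.hA _ _ h.1

theorem e_add_u (f : VH → Option V) (y : VH) : D.e f y + D.u f y = nct (fun z => D.H.Adj y z) := by
  rw [nct_split (fun z => D.H.Adj y z) (fun z => f z ≠ none), e, u]
  simp

theorem e_le (f : VH → Option V) (y : VH) : D.e f y ≤ Δ := by
  have := D.e_add_u f y; have := D.deg y; omega

theorem u_le (f : VH → Option V) (y : VH) : D.u f y ≤ Δ := by
  have := D.e_add_u f y; have := D.deg y; omega

theorem dpow_e (f : VH → Option V) (y : VH) : D.d ^ Δ ≤ D.d ^ D.e f y :=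
  pow_le_pow_of_le_one D.hd0.le D.hd1 (D.e_le f y)

section step
variable (f : VH → Option V) (z : VH) (v : V)

theorem step_F (hz : f z = none) (y : VH) (w : V) : D.F (Function.update f z (some v)) y w ↔
    D.F f y w ∧ (D.H.Adj y z → D.G.Adj w v) := by
  unfold F
  constructor
  · rintro ⟨h1, h2⟩
    refine ⟨⟨h1, fun z' w' ha hf => h2 z' w' ha ?_⟩, fun ha => h2 z v ha (by simp)⟩
    rw [Function.update_of_ne]
    · exact hf
    · rintro rfl; rw [hz] at hf; cases hf
  · rintro ⟨⟨h1, h2⟩, h3⟩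
    refine ⟨h1, fun z' w' ha hf => ?_⟩
    by_cases hzz : z' = z
    · subst hzz; simp at hf; subst hf; exact h3 ha
    · rw [Function.update_of_ne hzz] at hf; exact h2 z' w' ha hf

theorem step_used (hz : f z = none) (w : V) : D.used (Function.update f z (some v)) w ↔ D.used f w ∨ w = v := by
  unfold used
  constructor
  · rintro ⟨x, hx⟩
    by_cases hxz : x = z
    · subst hxz; simp at hx; exact Or.inr hx.symm
    · rw [Function.update_of_ne hxz] at hx; exact Or.inl ⟨x, hx⟩
  · rintro (⟨x, hx⟩ | rfl)
    · refine ⟨x, ?_⟩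
      rw [Function.update_of_ne]
      · exact hx
      · rintro rfl; rw [hz] at hx; cases hx
    · exact ⟨z, by simp⟩

theorem step_none (hz : f z = none) (x : VH) : Function.update f z (some v) x = none ↔ f x = none ∧ x ≠ z := by
  by_cases hx : x = z
  · subst hx; simp
  · rw [Function.update_of_ne hx]; simp [hx]

theorem step_some (hz : f z = none) (x : VH) (w : V) :
    Function.update f z (some v) x = some w ↔ f x = some w ∨ (x = z ∧ w = v) := by
  by_cases hx : x = z
  · subst hx; simp [hz, eq_comm]
  · rw [Function.update_of_ne hx]; simp [hx]

theorem step_u_adj (hz : f z = none) (y : VH) (ha : D.H.Adj y z) :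
    D.u f y = D.u (Function.update f z (some v)) y + 1 := by
  unfold u
  rw [nct_split _ (fun x => x ≠ z)]
  congr 1
  · refine nct_congr fun x => ?_
    rw [step_none f z v hz]; tauto
  · rw [← nct_single z]
    refine nct_congr fun x => ⟨fun h => by simpa using h.2, ?_⟩
    rintro rfl; simp [ha, hz]

theorem step_u_nadj (hz : f z = none) (y : VH) (ha : ¬ D.H.Adj y z) :
    D.u (Function.update f z (some v)) y = D.u f y := by
  unfold u
  refine nct_congr fun x => ?_
  rw [step_none f z v hz]
  constructor
  · tauto
  · rintro ⟨h1, h2⟩; refine ⟨h1, h2, ?_⟩; rintro rfl; exact ha h1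

theorem step_e_adj (hz : f z = none) (y : VH) (ha : D.H.Adj y z) :
    D.e (Function.update f z (some v)) y = D.e f y + 1 := by
  have h1 := D.step_u_adj f z v hz y ha
  have h2 := D.e_add_u f y
  have h3 := D.e_add_u (Function.update f z (some v)) y
  omega

theorem step_e_nadj (hz : f z = none) (y : VH) (ha : ¬ D.H.Adj y z) :
    D.e (Function.update f z (some v)) y = D.e f y := by
  have h1 := D.step_u_nadj f z v hz y ha
  have h2 := D.e_add_u f y
  have h3 := D.e_add_u (Function.update f z (some v)) y
  omega

/-- loss of one vertex -/
theorem step_FA_nadj (hz : f z = none) (y : VH) (ha : ¬ D.H.Adj y z) :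
    ct (D.FA f y) - 1 ≤ ct (D.FA (Function.update f z (some v)) y) := by
  have : ct (D.FA f y) ≤ ct (D.FA (Function.update f z (some v)) y) + ct (fun w => w = v) := by
    refine ct_le_add fun w hw => ?_
    by_cases hwv : w = v
    · exact Or.inr hwv
    · left
      refine ⟨(D.step_F f z v hz y w).mpr ⟨hw.1, fun h => absurd h ha⟩, ?_⟩
      rw [D.step_used f z v hz]
      rintro (h | h)
      · exact hw.2 h
      · exact hwv h
  rw [ct_single] at this
  linarith

theorem step_FA_adj (hz : f z = none) (y : VH) :
    ct (fun w => D.FA f y w ∧ D.G.Adj w v) ≤ ct (D.FA (Function.update f z (some v)) y) := by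
  refine ct_mono fun w hw => ?_
  refine ⟨(D.step_F f z v hz y w).mpr ⟨hw.1.1, fun _ => hw.2⟩, ?_⟩
  rw [D.step_used f z v hz]
  rintro (h | h)
  · exact hw.1.2 h
  · subst h; exact D.G.irrefl hw.2

theorem step_FA_anti (hz : f z = none) (y : VH) :
    ct (D.FA (Function.update f z (some v)) y) ≤ ct (D.FA f y) := by
  refine ct_mono fun w hw => ?_
  refine ⟨((D.step_F f z v hz y w).mp hw.1).1, fun h => hw.2 ?_⟩
  rw [D.step_used f z v hz]; exact Or.inl h

end step
end BU

namespace BU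
variable {r Δ N m : ℕ} {V VH : Type} [Fintype V] [Fintype VH] (D : BU r Δ N m V VH)

/-- critical vertices -/
def crit (f : VH → Option V) (y : VH) : Prop := f y = none ∧ ct (D.FA f y) < D.κ * N + 1

/-- some neighbour of the buffer is still unembedded -/
def pend (f : VH → Option V) : Prop := ∃ x, D.NB x ∧ f x = none

/-- next vertex to embed -/
noncomputable def nxt (f : VH → Option V) : Option VH :=
  if h1 : ∃ x, D.NB x ∧ f x = none then some h1.choose
  else if h2 : ∃ x, D.crit f x then some h2.choose
  else if h3 : ∃ x, f x = none ∧ ¬ D.B x then some h3.choose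
  else none

theorem nxt_some {f : VH → Option V} {z : VH} (h : D.nxt f = some z) :
    f z = none ∧ (D.NB z ∨ (¬ D.pend f ∧ D.crit f z) ∨
      (¬ D.pend f ∧ (∀ x, ¬ D.crit f x) ∧ ¬ D.B z)) := by
  unfold nxt at h
  split_ifs at h with h1 h2 h3
  · cases h; exact ⟨h1.choose_spec.2, Or.inl h1.choose_spec.1⟩
  · cases h; exact ⟨h2.choose_spec.1, Or.inr (Or.inl ⟨h1, h2.choose_spec⟩)⟩
  · cases h
    push Not at h2
    exact ⟨h3.choose_spec.1, Or.inr (Or.inr ⟨h1, h2, h3.choose_spec.2⟩)⟩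

theorem nxt_none {f : VH → Option V} (h : D.nxt f = none) :
    ¬ D.pend f ∧ (∀ x, ¬ D.crit f x) ∧ ∀ x, f x = none → D.B x := by
  unfold nxt at h
  split_ifs at h with h1 h2 h3
  push Not at h2 h3
  exact ⟨h1, h2, h3⟩

/-- allowed images -/
def allowed (f : VH → Option V) (z : VH) (v : V) : Prop :=
  D.FA f z v ∧ ∀ y, D.H.Adj z y → f y = none →
    D.d * ct (D.FA f y) ≤ ct (fun w => D.FA f y w ∧ D.G.Adj w v)

/-- the queue is small -/
def Qok (Q : Finset VH) : Prop := ∀ i, ct (fun x => x ∈ Q ∧ D.h x = i) ≤ D.γ * N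

noncomputable def opts (s : (VH → Option V) × Finset VH) : Finset V :=
  match D.nxt s.1 with
  | none => ∅
  | some z => if D.Qok s.2 then univ.filter (D.allowed s.1 z) else ∅

noncomputable def ext (s : (VH → Option V) × Finset VH) (v : V) : (VH → Option V) × Finset VH :=
  match D.nxt s.1 with
  | none => s
  | some z => (Function.update s.1 z (some v),
      if ¬ D.pend s.1 ∧ D.crit s.1 z then insert z s.2 else s.2)

theorem opts_spec {s : (VH → Option V) × Finset VH} (h : (D.opts s).Nonempty) :
    ∃ z, D.nxt s.1 = some z ∧ D.Qok s.2 ∧ D.opts s = univ.filter (D.allowed s.1 z) ∧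
      ∀ v, D.ext s v = (Function.update s.1 z (some v),
      if ¬ D.pend s.1 ∧ D.crit s.1 z then insert z s.2 else s.2) := by
  unfold opts at h
  cases hz : D.nxt s.1 with
  | none => rw [hz] at h; simp at h
  | some z =>
    rw [hz] at h
    simp only at h
    by_cases hq : D.Qok s.2
    · refine ⟨z, rfl, hq, ?_, fun v => ?_⟩
      · unfold opts; rw [hz]; simp only; rw [if_pos hq]
      · unfold ext; rw [hz]
    · rw [if_neg hq] at h; simp at h

structure Inv (s : (VH → Option V) × Finset VH) : Prop where
  inj : ∀ x y v, s.1 x = some v → s.1 y = some v → x = y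
  emb : ∀ x v, s.1 x = some v → D.F s.1 x v
  Qe : ∀ x, x ∈ s.2 → s.1 x ≠ none ∧ ct (D.FA s.1 x) < D.κ * N + 1
  Qb : ∀ i, ct (fun x => x ∈ s.2 ∧ D.h x = i) ≤ D.γ * N + 1
  Bq : ∀ x, D.B x → s.1 x ≠ none → x ∈ s.2
  stage : ((∀ x, s.1 x ≠ none → D.NB x) ∧ s.2 = ∅ ∧ ∀ y, s.1 y = none →
      D.d ^ D.e s.1 y * (D.α * N) - ct (fun x => s.1 x ≠ none) ≤ ct (D.FA s.1 y)) ∨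
    (¬ D.pend s.1 ∧ ∀ y, s.1 y = none →
      D.d ^ D.e s.1 y * (D.κ * N) - ct (fun x => x ∈ s.2) ≤ ct (D.FA s.1 y))

theorem N_pos (D : BU r Δ N m V VH) : (0 : ℝ) < N := by exact_mod_cast D.hN

theorem ct_deg (x : VH) : ct (fun y => D.H.Adj x y) ≤ Δ := by
  unfold ct; exact_mod_cast D.deg x

theorem ct_B : ct D.B ≤ r * m := by
  refine ct_union (fun _ : Fin r => True) (fun i x => D.B x ∧ D.h x = i) _ _ _ ?_
    (Nat.cast_nonneg _) (fun i _ => (D.hBm i).le) (fun x hx => ⟨D.h x, trivial, hx, rfl⟩)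
  unfold ct; rw [nct_eq]; simp

theorem ct_NB : ct D.NB ≤ r * m * Δ := by
  refine ct_union D.B (fun b x => D.H.Adj b x) _ _ _ D.ct_B (Nat.cast_nonneg _)
    (fun b _ => D.ct_deg b) (fun x hx => ?_)
  obtain ⟨b, hb, hbx⟩ := hx
  exact ⟨b, hb, hbx⟩

theorem ct_Q {s : (VH → Option V) × Finset VH} (hs : D.Inv s) :
    ct (fun x => x ∈ s.2) ≤ D.d ^ Δ * D.κ * N / 2 := by
  refine le_trans ?_ D.i3
  refine ct_union (fun _ : Fin r => True) (fun i x => x ∈ s.2 ∧ D.h x = i) _ _ _ ?_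
    ?_ (fun i _ => hs.Qb i) (fun x hx => ⟨D.h x, trivial, hx, rfl⟩)
  · unfold ct; rw [nct_eq]; simp
  · have := D.hγ0; positivity

/-- in stage one candidate sets are big -/
theorem stage1_low {s : (VH → Option V) × Finset VH}
    (h1 : ∀ x, s.1 x ≠ none → D.NB x) (y : VH)
    (h2 : D.d ^ D.e s.1 y * (D.α * N) - ct (fun x => s.1 x ≠ none) ≤ ct (D.FA s.1 y)) :
    D.κ * N + 1 ≤ ct (D.FA s.1 y) := by
  have a1 : ct (fun x => s.1 x ≠ none) ≤ r * m * Δ := (ct_mono h1).trans D.ct_NB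
  have a2 := D.i1
  have a3 := D.i2
  have a4 : D.d ^ Δ * (D.α * N) ≤ D.d ^ D.e s.1 y * (D.α * N) :=
    mul_le_mul_of_nonneg_right (D.dpow_e _ _) (mul_nonneg D.hα0.le D.N_pos.le)
  linarith

theorem low {s : (VH → Option V) × Finset VH} (hs : D.Inv s) (y : VH) (hy : s.1 y = none) :
    2 * D.c0 * N ≤ ct (D.FA s.1 y) := by
  have hN := D.N_pos
  have b1 : D.d ^ Δ ≤ 1 := pow_le_one₀ D.hd0.le D.hd1
  have b2 : 4 * D.c0 * N ≤ D.d ^ Δ * D.κ * N :=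
    mul_le_mul_of_nonneg_right (by linarith [D.i4]) hN.le
  have b3 : D.d ^ Δ * D.κ * N ≤ D.κ * N := by
    rw [mul_assoc]; exact mul_le_of_le_one_left (mul_nonneg D.hκ0.le hN.le) b1
  have b4 : 0 ≤ D.c0 * N := mul_nonneg D.hc00.le hN.le
  rcases hs.stage with ⟨h1, _, h3⟩ | ⟨_, h3⟩
  · have := D.stage1_low h1 y (h3 y hy)
    linarith
  · have a1 := h3 y hy
    have a2 := D.ct_Q hs
    have a4 : D.d ^ Δ * (D.κ * N) ≤ D.d ^ D.e s.1 y * (D.κ * N) :=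
      mul_le_mul_of_nonneg_right (D.dpow_e _ _) (mul_nonneg D.hκ0.le hN.le)
    linarith

theorem εN_le {s : (VH → Option V) × Finset VH} (hs : D.Inv s) (y : VH) (hy : s.1 y = none) :
    D.ε * N ≤ ct (D.FA s.1 y) := by
  have h1 := D.low hs y hy
  have h2 : D.ε * N ≤ D.c0 * N := mul_le_mul_of_nonneg_right D.i6 D.N_pos.le
  have b4 : 0 ≤ D.c0 * N := mul_nonneg D.hc00.le D.N_pos.le
  linarith

theorem FA_class {f : VH → Option V} {y v} (h : D.FA f y v) : D.c v = D.h y := D.hA _ _ h.1.1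

/-- vertices excluded by the `allowed` condition -/
theorem not_allowed_le {s : (VH → Option V) × Finset VH} (hs : D.Inv s) (z : VH) :
    ct (fun v => D.FA s.1 z v ∧ ¬ D.allowed s.1 z v) ≤ Δ * (D.ε * N) := by
  refine ct_union (fun y => D.H.Adj z y ∧ s.1 y = none) (fun y v => D.c v = D.h z ∧
    ct (fun u => D.FA s.1 y u ∧ D.G.Adj u v) < D.d * ct (D.FA s.1 y)) _ _ _
    ((ct_mono fun y h => h.1).trans (D.ct_deg z)) (mul_nonneg D.hε0.le D.N_pos.le) ?_ ?_
  · rintro y ⟨hy, hy0⟩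
    exact D.reg _ _ (D.hom _ _ hy) _ (fun v hv => D.FA_class hv) (D.εN_le hs y hy0)
  · rintro v ⟨h1, h2⟩
    unfold allowed at h2
    push Not at h2
    obtain ⟨y, hy, hy0, hlt⟩ := h2 h1
    exact ⟨y, ⟨hy, hy0⟩, D.FA_class h1, hlt⟩

theorem allowed_ge {s : (VH → Option V) × Finset VH} (hs : D.Inv s) (z : VH) (hz : s.1 z = none) :
    D.c0 * N ≤ ct (D.allowed s.1 z) := by
  have h1 := D.low hs z hz
  have h2 := D.not_allowed_le hs z
  have h3 : ct (D.FA s.1 z) ≤ ct (D.allowed s.1 z) +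
      ct (fun v => D.FA s.1 z v ∧ ¬ D.allowed s.1 z v) := ct_le_add fun v hv => by
    by_cases h : D.allowed s.1 z v
    · exact Or.inl h
    · exact Or.inr ⟨hv, h⟩
  have h4 : Δ * (D.ε * N) ≤ D.c0 * N := by
    rw [← mul_assoc]; exact mul_le_mul_of_nonneg_right D.i5 D.N_pos.le
  linarith

theorem B_not_NB {x : VH} (hx : D.B x) : ¬ D.NB x := by
  rintro ⟨b, hb, hbx⟩
  exact D.hB1 b x hb hx hbx

theorem inv_step {s : (VH → Option V) × Finset VH} (hs : D.Inv s) (v : V) (hv : v ∈ D.opts s) :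
    D.Inv (D.ext s v) := by
  obtain ⟨z, hz, hQ, ho, he⟩ := D.opts_spec ⟨v, hv⟩
  rw [ho, mem_filter] at hv
  have hv := hv.2
  obtain ⟨hz0, hcase⟩ := D.nxt_some hz
  rw [he]
  have hfz : ∀ x w, s.1 x = some w → x ≠ z := by
    rintro x w h rfl; rw [hz0] at h; cases h
  have hN := D.N_pos
  have hdom : ct (fun x => s.1 x ≠ none) + 1 ≤
      ct (fun x => Function.update s.1 z (some v) x ≠ none) := by
    rw [ct_split (fun x => Function.update s.1 z (some v) x ≠ none) (fun x => s.1 x ≠ none)]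
    refine add_le_add (ct_mono fun x hx => ⟨?_, hx⟩) ?_
    · rw [Ne, step_none s.1 z v hz0]; tauto
    · rw [← ct_single z]
      refine ct_mono ?_
      rintro x rfl
      simp [hz0]
  have key_adj : ∀ y, D.H.Adj y z → s.1 y = none →
      D.d * ct (D.FA s.1 y) ≤ ct (D.FA (Function.update s.1 z (some v)) y) :=
    fun y hy hy0 => (hv.2 y hy.symm hy0).trans (D.step_FA_adj s.1 z v hz0 y)
  have hFAz : ct (D.FA (Function.update s.1 z (some v)) z) ≤ ct (D.FA s.1 z) :=
    D.step_FA_anti s.1 z v hz0 z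
  refine ⟨?_, ?_, ?_, ?_, ?_, ?_⟩
  · intro x y w hx hy
    simp only [step_some s.1 z v hz0] at hx hy
    rcases hx with hx | ⟨rfl, rfl⟩ <;> rcases hy with hy | ⟨rfl, hw⟩
    · exact hs.inj x y w hx hy
    · subst hw; exact absurd ⟨x, hx⟩ hv.1.2
    · exact absurd ⟨y, hy⟩ hv.1.2
    · rfl
  · intro x w hx
    simp only [step_some s.1 z v hz0] at hx
    simp only [D.step_F s.1 z v hz0]
    rcases hx with hx | ⟨rfl, rfl⟩
    · exact ⟨hs.emb x w hx, fun ha => (hv.1.1.2 x w ha.symm hx).symm⟩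
    · exact ⟨hv.1.1, fun ha => absurd ha (D.H.irrefl)⟩
  · intro x hx
    simp only at hx ⊢
    have hold : x ∈ s.2 → Function.update s.1 z (some v) x ≠ none ∧
        ct (D.FA (Function.update s.1 z (some v)) x) < D.κ * N + 1 := by
      intro h
      obtain ⟨h1, h2⟩ := hs.Qe x h
      refine ⟨?_, (D.step_FA_anti s.1 z v hz0 x).trans_lt h2⟩
      rw [Ne, step_none s.1 z v hz0]; tauto
    split_ifs at hx with hc
    · rw [mem_insert] at hx
      rcases hx with rfl | hx
      · exact ⟨by simp, hFAz.trans_lt hc.2.2⟩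
      · exact hold hx
    · exact hold hx
  · intro i
    simp only
    split_ifs with hc
    · have : ct (fun x => x ∈ insert z s.2 ∧ D.h x = i) ≤
        ct (fun x => x ∈ s.2 ∧ D.h x = i) + ct (fun x => x = z) := by
        refine ct_le_add fun x hx => ?_
        rw [mem_insert] at hx; tauto
      rw [ct_single] at this
      linarith [hQ i]
    · exact hs.Qb i
  · intro x hx hxe
    simp only at hxe ⊢
    rw [Ne, step_none s.1 z v hz0] at hxe
    by_cases hxz : x = z
    · subst hxz
      rcases hcase with h | h | h
      · exact absurd h (D.B_not_NB hx)
      · rw [if_pos h]; exact mem_insert_self _ _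
      · exact absurd hx h.2.2
    · have : x ∈ s.2 := hs.Bq x hx (by tauto)
      split_ifs
      · exact mem_insert_of_mem this
      · exact this
  · -- stages
    simp only
    have stage2 : ¬ D.pend s.1 → (∀ y, s.1 y = none →
      D.d ^ D.e s.1 y * (D.κ * N) - ct (fun x => x ∈ s.2) ≤ ct (D.FA s.1 y)) →
      (¬ D.pend (Function.update s.1 z (some v)) ∧ ∀ y, Function.update s.1 z (some v) y = none →
      D.d ^ D.e (Function.update s.1 z (some v)) y * (D.κ * N) - ct (fun x => x ∈
        (if ¬ D.pend s.1 ∧ D.crit s.1 z then insert z s.2 else s.2)) ≤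
        ct (D.FA (Function.update s.1 z (some v)) y)) := by
      intro hp hlow
      refine ⟨?_, fun y hy => ?_⟩
      · rintro ⟨x, hx, hx0⟩
        rw [step_none s.1 z v hz0] at hx0
        exact hp ⟨x, hx, hx0.1⟩
      rw [step_none s.1 z v hz0] at hy
      obtain ⟨hy0, hyz⟩ := hy
      have hκN : 0 ≤ D.κ * N := mul_nonneg D.hκ0.le hN.le
      rcases hcase with h | h | h
      · exact absurd ⟨z, h, hz0⟩ hp
      · have hQ1 : ct (fun x => x ∈ s.2) + 1 ≤ ct (fun x => x ∈
          (if ¬ D.pend s.1 ∧ D.crit s.1 z then insert z s.2 else s.2)) := by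
          rw [if_pos h]
          rw [ct_split (fun x => x ∈ insert z s.2) (fun x => x ∈ s.2)]
          refine add_le_add (ct_mono fun x hx => ⟨mem_insert_of_mem hx, hx⟩) ?_
          rw [← ct_single z]
          refine ct_mono ?_
          rintro x rfl
          refine ⟨mem_insert_self _ _, fun hx => (hs.Qe x hx).1 hz0⟩
        have hQ0 := ct_nonneg (fun x => x ∈ s.2)
        by_cases ha : D.H.Adj y z
        · rw [D.step_e_adj s.1 z v hz0 y ha, pow_succ]
          have k1 := key_adj y ha hy0
          have k2 := mul_le_mul_of_nonneg_left (hlow y hy0) D.hd0.le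
          have k3 : D.d * ct (fun x => x ∈ s.2) ≤ ct (fun x => x ∈ s.2) :=
            mul_le_of_le_one_left hQ0 D.hd1
          linarith
        · rw [D.step_e_nadj s.1 z v hz0 y ha]
          have k1 := D.step_FA_nadj s.1 z v hz0 y ha
          have k2 := hlow y hy0
          linarith
      · have hnc : D.κ * N + 1 ≤ ct (D.FA s.1 y) := by
          by_contra! hcon; exact h.2.1 y ⟨hy0, hcon⟩
        have hQ0 := ct_nonneg (fun x => x ∈
          (if ¬ D.pend s.1 ∧ D.crit s.1 z then insert z s.2 else s.2))
        by_cases ha : D.H.Adj y z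
        · rw [D.step_e_adj s.1 z v hz0 y ha, pow_succ]
          have k1 := key_adj y ha hy0
          have k2 := mul_le_mul_of_nonneg_left hnc D.hd0.le
          have k3 : D.d ^ D.e s.1 y * (D.d * (D.κ * N)) ≤ D.d * (D.κ * N) :=
            mul_le_of_le_one_left (mul_nonneg D.hd0.le hκN) (pow_le_one₀ D.hd0.le D.hd1)
          have := D.hd0
          linarith
        · have k1 := D.step_FA_nadj s.1 z v hz0 y ha
          have k3 : D.d ^ D.e (Function.update s.1 z (some v)) y * (D.κ * N) ≤ D.κ * N :=
            mul_le_of_le_one_left hκN (pow_le_one₀ D.hd0.le D.hd1)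
          linarith
    rcases hs.stage with ⟨h1, h2, h3⟩ | ⟨h1, h3⟩
    · by_cases hp : D.pend s.1
      · left
        have hzN : D.NB z := by tauto
        refine ⟨?_, ?_, ?_⟩
        · intro x hx
          rw [Ne, step_none s.1 z v hz0] at hx
          by_cases hxz : x = z
          · rw [hxz]; exact hzN
          · exact h1 x (by tauto)
        · rw [if_neg (by tauto)]; exact h2
        · intro y hy
          rw [step_none s.1 z v hz0] at hy
          obtain ⟨hy0, hyz⟩ := hy
          have hQ0 := ct_nonneg (fun x => s.1 x ≠ none)
          by_cases ha : D.H.Adj y z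
          · rw [D.step_e_adj s.1 z v hz0 y ha, pow_succ]
            have k1 := key_adj y ha hy0
            have k2 := mul_le_mul_of_nonneg_left (h3 y hy0) D.hd0.le
            have k3 : D.d * ct (fun x => s.1 x ≠ none) ≤ ct (fun x => s.1 x ≠ none) :=
              mul_le_of_le_one_left hQ0 D.hd1
            linarith
          · rw [D.step_e_nadj s.1 z v hz0 y ha]
            have k1 := D.step_FA_nadj s.1 z v hz0 y ha
            have k2 := h3 y hy0
            linarith
      · right
        refine stage2 hp fun y hy0 => ?_
        have k1 := D.stage1_low h1 y (h3 y hy0)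
        have hQ0 := ct_nonneg (fun x => x ∈ s.2)
        have k3 : D.d ^ D.e s.1 y * (D.κ * N) ≤ D.κ * N :=
          mul_le_of_le_one_left (mul_nonneg D.hκ0.le hN.le) (pow_le_one₀ D.hd0.le D.hd1)
        linarith
    · right
      exact stage2 h1 h3

/-- initial state -/
def s0 (_D : BU r Δ N m V VH) : (VH → Option V) × Finset VH := (fun _ => none, ∅)

theorem s0_e (y : VH) : D.e (D.s0).1 y = 0 := nct_zero (by simp [s0])

theorem s0_F (y : VH) (v : V) : D.F (D.s0).1 y v ↔ D.A y v := by simp [F, s0]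

theorem s0_FA (y : VH) : ct (D.FA (D.s0).1 y) = ct (D.A y) :=
  ct_congr fun v => by simp [FA, F, used, s0]

theorem inv_s0 : D.Inv D.s0 := by
  have h0 : 0 ≤ D.γ * N := mul_nonneg D.hγ0.le D.N_pos.le
  refine ⟨by simp [s0], by simp [s0], by simp [s0], fun i => ?_, by simp [s0], Or.inl ⟨by simp [s0],
    rfl, fun y _ => ?_⟩⟩
  · have : ct (fun x => x ∈ (D.s0).2 ∧ D.h x = i) = 0 := by
      unfold ct; rw [nct_zero (by simp [s0])]; simp
    rw [this]; linarith
  · rw [s0_FA, s0_e, pow_zero, one_mul]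
    have := ct_nonneg (fun x => (D.s0).1 x ≠ none)
    linarith [D.hAα y]

theorem rk_step (s : (VH → Option V) × Finset VH) (v : V) (hv : v ∈ D.opts s) :
    nct (fun x => s.1 x ≠ none) < nct (fun x => (D.ext s v).1 x ≠ none) := by
  obtain ⟨z, hz, hQ, ho, he⟩ := D.opts_spec ⟨v, hv⟩
  obtain ⟨hz0, -⟩ := D.nxt_some hz
  rw [he]
  simp only
  rw [nct_split (fun x => Function.update s.1 z (some v) x ≠ none) (fun x => s.1 x ≠ none)]
  have h1 : nct (fun x => s.1 x ≠ none) ≤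
      nct (fun x => Function.update s.1 z (some v) x ≠ none ∧ s.1 x ≠ none) := by
    refine nct_mono fun x hx => ⟨?_, hx⟩
    rw [Ne, step_none s.1 z v hz0]; tauto
  have h2 : 0 < nct (fun x => Function.update s.1 z (some v) x ≠ none ∧ ¬ s.1 x ≠ none) :=
    nct_pos z (by simp [hz0])
  omega

end BU

theorem markov_wt {ι : Type} [Fintype ι] (p Φ : ι → ℝ) (hp : ∀ i, 0 ≤ p i) (hΦ : ∀ i, 0 ≤ Φ i)
    (P : ι → Prop) (K : ℝ) (hK : 0 ≤ K) (h : ∀ i, P i → 1 ≤ K * Φ i) :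
    wt p P ≤ K * ∑ i, p i * Φ i := by
  unfold wt
  rw [Finset.mul_sum]
  refine Finset.sum_le_sum fun i _ => ?_
  split_ifs with hi
  · calc p i = p i * 1 := (mul_one _).symm
      _ ≤ p i * (K * Φ i) := mul_le_mul_of_nonneg_left (h i hi) (hp i)
      _ = _ := by ring
  · exact mul_nonneg hK (mul_nonneg (hp i) (hΦ i))

namespace BU
variable {r Δ N m : ℕ} {V VH : Type} [Fintype V] [Fintype VH] (D : BU r Δ N m V VH)

/-- supermartingales of the process -/
def Super (Φ : (VH → Option V) × Finset VH → ℝ) : Prop :=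
  ∀ s, D.Inv s → (D.opts s).Nonempty →
    ∑ v ∈ D.opts s, Φ (D.ext s v) ≤ (D.opts s).card * Φ s

theorem super_prod (I : Finset VH) (a : VH → (VH → Option V) → ℝ) (ha : ∀ x f, 0 ≤ a x f)
    (h : ∀ s, D.Inv s → ∀ z, D.nxt s.1 = some z → ∃ i0,
      (∀ i ∈ I, i ≠ i0 → ∀ v, D.allowed s.1 z v →
        a i (Function.update s.1 z (some v)) ≤ a i s.1) ∧
      (i0 ∈ I → ∑ v ∈ univ.filter (D.allowed s.1 z), a i0 (Function.update s.1 z (some v)) ≤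
        ct (D.allowed s.1 z) * a i0 s.1)) :
    D.Super (fun s => ∏ x ∈ I, a x s.1) := by
  intro s hs ho
  obtain ⟨z, hz, hQ, ho', he⟩ := D.opts_spec ho
  obtain ⟨i0, h1, h2⟩ := h s hs z hz
  rw [ho']
  simp only [he]
  refine prod_potential_step I _ (fun i => a i s.1)
    (fun i v => a i (Function.update s.1 z (some v))) i0 (fun i v => ha _ _) (fun i => ha _ _) ?_ ?_
  · intro i hi hne v hv
    exact h1 i hi hne v (mem_filter.mp hv).2
  · intro hi
    have := h2 hi
    rw [ct, nct_eq] at this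
    exact this

/-! ### spread -/

/-- spread potential factor -/
noncomputable def spr (_D : BU r Δ N m V VH) (K : ℝ) (g : VH → V) (x : VH) (f : VH → Option V) : ℝ :=
  if f x = none then K else if f x = some (g x) then 1 else 0

theorem super_spr (K : ℝ) (hK : 1 ≤ K * (D.c0 * N)) (g : VH → V) (I : Finset VH) :
    D.Super (fun s => ∏ x ∈ I, D.spr K g x s.1) := by
  have hK0 : 0 ≤ K := by
    by_contra! hcon
    have := mul_nonpos_of_nonpos_of_nonneg hcon.le (mul_nonneg D.hc00.le D.N_pos.le)
    linarith
  refine D.super_prod I _ (fun x f => ?_) fun s hs z hz => ⟨z, fun i _ hi v _ => ?_, fun _ => ?_⟩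
  · unfold spr; split_ifs <;> positivity
  · unfold spr; rw [Function.update_of_ne hi]
  · obtain ⟨hz0, -⟩ := D.nxt_some hz
    have h1 : ∀ v, D.spr K g z (Function.update s.1 z (some v)) = if v = g z then 1 else 0 := by
      intro v; unfold spr; simp
    have h2 : D.spr K g z s.1 = K := by unfold spr; simp [hz0]
    simp only [h1, h2]
    have h3 : ∑ v ∈ univ.filter (D.allowed s.1 z), (if v = g z then (1 : ℝ) else 0) ≤ 1 := by
      rw [Finset.sum_ite_eq']
      split_ifs <;> norm_num
    have h4 := mul_le_mul_of_nonneg_right (D.allowed_ge hs z hz0) hK0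
    linarith

/-! ### buffer candidates -/

/-- `v` can still become the image of the buffer vertex `x` -/
def alive (v : V) (x : VH) (f : VH → Option V) : Prop :=
  ∀ y, D.H.Adj x y → (∀ w, f y = some w → D.G.Adj v w) ∧
    (f y = none → D.d ^ D.e f y * (D.δ * N) ≤ ct (fun w => D.F f y w ∧ D.G.Adj w v))

noncomputable def al (v : V) (x : VH) (f : VH → Option V) : ℝ :=
  if D.alive v x f then 1 - D.q ^ D.u f x / 2 else 1

theorem qpow_le (n : ℕ) : D.q ^ n ≤ 1 := pow_le_one₀ D.hq0.le D.hq1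

theorem al_nonneg (v : V) (x : VH) (f : VH → Option V) : 0 ≤ D.al v x f := by
  unfold al; split_ifs
  · linarith [D.qpow_le (D.u f x)]
  · norm_num

theorem al_le (v : V) (x : VH) (f : VH → Option V) : D.al v x f ≤ 1 := by
  unfold al; split_ifs
  · have := pow_pos D.hq0 (D.u f x); linarith
  · norm_num

theorem al_eq (v : V) (x : VH) (f : VH → Option V) (z : VH) (w : V) (hz : f z = none)
    (h1 : ¬ D.H.Adj x z) (h2 : ∀ y, D.H.Adj x y → f y = none → ¬ D.H.Adj y z) :
    D.al v x (Function.update f z (some w)) = D.al v x f := by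
  have : D.alive v x (Function.update f z (some w)) ↔ D.alive v x f := by
    unfold alive
    refine forall_congr' fun y => forall_congr' fun hy => ?_
    have hyz : y ≠ z := by rintro rfl; exact h1 hy
    rw [Function.update_of_ne hyz]
    refine and_congr_right fun _ => forall_congr' fun hy0 => ?_
    have hn := h2 y hy hy0
    rw [D.step_e_nadj f z w hz y hn]
    rw [ct_congr (fun w' => ?_)]
    rw [D.step_F f z w hz]; tauto
  unfold al
  rw [D.step_u_nadj f z w hz x h1]
  simp only [this]

theorem used_le {s : (VH → Option V) × Finset VH} : ct (D.used s.1) ≤ ct (fun x => s.1 x ≠ none) := by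
  have hch : ∀ v, ∃ x, D.used s.1 v → s.1 x = some v := by
    intro v
    by_cases h : D.used s.1 v
    · obtain ⟨x, hx⟩ := h; exact ⟨x, fun _ => hx⟩
    · by_cases hV : Nonempty VH
      · exact ⟨hV.some, fun h' => absurd h' h⟩
      · exfalso
        have h1 := D.hX (D.c v)
        have h2 : ct (fun x => D.h x = D.c v) = 0 := by
          unfold ct; rw [nct_zero (fun a => (hV ⟨a⟩).elim)]; simp
        have := D.N_pos
        linarith
  choose g hg using hch
  refine ct_le_of_inj _ _ g (fun v hv => by rw [hg v hv]; simp) fun a b ha hb hab => ?_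
  have h1 := hg a ha
  rw [hab, hg b hb] at h1
  cases h1; rfl

theorem alive_step {s : (VH → Option V) × Finset VH} (hs : D.Inv s) (v : V) (b z : VH)
    (hb : D.B b) (hbz : D.H.Adj b z) (hz : s.1 z = none)
    (hal : D.alive v b s.1) :
    D.q * N ≤ ct (fun w => D.allowed s.1 z w ∧ D.alive v b (Function.update s.1 z (some w))) := by
  have hpend : D.pend s.1 := ⟨z, ⟨b, hb, hbz⟩, hz⟩
  have hN := D.N_pos
  have hst : ct (D.used s.1) ≤ r * m * Δ := by
    rcases hs.stage with ⟨h1, _, _⟩ | ⟨h1, _⟩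
    · exact (D.used_le).trans ((ct_mono h1).trans D.ct_NB)
    · exact absurd hpend h1
  have hbig : ∀ y, D.H.Adj b y → s.1 y = none →
      D.d ^ Δ * D.δ * N ≤ ct (fun w => D.F s.1 y w ∧ D.G.Adj w v) := by
    intro y hy hy0
    refine le_trans ?_ ((hal y hy).2 hy0)
    rw [mul_assoc]
    exact mul_le_mul_of_nonneg_right (D.dpow_e _ _) (mul_nonneg D.hδ0.le hN.le)
  have h1 := hbig z hbz hz
  have h2 := D.not_allowed_le hs z
  set bad : V → Prop := fun w => D.c w = D.h z ∧ ∃ y, D.H.Adj b y ∧ s.1 y = none ∧ D.H.Adj y z ∧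
    ct (fun u => (D.F s.1 y u ∧ D.G.Adj u v) ∧ D.G.Adj u w) <
      D.d * ct (fun u => D.F s.1 y u ∧ D.G.Adj u v) with hbad
  have h3 : ct bad ≤ Δ * (D.ε * N) := by
    refine ct_union (fun y => D.H.Adj b y ∧ s.1 y = none ∧ D.H.Adj y z)
      (fun y w => D.c w = D.h z ∧ ct (fun u => (D.F s.1 y u ∧ D.G.Adj u v) ∧ D.G.Adj u w) <
      D.d * ct (fun u => D.F s.1 y u ∧ D.G.Adj u v)) _ _ _
      ((ct_mono fun y h => h.1).trans (D.ct_deg b)) (mul_nonneg D.hε0.le D.N_pos.le) ?_ ?_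
    · rintro y ⟨hy, hy0, hyz⟩
      refine D.reg _ _ (D.hom _ _ hyz.symm) _ (fun w hw => D.F_mono_class hw.1) ?_
      refine le_trans ?_ (hbig y hy hy0)
      exact mul_le_mul_of_nonneg_right D.i8 hN.le
    · rintro w ⟨hw, y, hy, hy0, hyz, hlt⟩
      exact ⟨y, ⟨hy, hy0, hyz⟩, hw, hlt⟩
  have h4 : ct (fun w => D.F s.1 z w ∧ D.G.Adj w v) ≤
      ct (D.used s.1) + ct (fun w => ¬ D.used s.1 w ∧ D.F s.1 z w ∧ D.G.Adj w v) :=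
    ct_le_add fun w hw => by by_cases h : D.used s.1 w <;> tauto
  have h5 : ct (fun w => ¬ D.used s.1 w ∧ D.F s.1 z w ∧ D.G.Adj w v) ≤
      ct (fun w => D.FA s.1 z w ∧ ¬ D.allowed s.1 z w) +
      ct (fun w => D.allowed s.1 z w ∧ D.F s.1 z w ∧ D.G.Adj w v) :=
    ct_le_add fun w hw => by
      by_cases h : D.allowed s.1 z w
      · tauto
      · left; exact ⟨⟨hw.2.1, hw.1⟩, h⟩
  have h6 : ct (fun w => D.allowed s.1 z w ∧ D.F s.1 z w ∧ D.G.Adj w v) ≤ ct bad +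
      ct (fun w => D.allowed s.1 z w ∧ D.alive v b (Function.update s.1 z (some w))) := by
    refine ct_le_add fun w hw => ?_
    by_cases hbw : bad w
    · exact Or.inl hbw
    right
    refine ⟨hw.1, fun y hy => ⟨fun w' hw' => ?_, fun hy0 => ?_⟩⟩
    · rw [step_some s.1 z w hz] at hw'
      rcases hw' with hw' | ⟨rfl, rfl⟩
      · exact (hal y hy).1 w' hw'
      · exact hw.2.2.symm
    · rw [step_none s.1 z w hz] at hy0
      obtain ⟨hy0, hyz⟩ := hy0
      have ha := (hal y hy).2 hy0
      by_cases hadj : D.H.Adj y z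
      · rw [D.step_e_adj s.1 z w hz y hadj, pow_succ]
        have hnb : ¬ (ct (fun u => (D.F s.1 y u ∧ D.G.Adj u v) ∧ D.G.Adj u w) <
            D.d * ct (fun u => D.F s.1 y u ∧ D.G.Adj u v)) := by
          intro hlt
          exact hbw ⟨D.F_mono_class hw.2.1, y, hy, hy0, hadj, hlt⟩
        push Not at hnb
        have hcg : ct (fun u => D.F (Function.update s.1 z (some w)) y u ∧ D.G.Adj u v) =
            ct (fun u => (D.F s.1 y u ∧ D.G.Adj u v) ∧ D.G.Adj u w) := ct_congr fun u => by
          rw [D.step_F s.1 z w hz]; tauto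
        rw [hcg]
        have := mul_le_mul_of_nonneg_left ha D.hd0.le
        linarith
      · rw [D.step_e_nadj s.1 z w hz y hadj]
        refine ha.trans (le_of_eq (ct_congr fun u => ?_))
        rw [D.step_F s.1 z w hz]; tauto
  have h7 := D.i7
  linarith

theorem super_al (v : V) (I : Finset VH) (hI : ∀ x ∈ I, D.B x) :
    D.Super (fun s => ∏ x ∈ I, D.al v x s.1) := by
  refine D.super_prod I _ (fun x f => D.al_nonneg v x f) fun s hs z hz => ?_
  obtain ⟨hz0, hcase⟩ := D.nxt_some hz
  have hN := D.N_pos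
  by_cases hNB : D.NB z
  · obtain ⟨b, hb, hbz⟩ := hNB
    refine ⟨b, fun x hx hxb w _ => le_of_eq ?_, fun hbI => ?_⟩
    · refine D.al_eq v x s.1 z w hz0 (fun h => hxb (D.hB2 x b z (hI x hx) hb h hbz))
        fun y hy _ hyz => hxb (D.hB3 x b y z (hI x hx) hb hy hbz hyz)
    · by_cases hal : D.alive v b s.1
      · have hst := D.alive_step hs v b z hb hbz hz0 hal
        have hu : ∀ w, D.u s.1 b = D.u (Function.update s.1 z (some w)) b + 1 := fun w =>
          D.step_u_adj s.1 z w hz0 b hbz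
        obtain ⟨k, hk⟩ : ∃ k, D.u s.1 b = k + 1 := ⟨_, hu v⟩
        have hk' : ∀ w, D.u (Function.update s.1 z (some w)) b = k := fun w => by
          have := hu w; omega
        have hval : ∀ w, D.al v b (Function.update s.1 z (some w)) =
            1 - (if D.alive v b (Function.update s.1 z (some w)) then D.q ^ k / 2 else 0) := by
          intro w; unfold al; rw [hk']; split_ifs <;> ring
        have h0 : D.al v b s.1 = 1 - D.q ^ (k + 1) / 2 := by
          unfold al; rw [if_pos hal, hk]
        simp only [hval, h0]
        rw [Finset.sum_sub_distrib, Finset.sum_const, ← Finset.sum_filter, Finset.sum_const,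
          nsmul_eq_mul, nsmul_eq_mul, Finset.filter_filter, ← nct_eq, ← nct_eq]
        have hqk := pow_pos D.hq0 k
        have hle : ct (D.allowed s.1 z) ≤ N := by
          rw [← D.hc (D.h z)]
          exact ct_mono fun w hw => D.FA_class hw.1
        have h8 : D.q * ct (D.allowed s.1 z) ≤ D.q * N := mul_le_mul_of_nonneg_left hle D.hq0.le
        have h9 := mul_le_mul_of_nonneg_right (h8.trans hst) hqk.le
        change ct (D.allowed s.1 z) * 1 - ct (fun w => D.allowed s.1 z w ∧
          D.alive v b (Function.update s.1 z (some w))) * (D.q ^ k / 2) ≤ _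
        rw [pow_succ]
        linarith
      · have h0 : D.al v b s.1 = 1 := by unfold al; rw [if_neg hal]
        rw [h0, mul_one]
        refine (Finset.sum_le_card_nsmul _ _ 1 fun w _ => D.al_le _ _ _).trans ?_
        rw [nsmul_eq_mul, mul_one, ← nct_eq]; exact le_rfl
  · have hp : ¬ D.pend s.1 := by tauto
    have heq : ∀ x ∈ I, ∀ w, D.al v x (Function.update s.1 z (some w)) = D.al v x s.1 := by
      intro x hx w
      refine D.al_eq v x s.1 z w hz0 (fun h => hNB ⟨x, hI x hx, h⟩) fun y hy hy0 _ =>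
        hp ⟨y, ⟨x, hI x hx, hy⟩, hy0⟩
    refine ⟨z, fun x hx _ w _ => (heq x hx w).le, fun hzI => ?_⟩
    simp only [heq z hzI]
    rw [Finset.sum_const, nsmul_eq_mul, ← nct_eq]; exact le_rfl

/-! ### bad vertices for a target set -/

def bad (T : V → Prop) (y : VH) (f : VH → Option V) : Prop :=
  ct (fun w => D.F f y w ∧ T w) < D.d ^ D.e f y * ct T

noncomputable def bd (T : V → Prop) (y : VH) (f : VH → Option V) : ℝ :=
  if D.bad T y f then 1 else D.ε / D.c0 * D.u f y

theorem ρ_nonneg : 0 ≤ D.ε / D.c0 := div_nonneg D.hε0.le D.hc00.le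

theorem bd_nonneg (T : V → Prop) (y : VH) (f : VH → Option V) : 0 ≤ D.bd T y f := by
  unfold bd; split_ifs
  · norm_num
  · exact mul_nonneg D.ρ_nonneg (Nat.cast_nonneg _)

theorem ρu_le (y : VH) (f : VH → Option V) : D.ε / D.c0 * D.u f y ≤ Δ * (D.ε / D.c0) := by
  rw [mul_comm]
  exact mul_le_mul_of_nonneg_right (by exact_mod_cast D.u_le f y) D.ρ_nonneg

theorem bd_le (T : V → Prop) (y : VH) (f : VH → Option V) : D.bd T y f ≤ 1 := by
  unfold bd; split_ifs
  · norm_num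
  · exact (D.ρu_le y f).trans D.i10

theorem bd_eq (T : V → Prop) (y : VH) (f : VH → Option V) (z : VH) (w : V) (hz : f z = none)
    (h1 : ¬ D.H.Adj y z) :
    D.bd T y (Function.update f z (some w)) = D.bd T y f := by
  have : D.bad T y (Function.update f z (some w)) ↔ D.bad T y f := by
    unfold bad
    rw [D.step_e_nadj f z w hz y h1, ct_congr (fun w' => ?_)]
    rw [D.step_F f z w hz]; tauto
  unfold bd
  rw [D.step_u_nadj f z w hz y h1]
  simp only [this]

theorem super_bd (i : Fin r) (T : V → Prop) (hT : ∀ v, T v → D.c v = i) (hTc : D.τ * N ≤ ct T)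
    (S : Finset VH) (hS : ∀ y ∈ S, D.h y = i)
    (hdisj : ∀ y ∈ S, ∀ y' ∈ S, ∀ z, D.H.Adj y z → D.H.Adj y' z → y = y') :
    D.Super (fun s => ∏ x ∈ S, D.bd T x s.1) := by
  refine D.super_prod S _ (fun x f => D.bd_nonneg T x f) fun s hs z hz => ?_
  obtain ⟨hz0, -⟩ := D.nxt_some hz
  have hN := D.N_pos
  by_cases hex : ∃ y ∈ S, D.H.Adj y z
  · obtain ⟨y, hyS, hyz⟩ := hex
    refine ⟨y, fun x hx hxy w _ => le_of_eq ?_, fun _ => ?_⟩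
    · exact D.bd_eq T x s.1 z w hz0 fun h => hxy (hdisj x hx y hyS z h hyz)
    by_cases hb : D.bad T y s.1
    · have h0 : D.bd T y s.1 = 1 := by unfold bd; rw [if_pos hb]
      rw [h0, mul_one]
      refine (Finset.sum_le_card_nsmul _ _ 1 fun w _ => D.bd_le _ _ _).trans ?_
      rw [nsmul_eq_mul, mul_one, ← nct_eq]; exact le_rfl
    · have h0 : D.bd T y s.1 = D.ε / D.c0 * D.u s.1 y := by unfold bd; rw [if_neg hb]
      unfold bad at hb
      push Not at hb
      have hbig : D.ε * N ≤ ct (fun w => D.F s.1 y w ∧ T w) := by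
        refine le_trans ?_ hb
        have a1 : D.ε * N ≤ D.d ^ Δ * (D.τ * N) := by
          rw [← mul_assoc]; exact mul_le_mul_of_nonneg_right D.i9 hN.le
        have a2 : D.d ^ Δ * (D.τ * N) ≤ D.d ^ Δ * ct T :=
          mul_le_mul_of_nonneg_left hTc (pow_nonneg D.hd0.le _)
        exact a1.trans (a2.trans (mul_le_mul_of_nonneg_right (D.dpow_e _ _) (ct_nonneg _)))
      have hreg := D.reg _ _ (D.hom _ _ hyz.symm) _
        (fun w (hw : D.F s.1 y w ∧ T w) => D.F_mono_class hw.1) hbig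
      have hu : ∀ w, (D.u s.1 y : ℝ) = D.u (Function.update s.1 z (some w)) y + 1 := fun w => by
        exact_mod_cast D.step_u_adj s.1 z w hz0 y hyz
      set P : V → Prop := fun w => D.c w = D.h z ∧
        ct (fun u => (D.F s.1 y u ∧ T u) ∧ D.G.Adj u w) <
          D.d * ct (fun w => D.F s.1 y w ∧ T w) with hP
      have hval : ∀ w ∈ univ.filter (D.allowed s.1 z),
          D.bd T y (Function.update s.1 z (some w)) ≤
          (if P w then 1 else 0) + D.ε / D.c0 * ((D.u s.1 y : ℝ) - 1) := by
        intro w hw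
        have hw := (mem_filter.mp hw).2
        rw [hu w, add_sub_cancel_right]
        by_cases hPw : P w
        · rw [if_pos hPw]
          have := mul_nonneg D.ρ_nonneg
            (Nat.cast_nonneg (α := ℝ) (D.u (Function.update s.1 z (some w)) y))
          linarith [D.bd_le T y (Function.update s.1 z (some w))]
        · rw [if_neg hPw, zero_add]
          have hnb : ¬ D.bad T y (Function.update s.1 z (some w)) := by
            unfold bad
            push Not
            rw [D.step_e_adj s.1 z w hz0 y hyz, pow_succ]
            have hge : ¬ (ct (fun u => (D.F s.1 y u ∧ T u) ∧ D.G.Adj u w) <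
                D.d * ct (fun w => D.F s.1 y w ∧ T w)) := fun h => hPw ⟨D.FA_class hw.1, h⟩
            push Not at hge
            have hcg : ct (fun u => D.F (Function.update s.1 z (some w)) y u ∧ T u) =
              ct (fun u => (D.F s.1 y u ∧ T u) ∧ D.G.Adj u w) := ct_congr fun u => by
              rw [D.step_F s.1 z w hz0]; tauto
            rw [hcg]
            have := mul_le_mul_of_nonneg_left hb D.hd0.le
            linarith
          unfold bd; rw [if_neg hnb]
      refine (Finset.sum_le_sum hval).trans ?_
      rw [Finset.sum_add_distrib, Finset.sum_const, ← Finset.sum_filter, Finset.sum_const,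
        nsmul_eq_mul, nsmul_eq_mul, Finset.filter_filter, ← nct_eq, ← nct_eq, h0]
      change ct (fun w => D.allowed s.1 z w ∧ P w) * 1 + ct (D.allowed s.1 z) * _ ≤ _
      have k1 : ct (fun w => D.allowed s.1 z w ∧ P w) ≤ D.ε * N :=
        (ct_mono fun w hw => hw.2).trans hreg
      have k2 : D.ε * N ≤ ct (D.allowed s.1 z) * (D.ε / D.c0) := by
        have := mul_le_mul_of_nonneg_right (D.allowed_ge hs z hz0) D.ρ_nonneg
        refine le_trans (le_of_eq ?_) this
        have := D.hc00.ne'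
        field_simp
      linarith
  · push Not at hex
    have heq : ∀ x ∈ S, ∀ w, D.bd T x (Function.update s.1 z (some w)) = D.bd T x s.1 :=
      fun x hx w => D.bd_eq T x s.1 z w hz0 (hex x hx)
    refine ⟨z, fun x hx _ w _ => (heq x hx w).le, fun hzI => ?_⟩
    simp only [heq z hzI]
    rw [Finset.sum_const, nsmul_eq_mul, ← nct_eq]; exact le_rfl

end BU

theorem indep_select {α : Type} [Fintype α] (Q : Finset α) (cf : α → α → Prop) (K : ℝ)
    (hrefl : ∀ a, cf a a) (hdeg : ∀ a, ct (cf a) ≤ K) :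
    ∃ S ⊆ Q, (∀ a ∈ S, ∀ b ∈ S, cf a b → cf b a → a = b) ∧ (∀ q ∈ Q, ∃ a ∈ S, cf a q ∨ cf q a) ∧
      ((∀ a b, cf a b → cf b a) → (Q.card : ℝ) ≤ S.card * K) := by
  obtain ⟨S, hS, hmax⟩ := Finset.exists_max_image
    (Q.powerset.filter fun S => ∀ a ∈ S, ∀ b ∈ S, (cf a b ∨ cf b a) → a = b) Finset.card
    ⟨∅, by simp⟩
  rw [mem_filter, mem_powerset] at hS
  have hdom : ∀ q ∈ Q, ∃ a ∈ S, cf a q ∨ cf q a := by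
    intro q hq
    by_contra! hcon
    have hqS : q ∉ S := fun h => (hcon q h).1 (hrefl q)
    have := hmax (insert q S) (by
      rw [mem_filter, mem_powerset]
      refine ⟨insert_subset hq hS.1, fun a ha b hb hab => ?_⟩
      rw [mem_insert] at ha hb
      rcases ha with rfl | ha <;> rcases hb with rfl | hb
      · rfl
      · have := hcon b hb; tauto
      · have := hcon a ha; tauto
      · exact hS.2 a ha b hb hab)
    rw [card_insert_of_notMem hqS] at this
    omega
  refine ⟨S, hS.1, fun a ha b hb h1 _ => hS.2 a ha b hb (Or.inl h1), hdom, fun hsymm => ?_⟩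
  have hK : 0 ≤ K ∨ S.card = 0 := by
    rcases S.eq_empty_or_nonempty with h | ⟨a, _⟩
    · exact Or.inr (by simp [h])
    · exact Or.inl ((ct_nonneg _).trans (hdeg a))
  have hQc : ct (fun q => q ∈ Q) = Q.card := by unfold ct; rw [nct_eq]; simp
  have hSc : ct (fun q => q ∈ S) = S.card := by unfold ct; rw [nct_eq]; simp
  rcases hK with hK | hK
  · rw [← hQc, ← hSc]
    refine ct_union (fun a => a ∈ S) cf _ _ _ le_rfl hK (fun a _ => hdeg a) fun q hq => ?_
    obtain ⟨a, ha, h⟩ := hdom q hq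
    exact ⟨a, ha, h.elim id (hsymm q a)⟩
  · rw [card_eq_zero] at hK
    have : Q = ∅ := by
      refine Finset.eq_empty_of_forall_notMem fun q hq => ?_
      obtain ⟨a, ha, _⟩ := hdom q hq
      rw [hK] at ha; simp at ha
    simp [this, hK]

theorem wt_union {ι κ : Type} [Fintype ι] (w : ι → ℝ) (hw : ∀ i, 0 ≤ w i) (J : Finset κ)
    (P : κ → ι → Prop) (S : ι → Prop) (h : ∀ i, w i ≠ 0 → S i → ∃ j ∈ J, P j i) :
    wt w S ≤ ∑ j ∈ J, wt w (P j) := by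
  unfold wt
  rw [Finset.sum_comm]
  refine Finset.sum_le_sum fun i _ => ?_
  have hnn : ∀ j ∈ J, 0 ≤ @ite ℝ (P j i) (Classical.propDecidable _) (w i) 0 := fun j _ => by
    split_ifs
    · exact hw i
    · exact le_rfl
  by_cases h0 : w i = 0
  · simp [h0]
  split_ifs with hS
  · obtain ⟨j, hj, hP⟩ := h i h0 hS
    refine le_trans ?_ (Finset.single_le_sum hnn hj)
    rw [if_pos hP]
  · exact Finset.sum_nonneg hnn

theorem wt_add_not {ι : Type} [Fintype ι] (w : ι → ℝ) (P : ι → Prop) :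
    wt w P + wt w (fun i => ¬ P i) = ∑ i, w i := by
  unfold wt
  rw [← Finset.sum_add_distrib]
  refine Finset.sum_congr rfl fun i _ => ?_
  by_cases h : P i <;> simp [h]

namespace BU
variable {r Δ N m : ℕ} {V VH : Type} [Fintype V] [Fintype VH] (D : BU r Δ N m V VH)

theorem exists_p : ∃ p : (VH → Option V) × Finset VH → ℝ, (∀ s, 0 ≤ p s) ∧ ∑ s, p s = 1 ∧
    (∀ s, p s ≠ 0 → D.Inv s ∧ D.opts s = ∅) ∧
    ∀ Φ, D.Super Φ → ∑ s, p s * Φ s ≤ Φ D.s0 := by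
  obtain ⟨p, h1, h2, h3, h4⟩ := process_exists D.opts D.ext D.Inv
    (fun s => nct (fun x => s.1 x ≠ none)) (Fintype.card VH)
    (fun s => by rw [nct_eq]; exact Finset.card_le_univ _)
    (fun s _ v hv => D.rk_step s v hv) (fun s hs v hv => D.inv_step hs v hv) D.s0 D.inv_s0
  exact ⟨p, h1, h2, h3, fun Φ hΦ => h4 Φ hΦ⟩

theorem s0_alive (v : V) (x : VH) (hx : D.B x) (hv : D.h x = D.c v) : D.alive v x D.s0.1 := by
  intro y hy
  refine ⟨fun w hw => by simp [s0] at hw, fun _ => ?_⟩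
  rw [D.s0_e, pow_zero, one_mul]
  have hR := D.hom x y hy
  rw [hv] at hR
  refine (D.mindeg v (D.h y) hR).trans (ct_mono fun w hw => ⟨?_, hw.2⟩)
  rw [D.s0_F]
  exact D.hAW y (D.hBNW x y hx hy) w hw.1

/-- many buffer vertices can be mapped to `v` -/
def E1 (v : V) (s : (VH → Option V) × Finset VH) : Prop :=
  ¬ D.pend s.1 → D.q ^ Δ * μ_ D * N / 4 ≤ ct (fun x => (D.B x ∧ D.h x = D.c v) ∧ D.alive v x s.1)
where μ_ (D : BU r Δ N m V VH) : ℝ := D.μ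

theorem prob_E1 (p : (VH → Option V) × Finset VH → ℝ) (hp0 : ∀ s, 0 ≤ p s)
    (hp : ∀ Φ, D.Super Φ → ∑ s, p s * Φ s ≤ Φ D.s0) (v : V) :
    wt p (fun s => ¬ D.E1 v s) ≤ Real.exp (-(D.q ^ Δ * D.μ * N / 4)) := by
  set I : Finset VH := univ.filter (fun x => D.B x ∧ D.h x = D.c v) with hI
  have hIc : (I.card : ℝ) = m := by rw [hI, ← nct_eq]; exact D.hBm (D.c v)
  set k : ℝ := D.q ^ Δ * D.μ * N / 4 with hk
  have h1 := hp _ (D.super_al v I (fun x hx => (mem_filter.mp hx).2.1))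
  have h2 := markov_wt p (fun s => ∏ x ∈ I, D.al v x s.1) hp0
    (fun s => Finset.prod_nonneg fun x _ => D.al_nonneg v x s.1) (fun s => ¬ D.E1 v s)
    (Real.exp k) (Real.exp_pos _).le (by
      intro s hs
      unfold E1 at hs
      push Not at hs
      obtain ⟨hs1, hs2⟩ := hs
      have e1 : ∏ x ∈ I, D.al v x s.1 = (1 / 2 : ℝ) ^ (I.filter fun x => D.alive v x s.1).card := by
        have : ∀ x ∈ I, D.al v x s.1 = if D.alive v x s.1 then (1 / 2 : ℝ) else 1 := by
          intro x hx
          have hx := (mem_filter.mp hx).2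
          have hu : D.u s.1 x = 0 := nct_zero fun y hy => hs1 ⟨y, ⟨x, hx.1, hy.1⟩, hy.2⟩
          unfold al; rw [hu]; norm_num
        rw [Finset.prod_congr rfl this, Finset.prod_ite, Finset.prod_const, Finset.prod_const_one,
          mul_one]
      simp only [e1]
      have e2 : ((I.filter fun x => D.alive v x s.1).card : ℝ) < k := by
        rw [hI, Finset.filter_filter, ← nct_eq]; exact hs2
      set n := (I.filter fun x => D.alive v x s.1).card
      have e3 : Real.exp (-(n : ℝ)) ≤ (1 / 2 : ℝ) ^ n := by
        rw [show -(n : ℝ) = n * (-1 : ℝ) by ring, Real.exp_nat_mul]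
        refine pow_le_pow_left₀ (Real.exp_pos _).le ?_ n
        rw [Real.exp_neg, one_div]
        exact inv_anti₀ (by norm_num) (by linarith [Real.add_one_le_exp (1 : ℝ)])
      calc (1 : ℝ) ≤ Real.exp (k - n) := by
            rw [← Real.exp_zero]; exact Real.exp_le_exp.mpr (by linarith)
        _ = Real.exp k * Real.exp (-(n : ℝ)) := by rw [← Real.exp_add]; ring_nf
        _ ≤ _ := mul_le_mul_of_nonneg_left e3 (Real.exp_pos _).le)
  have h3 : ∏ x ∈ I, D.al v x D.s0.1 ≤ Real.exp (-(D.q ^ Δ / 2 * m)) := by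
    have : ∀ x ∈ I, D.al v x D.s0.1 ≤ Real.exp (-(D.q ^ Δ / 2)) := by
      intro x hx
      have hx := (mem_filter.mp hx).2
      unfold al
      rw [if_pos (D.s0_alive v x hx.1 hx.2)]
      have a1 : D.q ^ Δ ≤ D.q ^ D.u D.s0.1 x := pow_le_pow_of_le_one D.hq0.le D.hq1 (D.u_le _ _)
      have a2 := Real.add_one_le_exp (-(D.q ^ Δ / 2))
      linarith
    refine (Finset.prod_le_prod (fun x _ => D.al_nonneg v x _) this).trans ?_
    rw [Finset.prod_const, ← Real.exp_nat_mul, ← hIc]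
    apply le_of_eq; ring_nf
  refine h2.trans ((mul_le_mul_of_nonneg_left (h1.trans h3) (Real.exp_pos _).le).trans ?_)
  rw [← Real.exp_add]
  refine Real.exp_le_exp.mpr ?_
  have hq := pow_pos D.hq0 Δ
  have := mul_le_mul_of_nonneg_left D.hm1 hq.le
  rw [hk]
  linarith

theorem prob_bad (p : (VH → Option V) × Finset VH → ℝ) (hp0 : ∀ s, 0 ≤ p s)
    (hp : ∀ Φ, D.Super Φ → ∑ s, p s * Φ s ≤ Φ D.s0) (i : Fin r) (T : V → Prop)
    (hT : ∀ v, T v → D.c v = i) (hTc : D.τ * N ≤ ct T)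
    (S : Finset VH) (hS : ∀ y ∈ S, D.h y = i) (hSW : ∀ y ∈ S, ¬ D.W y)
    (hdisj : ∀ y ∈ S, ∀ y' ∈ S, ∀ z, D.H.Adj y z → D.H.Adj y' z → y = y')
    (hSc : D.γ' * N ≤ S.card) :
    wt p (fun s => ∀ y ∈ S, D.bad T y s.1) ≤ Real.exp (-(4 * N)) := by
  have h1 := hp _ (D.super_bd i T hT hTc S hS hdisj)
  have h2 := markov_wt p (fun s => ∏ x ∈ S, D.bd T x s.1) hp0
    (fun s => Finset.prod_nonneg fun x _ => D.bd_nonneg T x s.1) (fun s => ∀ y ∈ S, D.bad T y s.1)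
    1 zero_le_one (by
      intro s hs
      rw [one_mul]
      refine le_of_eq (Finset.prod_eq_one fun x hx => ?_).symm
      unfold bd; rw [if_pos (hs x hx)])
  rw [one_mul] at h2
  refine h2.trans (h1.trans ?_)
  have : ∀ x ∈ S, D.bd T x D.s0.1 ≤ Real.exp (-(4 / D.γ')) := by
    intro x hx
    have hnb : ¬ D.bad T x D.s0.1 := by
      unfold bad
      rw [D.s0_e, pow_zero, one_mul]
      push Not
      refine ct_mono fun w hw => ⟨?_, hw⟩
      rw [D.s0_F]
      exact D.hAW x (hSW x hx) w ((hT w hw).trans (hS x hx).symm)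
    unfold bd; rw [if_neg hnb]
    exact (D.ρu_le x _).trans D.i15
  refine (Finset.prod_le_prod (fun x _ => D.bd_nonneg T x _) this).trans ?_
  rw [Finset.prod_const, ← Real.exp_nat_mul]
  refine Real.exp_le_exp.mpr ?_
  have hγ := D.hγ'0
  have : 4 / D.γ' * (D.γ' * N) ≤ 4 / D.γ' * S.card :=
    mul_le_mul_of_nonneg_left hSc (by positivity)
  have e : 4 / D.γ' * (D.γ' * N) = 4 * N := by field_simp
  linarith

/-- few bad vertices for each large target set -/
def E2 (s : (VH → Option V) × Finset VH) : Prop :=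
  ∀ i (T : V → Prop), (∀ v, T v → D.c v = i) → D.τ * N ≤ ct T →
    ct (fun y => D.h y = i ∧ ¬ D.W y ∧ D.bad T y s.1) ≤ D.γ * N / 2

theorem prob_E2 (p : (VH → Option V) × Finset VH → ℝ) (hp0 : ∀ s, 0 ≤ p s)
    (hp : ∀ Φ, D.Super Φ → ∑ s, p s * Φ s ≤ Φ D.s0) :
    wt p (fun s => ¬ D.E2 s) ≤ 1 / 4 := by
  have hN := D.N_pos
  set Xs : Fin r → Finset VH := fun i => univ.filter (fun x => D.h x = i) with hXs
  set Ys : Fin r → Finset V := fun i => univ.filter (fun x => D.c x = i) with hYs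
  have hXc : ∀ i, (Xs i).card = N := fun i => by
    have := D.hX i; unfold ct at this; rw [nct_eq] at this; exact_mod_cast this
  have hYc : ∀ i, (Ys i).card = N := fun i => by
    have := D.hc i; unfold ct at this; rw [nct_eq] at this; exact_mod_cast this
  -- admissible pairs
  set adm : Fin r → Finset VH → Finset V → Prop := fun i S T =>
    D.τ * N ≤ ct (fun v => v ∈ T) ∧ (∀ y ∈ S, ¬ D.W y) ∧
    (∀ y ∈ S, ∀ y' ∈ S, ∀ z, D.H.Adj y z → D.H.Adj y' z → y = y') ∧ D.γ' * N ≤ S.card with hadm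
  have hu := wt_union p hp0 (univ.sigma fun i : Fin r => ((Xs i).powerset ×ˢ (Ys i).powerset))
    (fun j s => adm j.1 j.2.1 j.2.2 ∧ ∀ y ∈ j.2.1, D.bad (fun v => v ∈ j.2.2) y s.1)
    (fun s => ¬ D.E2 s) (by
      intro s _ hs
      unfold E2 at hs
      push Not at hs
      obtain ⟨i, T, hT, hTc, hlt⟩ := hs
      have hTeq : (fun v => v ∈ univ.filter T) = T := by ext v; simp
      set Q : Finset VH := univ.filter (fun y => D.h y = i ∧ ¬ D.W y ∧ D.bad T y s.1) with hQ
      have hQc : D.γ * N / 2 < Q.card := by rw [hQ, ← nct_eq]; exact hlt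
      obtain ⟨S, hSQ, hS1, -, hS3⟩ := indep_select Q
        (fun y y' => y' = y ∨ ∃ z, D.H.Adj y z ∧ D.H.Adj y' z) (1 + Δ * Δ) (by simp) (by
          intro y
          have := ct_le_add (P := fun y' => y' = y ∨ ∃ z, D.H.Adj y z ∧ D.H.Adj y' z)
            (Q := fun y' => y' = y) (S := fun y' => ∃ z, D.H.Adj y z ∧ D.H.Adj y' z)
            (fun a ha => ha)
          rw [ct_single] at this
          have h2 := ct_union (fun z => D.H.Adj y z) (fun z y' => D.H.Adj z y')
            (fun y' => ∃ z, D.H.Adj y z ∧ D.H.Adj y' z) Δ Δ (D.ct_deg y) (Nat.cast_nonneg _)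
            (fun z _ => D.ct_deg z) (by rintro y' ⟨z, h1, h2⟩; exact ⟨z, h1, h2.symm⟩)
          linarith)
      have hSc := hS3 (by
        rintro a b (rfl | ⟨z, h1, h2⟩)
        · exact Or.inl rfl
        · exact Or.inr ⟨z, h2, h1⟩)
      have hmem : ∀ y ∈ S, D.h y = i ∧ ¬ D.W y ∧ D.bad T y s.1 := fun y hy =>
        (mem_filter.mp (hSQ hy)).2
      refine ⟨⟨i, S, univ.filter T⟩, ?_, ⟨?_, fun y hy => (hmem y hy).2.1, ?_, ?_⟩, ?_⟩
      · simp only [mem_sigma, mem_univ, true_and, mem_product, mem_powerset]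
        refine ⟨fun y hy => ?_, fun v hv => ?_⟩
        · simp [hXs, (hmem y hy).1]
        · simp only [hYs, mem_filter, mem_univ, true_and] at hv ⊢; exact hT v hv
      · simp only [hTeq]; exact hTc
      · intro y hy y' hy' z h1 h2
        exact hS1 y hy y' hy' (Or.inr ⟨z, h1, h2⟩) (Or.inr ⟨z, h2, h1⟩)
      · have h1 : (1 + (Δ : ℝ) * Δ) * (D.γ' * N) ≤ S.card * (1 + Δ * Δ) := by
          have := mul_le_mul_of_nonneg_right D.hγ' hN.le
          linarith
        rw [mul_comm] at h1
        exact le_of_mul_le_mul_right h1 (by positivity)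
      · intro y hy
        simp only [hTeq]
        exact (hmem y hy).2.2)
  refine hu.trans ?_
  have hb : ∀ j ∈ (univ.sigma fun i : Fin r => ((Xs i).powerset ×ˢ (Ys i).powerset)),
      wt p (fun s => adm j.1 j.2.1 j.2.2 ∧ ∀ y ∈ j.2.1, D.bad (fun v => v ∈ j.2.2) y s.1)
        ≤ Real.exp (-(4 * N)) := by
    rintro ⟨i, S, T⟩ hj
    simp only [mem_sigma, mem_univ, true_and, mem_product, mem_powerset] at hj
    by_cases ha : adm i S T
    · refine (wt_mono p hp0 _ _ fun s _ h => h.2).trans ?_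
      refine D.prob_bad p hp0 hp i (fun v => v ∈ T) (fun v hv => ?_) ha.1 S (fun y hy => ?_)
        ha.2.1 ha.2.2.1 ha.2.2.2
      · have := hj.2 hv; simpa [hYs] using this
      · have := hj.1 hy; simpa [hXs] using this
    · have : wt p (fun s => adm i S T ∧ ∀ y ∈ S, D.bad (fun v => v ∈ T) y s.1) = 0 := by
        unfold wt
        refine Finset.sum_eq_zero fun s _ => ?_
        rw [if_neg (fun h => ha h.1)]
      rw [this]; exact (Real.exp_pos _).le
  refine (Finset.sum_le_card_nsmul _ _ _ hb).trans ?_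
  have hcard : ((univ.sigma fun i : Fin r => ((Xs i).powerset ×ˢ (Ys i).powerset)).card : ℝ)
      = r * 4 ^ N := by
    rw [card_sigma]
    simp only [card_product, card_powerset, hXc, hYc]
    rw [Finset.sum_const, card_univ, Fintype.card_fin, smul_eq_mul]
    push_cast
    rw [← mul_pow]; norm_num
  rw [nsmul_eq_mul, hcard]
  refine le_trans ?_ D.i17
  rw [mul_assoc]
  refine mul_le_mul_of_nonneg_left ?_ (Nat.cast_nonneg _)
  have h4 : (4 : ℝ) ^ N ≤ Real.exp (2 * N) := by
    rw [mul_comm, Real.exp_nat_mul]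
    refine pow_le_pow_left₀ (by norm_num) ?_ N
    have := Real.add_one_le_exp (1 : ℝ)
    calc (4 : ℝ) ≤ Real.exp 1 * Real.exp 1 := by nlinarith
      _ = _ := by rw [← Real.exp_add]; norm_num
  calc _ ≤ Real.exp (2 * N) * Real.exp (-(4 * N)) :=
        mul_le_mul_of_nonneg_right h4 (Real.exp_pos _).le
    _ = _ := by rw [← Real.exp_add]; ring_nf

def Good (s : (VH → Option V) × Finset VH) : Prop := D.E2 s ∧ ∀ v, D.E1 v s

theorem prob_good (p : (VH → Option V) × Finset VH → ℝ) (hp0 : ∀ s, 0 ≤ p s) (hp1 : ∑ s, p s = 1)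
    (hp : ∀ Φ, D.Super Φ → ∑ s, p s * Φ s ≤ Φ D.s0) : 1 / 2 ≤ wt p D.Good := by
  have h1 := D.prob_E2 p hp0 hp
  have h2 : wt p (fun s => ∃ v, ¬ D.E1 v s) ≤ 1 / 4 := by
    refine (wt_union p hp0 (univ : Finset V) (fun v s => ¬ D.E1 v s) _ (by
      rintro s _ ⟨v, hv⟩; exact ⟨v, mem_univ _, hv⟩)).trans ?_
    refine (Finset.sum_le_card_nsmul _ _ _ fun v _ => D.prob_E1 p hp0 hp v).trans ?_
    rw [nsmul_eq_mul]
    refine le_trans (mul_le_mul_of_nonneg_right ?_ (Real.exp_pos _).le) D.i16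
    have : ct (fun _ : V => True) ≤ r * N := by
      refine ct_union (fun _ : Fin r => True) (fun i v => D.c v = i) _ _ _ ?_ D.N_pos.le
        (fun i _ => (D.hc i).le) (fun v _ => ⟨D.c v, trivial, rfl⟩)
      unfold ct; rw [nct_eq]; simp
    unfold ct at this
    rw [nct_eq] at this
    simpa using this
  have h3 : wt p (fun s => ¬ D.Good s) ≤
      wt p (fun s => ¬ D.E2 s) + wt p (fun s => ∃ v, ¬ D.E1 v s) := by
    have := wt_union p hp0 (univ : Finset Bool)
      (fun b s => if b then ¬ D.E2 s else ∃ v, ¬ D.E1 v s) (fun s => ¬ D.Good s) (by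
        intro s _ hs
        unfold Good at hs
        by_cases h : D.E2 s
        · refine ⟨false, mem_univ _, ?_⟩
          simp only [Bool.false_eq_true, if_false]
          by_contra! hcon; exact hs ⟨h, hcon⟩
        · exact ⟨true, mem_univ _, by simpa using h⟩)
    rw [Fintype.sum_bool] at this
    simpa using this
  have h4 := wt_add_not p D.Good
  rw [hp1] at h4
  linarith

end BU

theorem nct_subtype {α : Type} [Fintype α] (P Q : α → Prop) [Fintype {a // P a}] :
    nct (fun a : {a // P a} => Q a.1) = nct (fun a => P a ∧ Q a) := by
  rw [nct_eq, nct_eq, ← Finset.card_map (Function.Embedding.subtype _)]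
  congr 1
  ext a
  simp [and_comm]

theorem ct_subtype {α : Type} [Fintype α] (P Q : α → Prop) [Fintype {a // P a}] :
    ct (fun a : {a // P a} => Q a.1) = ct (fun a => P a ∧ Q a) := by
  unfold ct; rw [nct_subtype]

theorem cnt_eq_ct {α : Type} [Fintype α] (T : Finset α) (P : α → Prop) :
    cnt T P = ct (fun a => a ∈ T ∧ P a) := by
  rw [cnt_eq, ct, nct_eq]
  congr 2
  ext a; simp

theorem card_eq_ct {α : Type} [Fintype α] (T : Finset α) : (T.card : ℝ) = ct (fun a => a ∈ T) := by
  rw [ct, nct_eq]; simp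

theorem ct_subtype' {α : Type} [Fintype α] (P : α → Prop) [Fintype {a // P a}]
    (Q : {a // P a} → Prop) :
    ct Q = ct (fun a => ∃ h : P a, Q ⟨a, h⟩) := by
  have := ct_subtype P (fun a => ∃ h : P a, Q ⟨a, h⟩)
  rw [ct_congr (P := fun a => P a ∧ ∃ h : P a, Q ⟨a, h⟩) (Q := fun a => ∃ h : P a, Q ⟨a, h⟩)
    (fun a => ⟨fun h => h.2, fun h => ⟨h.1, h⟩⟩)] at this
  rw [← this]
  exact ct_congr fun a => ⟨fun h => ⟨a.2, h⟩, fun h => h.2⟩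

/-- push forward of a weight -/
noncomputable def push {ι κ : Type} [Fintype ι] (w : ι → ℝ) (f : ι → κ) (k : κ) : ℝ :=
  wt w (fun i => f i = k)

theorem wt_push {ι κ : Type} [Fintype ι] [Fintype κ] (w : ι → ℝ) (f : ι → κ) (P : κ → Prop) :
    wt (push w f) P = wt w (fun i => P (f i)) := by
  unfold push wt
  calc _ = ∑ k, ∑ i, (if f i = k then (if P (f i) then w i else 0) else 0) := by
        refine Finset.sum_congr rfl fun k _ => ?_
        split_ifs with h
        · refine Finset.sum_congr rfl fun i _ => ?_
          by_cases hk : f i = k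
          · subst hk; simp [h]
          · simp [hk]
        · symm
          refine Finset.sum_eq_zero fun i _ => ?_
          by_cases hk : f i = k
          · subst hk; simp [h]
          · simp [hk]
    _ = _ := by
        rw [Finset.sum_comm]
        refine Finset.sum_congr rfl fun i _ => ?_
        rw [Finset.sum_ite_eq]
        simp

theorem wt_ne_zero {ι : Type} [Fintype ι] (w : ι → ℝ) (P : ι → Prop) (h : wt w P ≠ 0) :
    ∃ i, w i ≠ 0 ∧ P i := by
  unfold wt at h
  obtain ⟨i, _, hi⟩ := Finset.exists_ne_zero_of_sum_ne_zero h
  by_cases hp : P i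
  · rw [if_pos hp] at hi; exact ⟨i, hi, hp⟩
  · rw [if_neg hp] at hi; exact absurd rfl hi

theorem wt_pi {r : ℕ} {Z : Fin r → Type} [∀ i, Fintype (Z i)] (w : ∀ i, Z i → ℝ)
    (P : ∀ i, Z i → Prop) :
    wt (fun ψ : ∀ i, Z i => ∏ i, w i (ψ i)) (fun ψ => ∀ i, P i (ψ i)) = ∏ i, wt (w i) (P i) := by
  unfold wt
  rw [Finset.prod_univ_sum, Fintype.piFinset_univ]
  refine Finset.sum_congr rfl fun ψ _ => ?_
  by_cases h : ∀ i, P i (ψ i)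
  · rw [if_pos h]
    refine Finset.prod_congr rfl fun i _ => ?_
    rw [if_pos (h i)]
  · rw [if_neg h]
    push Not at h
    obtain ⟨i, hi⟩ := h
    exact (Finset.prod_eq_zero (mem_univ i) (by rw [if_neg hi])).symm

/-- the conclusion of the matching lemma -/
def MatchC (c c' C : ℝ) : Prop :=
  ∀ (X Y : Type) [Fintype X] [Fintype Y] [Fintype (X → Y)] (n : ℕ)
      (_ : Fintype.card X = n) (_ : Fintype.card Y = n) (_ : 0 < n) (E : X → Y → Prop),
      (∀ x, c * n ≤ cnt univ (E x)) → (∀ y, c * n ≤ cnt univ (fun x => E x y)) →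
      (∀ (S : Finset X) (T : Finset Y), c / 2 * n ≤ S.card → c / 2 * n ≤ T.card →
        c / 4 * n ≤ cnt S (fun x => c' * n ≤ cnt T (E x))) →
      ∃ w : (X → Y) → ℝ, (∀ φ, 0 ≤ w φ) ∧ ∑ φ, w φ = 1 ∧
        (∀ φ, w φ ≠ 0 → Function.Injective φ ∧ ∀ x, E x (φ x)) ∧
        ∀ (D : Finset X) (g : X → Y), wt w (fun φ => ∀ x ∈ D, φ x = g x) ≤ (C / n) ^ D.card

theorem exists_matchC (c c' : ℝ) (hc : 0 < c) (hc' : 0 < c') (hc'1 : c' ≤ 1) :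
    ∃ C : ℝ, 0 < C ∧ MatchC c c' C := by
  obtain ⟨C, h1, h2⟩ := matching_lemma c c' hc hc' hc'1
  refine ⟨C, h1, ?_⟩
  intro X Y _ _ inst n a1 a2 a3 E a4 a5 a6
  obtain rfl : inst = Pi.instFintype := Subsingleton.elim _ _
  exact h2 X Y n a1 a2 a3 E a4 a5 a6

namespace BU
variable {r Δ N m : ℕ} {V VH : Type} [Fintype V] [Fintype VH] (D : BU r Δ N m V VH)

theorem nct_unused {s : (VH → Option V) × Finset VH} (hs : D.Inv s) (i : Fin r) :
    nct (fun v => D.c v = i ∧ ¬ D.used s.1 v) = nct (fun x => D.h x = i ∧ s.1 x = none) := by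
  have h1 := nct_split (fun v => D.c v = i) (D.used s.1)
  have h2 := nct_split (fun x => D.h x = i) (fun x => s.1 x = none)
  have h3 : nct (fun v => D.c v = i) = nct (fun x => D.h x = i) := by
    have := (D.hc i).trans (D.hX i).symm
    unfold ct at this; exact_mod_cast this
  have h4 : nct (fun v => D.c v = i ∧ D.used s.1 v) = nct (fun x => D.h x = i ∧ ¬ s.1 x = none) := by
    rw [nct_eq, nct_eq]
    symm
    refine Finset.card_bij (fun x hx => (s.1 x).get (by
      rw [Option.isSome_iff_ne_none]; exact (mem_filter.mp hx).2.2)) ?_ ?_ ?_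
    · intro x hx
      have hx' := (mem_filter.mp hx).2
      obtain ⟨v, hv⟩ := Option.ne_none_iff_exists'.mp hx'.2
      simp only [hv, Option.get_some]
      refine mem_filter.mpr ⟨mem_univ _, ?_, x, hv⟩
      rw [D.hA x v (hs.emb x v hv).1]; exact hx'.1
    · intro x hx y hy hxy
      obtain ⟨v, hv⟩ := Option.ne_none_iff_exists'.mp (mem_filter.mp hx).2.2
      obtain ⟨w, hw⟩ := Option.ne_none_iff_exists'.mp (mem_filter.mp hy).2.2
      simp only [hv, hw, Option.get_some] at hxy
      subst hxy
      exact hs.inj x y v hv hw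
    · intro v hv
      obtain ⟨hc, x, hx⟩ := (mem_filter.mp hv).2
      refine ⟨x, mem_filter.mpr ⟨mem_univ _, ?_, by simp [hx]⟩, by simp [hx]⟩
      rw [← D.hA x v (hs.emb x v hx).1]; exact hc
  omega

theorem unembedded_ge {s : (VH → Option V) × Finset VH} (hs : D.Inv s) (i : Fin r) :
    D.μ * N / 2 ≤ ct (fun x => D.h x = i ∧ s.1 x = none) := by
  have h1 : ct (fun x => D.B x ∧ D.h x = i) ≤ ct (fun x => D.h x = i ∧ s.1 x = none) +
      ct (fun x => x ∈ s.2 ∧ D.h x = i) := ct_le_add fun x hx => by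
    by_cases h : s.1 x = none
    · exact Or.inl ⟨hx.2, h⟩
    · exact Or.inr ⟨hs.Bq x hx.1 h, hx.2⟩
  rw [D.hBm i] at h1
  have h2 := hs.Qb i
  have h3 := D.hm1
  have h4 := D.i12
  linarith

theorem good_Qok {s : (VH → Option V) × Finset VH} (hs : D.Inv s) (hg : D.E2 s) : D.Qok s.2 := by
  intro i
  have h1 : ct (fun v => D.c v = i ∧ ¬ D.used s.1 v) = ct (fun x => D.h x = i ∧ s.1 x = none) := by
    unfold ct; rw [D.nct_unused hs i]
  have h2 := D.unembedded_ge hs i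
  rw [← h1] at h2
  have hN := D.N_pos
  have h3 : D.τ * N ≤ D.μ / 2 * N := mul_le_mul_of_nonneg_right D.i13 hN.le
  have h4 := hg i (fun v => D.c v = i ∧ ¬ D.used s.1 v) (fun v hv => hv.1) (by linarith)
  have h5 : ct (fun x => x ∈ s.2 ∧ D.h x = i) ≤ ct D.W + ct (fun y => D.h y = i ∧ ¬ D.W y ∧
      D.bad (fun v => D.c v = i ∧ ¬ D.used s.1 v) y s.1) := ct_le_add fun x hx => by
    by_cases hW : D.W x
    · exact Or.inl hW
    refine Or.inr ⟨hx.2, hW, ?_⟩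
    unfold bad
    have a1 : ct (fun w => D.F s.1 x w ∧ D.c w = i ∧ ¬ D.used s.1 w) ≤ ct (D.FA s.1 x) :=
      ct_mono fun w hw => ⟨hw.1, hw.2.2⟩
    have a2 := (hs.Qe x hx.1).2
    have a3 := D.i14
    have a4 : D.d ^ Δ * (D.μ * N / 2) ≤ D.d ^ D.e s.1 x * ct (fun v => D.c v = i ∧ ¬ D.used s.1 v) :=
      mul_le_mul (D.dpow_e _ _) h2 (by have := D.hμ0; positivity) (pow_nonneg D.hd0.le _)
    linarith
  have h6 := D.hW
  have h7 : D.β * N ≤ D.γ / 2 * N := mul_le_mul_of_nonneg_right D.i11 hN.le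
  linarith

theorem good_nxt {s : (VH → Option V) × Finset VH} (hs : D.Inv s) (ho : D.opts s = ∅)
    (hg : D.E2 s) : D.nxt s.1 = none := by
  cases hz : D.nxt s.1 with
  | none => rfl
  | some z =>
    exfalso
    unfold opts at ho
    rw [hz] at ho
    simp only at ho
    rw [if_pos (D.good_Qok hs hg)] at ho
    have h1 := D.allowed_ge hs z (D.nxt_some hz).1
    obtain ⟨v, hv⟩ := exists_of_ct_pos (lt_of_lt_of_le (mul_pos D.hc00 D.N_pos) h1)
    have : v ∈ univ.filter (D.allowed s.1 z) := mem_filter.mpr ⟨mem_univ _, hv⟩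
    rw [ho] at this
    simp at this

/-- unembedded vertices of a class -/
abbrev Xt (s : VH → Option V) (i : Fin r) : Type := {x // D.h x = i ∧ s x = none}
/-- unused vertices of a class -/
abbrev Yt (s : VH → Option V) (i : Fin r) : Type := {v // D.c v = i ∧ ¬ D.used s v}

theorem class_match {C0 : ℝ} (hM : MatchC D.c2 (D.d ^ Δ * D.c2 / 2) C0)
    {s : (VH → Option V) × Finset VH} (hs : D.Inv s) (ho : D.opts s = ∅)
    (hg : D.Good s) (hC0 : 0 ≤ C0) (i : Fin r) :
    ∃ w : (D.Xt s.1 i → D.Yt s.1 i) → ℝ, (∀ φ, 0 ≤ w φ) ∧ ∑ φ, w φ = 1 ∧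
        (∀ φ, w φ ≠ 0 → Function.Injective φ ∧ ∀ x, D.F s.1 x.1 (φ x).1) ∧
        ∀ (I : Finset (D.Xt s.1 i)) (g : D.Xt s.1 i → D.Yt s.1 i),
          wt w (fun φ => ∀ x ∈ I, φ x = g x) ≤ (C0 / (D.μ * N / 2)) ^ I.card := by
  have hN := D.N_pos
  have hμ := D.hμ0
  have hc2 := D.hc20
  obtain ⟨hp, hcr, hB⟩ := D.nxt_none (D.good_nxt hs ho hg.1)
  set n := Fintype.card (D.Xt s.1 i) with hn
  have e1 : (n : ℝ) = ct (fun x => D.h x = i ∧ s.1 x = none) := by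
    rw [hn, Fintype.card_subtype, ct, nct_eq]
  have e2 : Fintype.card (D.Yt s.1 i) = n := by
    rw [hn, Fintype.card_subtype, Fintype.card_subtype, ← nct_eq, ← nct_eq, D.nct_unused hs i]
  have n1 : D.μ * N / 2 ≤ n := by rw [e1]; exact D.unembedded_ge hs i
  have n2 : (n : ℝ) ≤ 2 * D.μ * N := by
    rw [e1]
    refine le_trans ?_ D.hm2
    rw [← D.hBm i]
    exact ct_mono fun x hx => ⟨hB x hx.2, hx.1⟩
  have npos : (0 : ℝ) < n := lt_of_lt_of_le (by positivity) n1
  have c2n : D.c2 * n ≤ D.c2 * (2 * D.μ) * N := by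
    calc D.c2 * n ≤ D.c2 * (2 * D.μ * N) := mul_le_mul_of_nonneg_left n2 hc2.le
      _ = _ := by ring
  have key := hM (D.Xt s.1 i) (D.Yt s.1 i) n rfl e2 (by exact_mod_cast npos)
    (fun x v => D.F s.1 x.1 v.1)
  suffices hsuff : _ ∧ _ ∧ _ by
    obtain ⟨w, w1, w2, w3, w4⟩ := key hsuff.1 hsuff.2.1 hsuff.2.2
    refine ⟨w, w1, w2, w3, fun I g => (w4 I g).trans ?_⟩
    refine pow_le_pow_left₀ (by positivity) ?_ _
    exact div_le_div_of_nonneg_left hC0 (by positivity) n1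
  refine ⟨?_, ?_, ?_⟩
  · intro x
    rw [cnt_univ, ct_subtype (fun v => D.c v = i ∧ ¬ D.used s.1 v) (fun v => D.F s.1 x.1 v)]
    have h1 := hcr x.1
    unfold crit at h1
    push Not at h1
    have h2 := h1 x.2.2
    have h3 : ct (D.FA s.1 x.1) ≤ ct (fun v => (D.c v = i ∧ ¬ D.used s.1 v) ∧ D.F s.1 x.1 v) :=
      ct_mono fun v hv => ⟨⟨(D.FA_class hv).trans x.2.1, hv.2⟩, hv.1⟩
    have h4 := mul_le_mul_of_nonneg_right D.i19 hN.le
    linarith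
  · intro v
    rw [cnt_univ, ct_subtype (fun x => D.h x = i ∧ s.1 x = none) (fun x => D.F s.1 x v.1)]
    have h1 : D.q ^ Δ * D.μ * N / 4 ≤ _ := hg.2 v.1 hp
    have h2 : ct (fun x => (D.B x ∧ D.h x = D.c v.1) ∧ D.alive v.1 x s.1) ≤
        ct (fun x => (D.h x = i ∧ s.1 x = none) ∧ D.F s.1 x v.1) +
        ct (fun x => x ∈ s.2 ∧ D.h x = i) := ct_le_add fun x hx => by
      obtain ⟨⟨hb, hh⟩, ha⟩ := hx
      rw [v.2.1] at hh
      by_cases h : s.1 x = none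
      · refine Or.inl ⟨⟨hh, h⟩, D.hAW x (D.hBW x hb) _ (by rw [v.2.1, hh]), fun z w hz hw => ?_⟩
        exact (ha z hz).1 w hw
      · exact Or.inr ⟨hs.Bq x hb h, hh⟩
    have h3 := D.good_Qok hs hg.1 i
    have h4 := mul_le_mul_of_nonneg_right D.i18 hN.le
    linarith
  · intro S T hS hT
    rw [card_eq_ct, ct_subtype'] at hS hT
    set S' : VH → Prop := fun a => ∃ h, (⟨a, h⟩ : D.Xt s.1 i) ∈ S
    set T' : V → Prop := fun a => ∃ h, (⟨a, h⟩ : D.Yt s.1 i) ∈ T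
    have t1 : D.c2 / 2 * (D.μ * N / 2) ≤ D.c2 / 2 * n :=
      mul_le_mul_of_nonneg_left n1 (by positivity)
    have t2 := mul_le_mul_of_nonneg_right D.i20 hN.le
    have h1 := hg.1 i T' (fun v hv => hv.1.1) (by linarith)
    have h2 := mul_le_mul_of_nonneg_right D.i21 hN.le
    rw [cnt_eq_ct, ct_subtype']
    have h3 : ct S' ≤ ct (fun a => ∃ h : D.h a = i ∧ s.1 a = none, (⟨a, h⟩ : D.Xt s.1 i) ∈ S ∧
        D.d ^ Δ * D.c2 / 2 * n ≤ cnt T (fun v => D.F s.1 a v.1)) +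
        ct (fun y => D.h y = i ∧ ¬ D.W y ∧ D.bad T' y s.1) := ct_le_add fun x hx => by
      obtain ⟨hx1, hx2⟩ := hx
      by_cases hb : D.bad T' x s.1
      · exact Or.inr ⟨hx1.1, D.hBW x (hB x hx1.2), hb⟩
      · refine Or.inl ⟨hx1, hx2, ?_⟩
        unfold bad at hb
        push Not at hb
        rw [cnt_eq_ct, ct_subtype']
        have a1 : ct (fun w => D.F s.1 x w ∧ T' w) ≤
          ct (fun v => ∃ h : D.c v = i ∧ ¬ D.used s.1 v, (⟨v, h⟩ : D.Yt s.1 i) ∈ T ∧ D.F s.1 x v) :=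
          ct_mono fun v hv => ⟨hv.2.1, hv.2.2, hv.1⟩
        have a2 : D.d ^ Δ * (D.c2 / 2 * n) ≤ D.d ^ D.e s.1 x * ct T' :=
          mul_le_mul (D.dpow_e _ _) hT (by positivity) (pow_nonneg D.hd0.le _)
        linarith
    linarith

/-- the final map -/
noncomputable def fin (f : VH → Option V) (ψ : ∀ i, D.Xt f i → D.Yt f i) (x : VH) : V :=
  if hx : f x = none then (ψ (D.h x) ⟨x, rfl, hx⟩).1
  else (f x).get (by rw [Option.isSome_iff_ne_none]; exact hx)

theorem fin_none (f : VH → Option V) (ψ : ∀ i, D.Xt f i → D.Yt f i) (x : VH) (i : Fin r)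
    (hi : D.h x = i ∧ f x = none) : D.fin f ψ x = (ψ i ⟨x, hi⟩).1 := by
  obtain ⟨rfl, hx⟩ := hi
  unfold fin
  rw [dif_pos hx]

theorem fin_some (f : VH → Option V) (ψ : ∀ i, D.Xt f i → D.Yt f i) (x : VH) (v : V)
    (hi : f x = some v) : D.fin f ψ x = v := by
  unfold fin
  rw [dif_neg (by simp [hi])]
  simp [hi]

theorem spr_nonneg {K : ℝ} (hK : 0 ≤ K) (g : VH → V) (x : VH) (f : VH → Option V) :
    0 ≤ D.spr K g x f := by
  unfold spr; split_ifs <;> simp [hK]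

theorem complete {C0 : ℝ} (hM : MatchC D.c2 (D.d ^ Δ * D.c2 / 2) C0)
    {s : (VH → Option V) × Finset VH} (hs : D.Inv s) (ho : D.opts s = ∅)
    (hg : D.Good s) (hC0 : 0 ≤ C0) (K : ℝ) (hK : C0 / (D.μ * N / 2) ≤ K) :
    ∃ w : (VH → V) → ℝ, (∀ φ, 0 ≤ w φ) ∧ ∑ φ, w φ = 1 ∧
        (∀ φ, w φ ≠ 0 → Function.Injective φ ∧ (∀ x y, D.H.Adj x y → D.G.Adj (φ x) (φ y)) ∧
          ∀ x, D.A x (φ x)) ∧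
        ∀ (I : Finset VH) (g : VH → V),
          wt w (fun φ => ∀ x ∈ I, φ x = g x) ≤ ∏ x ∈ I, D.spr K g x s.1 := by
  have hN := D.N_pos
  have hμ := D.hμ0
  have hK1 : 0 ≤ C0 / (D.μ * N / 2) := by positivity
  have hK0 : 0 ≤ K := hK1.trans hK
  obtain ⟨hp, hcr, hB⟩ := D.nxt_none (D.good_nxt hs ho hg.1)
  choose w w1 w2 w3 w4 using D.class_match hM hs ho hg hC0
  have u1 : ∀ ψ : ∀ i, D.Xt s.1 i → D.Yt s.1 i, 0 ≤ ∏ i, w i (ψ i) :=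
    fun ψ => Finset.prod_nonneg fun i _ => w1 i _
  refine ⟨push (fun ψ : ∀ i, D.Xt s.1 i → D.Yt s.1 i => ∏ i, w i (ψ i)) (D.fin s.1), ?_, ?_, ?_, ?_⟩
  · intro φ; exact wt_nonneg _ u1 _
  · rw [← wt_true, wt_push]
    have := wt_pi w (fun i _ => True)
    simp only [implies_true, wt_true, w2, Finset.prod_const_one] at this
    rw [wt_true]
    exact this
  · intro φ hφ
    obtain ⟨ψ, hψ, rfl⟩ := wt_ne_zero _ _ hφ
    have k := fun i => w3 i (ψ i) (fun h0 => hψ (Finset.prod_eq_zero (mem_univ i) h0))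
    have hF : ∀ x, D.F s.1 x (D.fin s.1 ψ x) := by
      intro x
      cases hx : s.1 x with
      | none => rw [D.fin_none s.1 ψ x _ ⟨rfl, hx⟩]; exact (k (D.h x)).2 ⟨x, rfl, hx⟩
      | some v => rw [D.fin_some s.1 ψ x v hx]; exact hs.emb x v hx
    refine ⟨?_, ?_, fun x => (hF x).1⟩
    · intro x y hxy
      cases hx : s.1 x with
      | none =>
        cases hy : s.1 y with
        | none =>
          have hh : D.h x = D.h y := by
            rw [← D.F_mono_class (hF x), ← D.F_mono_class (hF y), hxy]
          rw [D.fin_none s.1 ψ x _ ⟨hh, hx⟩, D.fin_none s.1 ψ y _ ⟨rfl, hy⟩] at hxy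
          have := (k _).1 (Subtype.ext hxy)
          exact congrArg Subtype.val this
        | some v =>
          rw [D.fin_none s.1 ψ x _ ⟨rfl, hx⟩, D.fin_some s.1 ψ y v hy] at hxy
          exact absurd ⟨y, by rw [hxy]; exact hy⟩ (ψ (D.h x) ⟨x, rfl, hx⟩).2.2
      | some v =>
        cases hy : s.1 y with
        | none =>
          rw [D.fin_none s.1 ψ y _ ⟨rfl, hy⟩, D.fin_some s.1 ψ x v hx] at hxy
          exact absurd ⟨x, by rw [← hxy]; exact hx⟩ (ψ (D.h y) ⟨y, rfl, hy⟩).2.2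
        | some v' =>
          rw [D.fin_some s.1 ψ x v hx, D.fin_some s.1 ψ y v' hy] at hxy
          subst hxy
          exact hs.inj x y v hx hy
    · intro x y hxy
      cases hy : s.1 y with
      | some v => rw [D.fin_some s.1 ψ y v hy]; exact (hF x).2 y v hxy hy
      | none =>
        cases hx : s.1 x with
        | some v => rw [D.fin_some s.1 ψ x v hx]; exact ((hF y).2 x v hxy.symm hx).symm
        | none => exact absurd hxy (D.hB1 x y (hB x hx) (hB y hy))
  · intro I g
    rw [wt_push]
    by_cases h0 : ∃ ψ, ∀ x ∈ I, D.fin s.1 ψ x = g x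
    · obtain ⟨ψ0, h0⟩ := h0
      have e1 : ∏ x ∈ I, D.spr K g x s.1 = ∏ x ∈ I.filter (fun x => s.1 x = none), K := by
        rw [Finset.prod_filter]
        refine Finset.prod_congr rfl fun x hx => ?_
        unfold spr
        cases hx' : s.1 x with
        | none => simp
        | some v =>
          have := h0 x hx
          rw [D.fin_some s.1 ψ0 x v hx'] at this
          simp [this]
      have e2 : ∀ i, (univ.filter (fun x : D.Xt s.1 i => x.1 ∈ I)).card =
          ((I.filter (fun x => s.1 x = none)).filter (fun x => D.h x = i)).card := by
        intro i
        rw [← nct_eq, nct_subtype (fun x => D.h x = i ∧ s.1 x = none) (fun x => x ∈ I), nct_eq]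
        congr 1
        ext x; simp; tauto
      rw [e1, Finset.prod_const, Finset.card_eq_sum_card_fiberwise (t := univ) (f := D.h)
        (fun x _ => by simp), ← Finset.prod_pow_eq_pow_sum]
      refine (wt_mono _ u1 _ (fun ψ => ∀ i, ∀ x ∈ univ.filter (fun x : D.Xt s.1 i => x.1 ∈ I),
        ψ i x = ψ0 i x) ?_).trans ?_
      · intro ψ _ h i x hx
        have hx' := (mem_filter.mp hx).2
        have := (h x.1 hx').trans (h0 x.1 hx').symm
        rw [D.fin_none s.1 ψ x.1 i x.2, D.fin_none s.1 ψ0 x.1 i x.2] at this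
        exact Subtype.ext this
      · rw [wt_pi w (fun i f => ∀ x ∈ univ.filter (fun x : D.Xt s.1 i => x.1 ∈ I), f x = ψ0 i x)]
        refine Finset.prod_le_prod (fun i _ => wt_nonneg _ (w1 i) _) fun i _ => ?_
        refine (w4 i _ _).trans ?_
        rw [e2 i]
        exact pow_le_pow_left₀ hK1 hK _
    · push Not at h0
      have : wt (fun ψ : ∀ i, D.Xt s.1 i → D.Yt s.1 i => ∏ i, w i (ψ i))
          (fun ψ => ∀ x ∈ I, D.fin s.1 ψ x = g x) = 0 := by
        by_contra hcon
        obtain ⟨ψ, _, h⟩ := wt_ne_zero _ _ hcon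
        obtain ⟨x, hx, hne⟩ := h0 ψ
        exact hne (h x hx)
      rw [this]
      exact Finset.prod_nonneg fun x _ => D.spr_nonneg hK0 g x s.1

end BU

theorem wt_mix {ι κ : Type} [Fintype ι] [Fintype κ] (b : ι → ℝ) (w : ι → κ → ℝ) (P : κ → Prop) :
    wt (fun k => ∑ i, b i * w i k) P = ∑ i, b i * wt (w i) P := by
  unfold wt
  simp only [Finset.mul_sum]
  rw [Finset.sum_comm]
  refine Finset.sum_congr rfl fun k _ => ?_
  split_ifs
  · rfl
  · simp

namespace BU
variable {r Δ N m : ℕ} {V VH : Type} [Fintype V] [Fintype VH] (D : BU r Δ N m V VH)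

theorem main {C0 : ℝ} (hM : MatchC D.c2 (D.d ^ Δ * D.c2 / 2) C0) (hC0 : 0 ≤ C0) :
    ∃ w : (VH → V) → ℝ, (∀ φ, 0 ≤ w φ) ∧ ∑ φ, w φ = 1 ∧
        (∀ φ, w φ ≠ 0 → Function.Injective φ ∧ (∀ x y, D.H.Adj x y → D.G.Adj (φ x) (φ y)) ∧
          ∀ x, D.A x (φ x)) ∧
        ∀ (I : Finset VH) (g : VH → V),
          wt w (fun φ => ∀ x ∈ I, φ x = g x) ≤
            (2 * (1 / D.c0 + 2 * C0 / D.μ) / N) ^ I.card := by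
  have hN := D.N_pos
  have hμ := D.hμ0
  have hc0 := D.hc00
  set K := (1 / D.c0 + 2 * C0 / D.μ) / N with hK
  have hK0 : 0 ≤ K := by positivity
  have hK1 : C0 / (D.μ * N / 2) ≤ K := by
    have : C0 / (D.μ * N / 2) = (2 * C0 / D.μ) / N := by field_simp
    rw [this, hK]
    refine div_le_div_of_nonneg_right ?_ hN.le
    have : 0 ≤ 1 / D.c0 := by positivity
    linarith
  have hK2 : 1 ≤ K * (D.c0 * N) := by
    have : K * (D.c0 * N) = 1 + 2 * C0 / D.μ * D.c0 := by rw [hK]; field_simp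
    rw [this]
    have : 0 ≤ 2 * C0 / D.μ * D.c0 := by positivity
    linarith
  obtain ⟨p, p1, p2, p3, p4⟩ := D.exists_p
  have hZ := D.prob_good p p1 p2 p4
  set Z := wt p D.Good with hZd
  have hZ0 : 0 < Z := by linarith
  have hw : ∀ s : (VH → Option V) × Finset VH, ∃ w : (VH → V) → ℝ,
      (D.Inv s ∧ D.opts s = ∅ ∧ D.Good s) → ((∀ φ, 0 ≤ w φ) ∧ ∑ φ, w φ = 1 ∧
        (∀ φ, w φ ≠ 0 → Function.Injective φ ∧ (∀ x y, D.H.Adj x y → D.G.Adj (φ x) (φ y)) ∧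
          ∀ x, D.A x (φ x)) ∧
        ∀ (I : Finset VH) (g : VH → V),
          wt w (fun φ => ∀ x ∈ I, φ x = g x) ≤ ∏ x ∈ I, D.spr K g x s.1) := by
    intro s
    by_cases h : D.Inv s ∧ D.opts s = ∅ ∧ D.Good s
    · obtain ⟨w, hw⟩ := D.complete hM h.1 h.2.1 h.2.2 hC0 K hK1
      exact ⟨w, fun _ => hw⟩
    · exact ⟨0, fun h' => absurd h' h⟩
  choose ws hws using hw
  let b : (VH → Option V) × Finset VH → ℝ := fun s => (if D.Good s then p s else 0) / Z
  have b0 : ∀ s, 0 ≤ b s := by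
    intro s
    refine div_nonneg ?_ hZ0.le
    split_ifs
    · exact p1 s
    · exact le_rfl
  have b1 : ∑ s, b s = 1 := by
    have : ∑ s, (if D.Good s then p s else 0) = Z := rfl
    rw [← Finset.sum_div, this, div_self hZ0.ne']
  have b2 : ∀ s, b s ≤ 2 * p s := by
    intro s
    have : b s ≤ p s / Z := by
      refine div_le_div_of_nonneg_right ?_ hZ0.le
      split_ifs
      · exact le_rfl
      · exact p1 s
    refine this.trans ?_
    rw [div_le_iff₀ hZ0]
    nlinarith [p1 s]
  have b3 : ∀ s, b s ≠ 0 → (D.Inv s ∧ D.opts s = ∅ ∧ D.Good s) := by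
    intro s h
    by_cases hg : D.Good s
    · have hp : p s ≠ 0 := by
        rintro h0
        exact h (by simp only [b]; rw [if_pos hg, h0, zero_div])
      exact ⟨(p3 s hp).1, (p3 s hp).2, hg⟩
    · exact absurd (by simp only [b]; rw [if_neg hg, zero_div]) h
  have w0 : ∀ φ, 0 ≤ ∑ s, b s * ws s φ := by
    intro φ
    refine Finset.sum_nonneg fun s _ => ?_
    by_cases h : b s = 0
    · rw [h, zero_mul]
    · exact mul_nonneg (b0 s) ((hws s (b3 s h)).1 φ)
  have wsum : ∑ φ, ∑ s, b s * ws s φ = 1 := by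
    rw [Finset.sum_comm, ← b1]
    refine Finset.sum_congr rfl fun s _ => ?_
    rw [← Finset.mul_sum]
    by_cases h : b s = 0
    · rw [h, zero_mul]
    · rw [(hws s (b3 s h)).2.1, mul_one]
  refine ⟨fun φ => ∑ s, b s * ws s φ, w0, wsum, ?_, ?_⟩
  · intro φ hφ
    obtain ⟨s, _, hs⟩ := Finset.exists_ne_zero_of_sum_ne_zero hφ
    exact (hws s (b3 s (left_ne_zero_of_mul hs))).2.2.1 φ (right_ne_zero_of_mul hs)
  · intro I g
    rcases Finset.eq_empty_or_nonempty I with rfl | hI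
    · rw [Finset.card_empty, pow_zero, ← wsum, ← wt_true]
      exact wt_mono _ w0 _ _ fun _ _ _ => trivial
    · have e : 2 * (1 / D.c0 + 2 * C0 / D.μ) / N = 2 * K := by rw [hK]; ring
      rw [wt_mix, e]
      have h1 : ∀ s, b s * wt (ws s) (fun φ => ∀ x ∈ I, φ x = g x) ≤
          2 * (p s * ∏ x ∈ I, D.spr K g x s.1) := by
        intro s
        have hs0 : 0 ≤ ∏ x ∈ I, D.spr K g x s.1 :=
          Finset.prod_nonneg fun x _ => D.spr_nonneg hK0 g x s.1
        by_cases h : b s = 0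
        · rw [h, zero_mul]
          exact mul_nonneg (by norm_num) (mul_nonneg (p1 s) hs0)
        · calc _ ≤ b s * ∏ x ∈ I, D.spr K g x s.1 :=
                mul_le_mul_of_nonneg_left ((hws s (b3 s h)).2.2.2 I g) (b0 s)
            _ ≤ (2 * p s) * ∏ x ∈ I, D.spr K g x s.1 := mul_le_mul_of_nonneg_right (b2 s) hs0
            _ = _ := by ring
      refine (Finset.sum_le_sum fun s _ => h1 s).trans ?_
      rw [← Finset.mul_sum]
      have h2 := p4 _ (D.super_spr K hK2 g I)
      have h3 : ∏ x ∈ I, D.spr K g x D.s0.1 = K ^ I.card := by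
        rw [← Finset.prod_const]
        exact Finset.prod_congr rfl fun x _ => by simp [spr, s0]
      rw [h3] at h2
      refine (mul_le_mul_of_nonneg_left h2 (by norm_num)).trans ?_
      rw [mul_pow]
      refine mul_le_mul_of_nonneg_right ?_ (pow_nonneg hK0 _)
      calc (2 : ℝ) = 2 ^ 1 := by norm_num
        _ ≤ 2 ^ I.card := pow_le_pow_right₀ (by norm_num) hI.card_pos

end BU

/-- admissible constants -/
structure Cst (r Δ N m : ℕ) (ε d δ α β μ κ γ c0 q τ γ' c2 : ℝ) : Prop where
  hd0 : 0 < d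
  hd1 : d ≤ 1
  hδ0 : 0 < δ
  hα0 : 0 < α
  hε0 : 0 < ε
  hκ0 : 0 < κ
  hγ0 : 0 < γ
  hc00 : 0 < c0
  hμ0 : 0 < μ
  hq0 : 0 < q
  hq1 : q ≤ 1
  hN : 0 < N
  hm1 : μ * N ≤ m
  hm2 : (m : ℝ) ≤ 2 * μ * N
  i1 : r * m * Δ ≤ d ^ Δ * α * N / 2
  i2 : κ * N + 1 ≤ d ^ Δ * α * N / 2
  i3 : r * (γ * N + 1) ≤ d ^ Δ * κ * N / 2
  i4 : c0 ≤ d ^ Δ * κ / 4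
  i5 : Δ * ε ≤ c0
  i6 : ε ≤ c0
  i7 : r * m * Δ + 2 * (Δ * ε * N) ≤ (d ^ Δ * δ - q) * N
  i8 : ε ≤ d ^ Δ * δ
  i9 : ε ≤ d ^ Δ * τ
  i10 : Δ * (ε / c0) ≤ 1
  i11 : β ≤ γ / 2
  i12 : γ * N + 1 ≤ μ * N / 2
  i13 : τ ≤ μ / 2
  i14 : κ * N + 1 ≤ d ^ Δ * (μ * N / 2)
  hγ'0 : 0 < γ'
  hγ' : (1 + Δ * Δ) * γ' ≤ γ / 2
  i15 : Δ * (ε / c0) ≤ Real.exp (-(4 / γ'))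
  i16 : r * N * Real.exp (-(q ^ Δ * μ * N / 4)) ≤ 1 / 4
  i17 : r * Real.exp (-(2 * N)) ≤ 1 / 4
  hc20 : 0 < c2
  i18 : c2 * (2 * μ) + γ ≤ q ^ Δ * μ / 4
  i19 : c2 * (2 * μ) ≤ κ
  i20 : τ ≤ c2 * μ / 4
  i21 : γ ≤ c2 * μ / 8
  hεd : ε ≤ d
  hbuf : r * m * (1 + Δ + Δ * Δ + Δ * (Δ * Δ)) + (1 + Δ) * (β * N) < N

/-- `x * y ≤ x` helper -/
theorem mul_le_left' {x y : ℝ} (hx : 0 ≤ x) (hy : y ≤ 1) : x * y ≤ x := mul_le_of_le_one_right hx hy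

set_option maxHeartbeats 4000000 in
theorem constants (r Δ : ℕ) (δ α : ℝ) (hδ0 : 0 < δ) (hδ1 : δ ≤ 1) (hα0 : 0 < α) (hα1 : α ≤ 1) :
    ∃ (μ κ γ c0 q τ γ' c2 ε0 β0 : ℝ) (N0 : ℕ), 0 < ε0 ∧ 0 < β0 ∧ 0 < c2 ∧ c2 ≤ 1 ∧ 0 < c0 ∧ 0 < μ ∧
      ε0 ≤ δ / 2 ∧ ∀ ε β : ℝ, 0 < ε → ε ≤ ε0 → 0 < β → β ≤ β0 → ∀ N : ℕ, N0 ≤ N → ∃ m : ℕ,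
        Cst r Δ N m ε (δ / 2) δ α β μ κ γ c0 q τ γ' c2 := by
  set P : ℝ := (δ / 2) ^ Δ with hP
  have P0 : 0 < P := by positivity
  have P1 : P ≤ 1 := pow_le_one₀ (by positivity) (by linarith)
  clear_value P
  set M : ℝ := 1 + Δ + Δ * Δ + Δ * (Δ * Δ) with hM
  have Δ0 : (0 : ℝ) ≤ Δ := Nat.cast_nonneg _
  have r0 : (0 : ℝ) ≤ r := Nat.cast_nonneg _
  have M1 : 1 ≤ M := by linarith [mul_nonneg Δ0 Δ0, mul_nonneg Δ0 (mul_nonneg Δ0 Δ0)]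
  have MΔ : Δ ≤ M := by linarith [mul_nonneg Δ0 Δ0, mul_nonneg Δ0 (mul_nonneg Δ0 Δ0)]
  clear_value M
  set q : ℝ := P * δ / 2 with hq
  have q0 : 0 < q := by positivity
  clear_value q
  have Pδ1 : P * δ ≤ 1 := mul_le_one₀ P1 hδ0.le hδ1
  have q1 : q ≤ 1 := by linarith
  set Q : ℝ := q ^ Δ with hQ
  have Q0 : 0 < Q := by positivity
  have Q1 : Q ≤ 1 := pow_le_one₀ q0.le q1
  clear_value Q
  -- μ
  set μ : ℝ := P * α * δ / (16 * (r + 1) * M) with hμ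
  have den : 0 < 16 * ((r : ℝ) + 1) * M := by positivity
  have μ0 : 0 < μ := by positivity
  have μe : μ * (16 * (r + 1) * M) = P * α * δ := by rw [hμ]; field_simp
  clear_value μ
  have rM : 0 ≤ (r : ℝ) * M := by positivity
  have a1 : 16 * (r * μ * M) ≤ P * α * δ := by
    rw [← μe]
    have h1 := mul_pos μ0 (lt_of_lt_of_le one_pos M1)
    have h2 : μ * (16 * (r + 1) * M) = 16 * (r * μ * M) + 16 * (μ * M) := by ring
    linarith
  have a2 : 16 * μ ≤ P * α * δ := by
    rw [← μe]
    have h1 : 1 ≤ ((r : ℝ) + 1) * M := by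
      have : ((r : ℝ) + 1) * M = r * M + M := by ring
      linarith
    have h2 := mul_le_mul_of_nonneg_left h1 μ0.le
    have h3 : μ * (16 * (r + 1) * M) = 16 * (μ * ((r + 1) * M)) := by ring
    linarith
  have Pαδ1 : P * α * δ ≤ P * α := mul_le_left' (by positivity) hδ1
  have Pαδ2 : P * α * δ ≤ P * δ := by
    have : P * α * δ = P * δ * α := by ring
    rw [this]; exact mul_le_left' (by positivity) hα1
  have Pα1 : P * α ≤ α := by rw [mul_comm]; exact mul_le_left' hα0.le P1
  have μα : 16 * μ ≤ α := by linarith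
  have μ1 : 16 * μ ≤ 1 := by linarith
  -- κ
  set κ : ℝ := P * μ / 4 with hκ
  have κ0 : 0 < κ := by positivity
  clear_value κ
  have Pμ : P * μ ≤ μ := by rw [mul_comm]; exact mul_le_left' μ0.le P1
  have κ1 : κ ≤ 1 := by linarith
  set c2 : ℝ := Q * P / 32 with hc2
  have c20 : 0 < c2 := by positivity
  clear_value c2
  have QP : Q * P ≤ Q := mul_le_left' Q0.le P1
  have QP' : Q * P ≤ P := by rw [mul_comm]; exact mul_le_left' P0.le Q1
  have c21 : c2 ≤ 1 := by linarith
  set γ : ℝ := c2 * P * κ * μ / (64 * (r + 1)) with hγ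
  have γ0 : 0 < γ := by positivity
  have γe : γ * (64 * (r + 1)) = c2 * P * κ * μ := by rw [hγ]; field_simp
  clear_value γ
  have γe' : γ * (64 * (r + 1)) = 64 * (r * γ) + 64 * γ := by ring
  have rγ0 := mul_nonneg r0 γ0.le
  have g1 : 64 * γ ≤ c2 * P * κ * μ := by linarith
  have g2 : 64 * (r * γ) ≤ c2 * P * κ * μ := by linarith
  have Pκ1 : P * κ ≤ 1 := mul_le_one₀ P1 κ0.le κ1
  have g3 : c2 * P * κ * μ ≤ c2 * μ := by
    have : c2 * P * κ * μ = c2 * μ * (P * κ) := by ring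
    rw [this]; exact mul_le_left' (by positivity) Pκ1
  have g4 : c2 * P * κ * μ ≤ P * κ := by
    have : c2 * P * κ * μ = P * κ * (c2 * μ) := by ring
    rw [this]; exact mul_le_left' (by positivity) (mul_le_one₀ c21 μ0.le (by linarith))
  have c2μ : c2 * μ ≤ μ := by rw [mul_comm]; exact mul_le_left' μ0.le c21
  have c2Q : c2 * μ ≤ Q * μ / 32 := by
    have h1 : c2 ≤ Q / 32 := by linarith
    have h2 := mul_le_mul_of_nonneg_right h1 μ0.le
    linarith
  have c2P : c2 * μ ≤ P * μ / 32 := by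
    have h1 : c2 ≤ P / 32 := by linarith
    have h2 := mul_le_mul_of_nonneg_right h1 μ0.le
    linarith
  set τ : ℝ := c2 * μ / 4 with hτ
  have τ0 : 0 < τ := by positivity
  clear_value τ
  set c0 : ℝ := P * κ / 4 with hc0
  have c00 : 0 < c0 := by positivity
  clear_value c0
  set γ' : ℝ := γ / (2 * (1 + Δ * Δ)) with hγ'
  have γ'0 : 0 < γ' := by positivity
  have γ'e : (1 + Δ * Δ) * γ' = γ / 2 := by rw [hγ']; field_simp
  clear_value γ'
  set x : ℝ := Real.exp (-(4 / γ')) with hx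
  have x0 : 0 < x := Real.exp_pos _
  have x1 : x ≤ 1 := by rw [hx, Real.exp_le_one_iff]; have : 0 < 4 / γ' := by positivity
                        linarith
  clear_value x
  set ε0 : ℝ := c0 * x * P * δ * τ / (16 * (Δ + 1)) with hε0
  have ε00 : 0 < ε0 := by positivity
  have εe : ε0 * (16 * (Δ + 1)) = c0 * x * P * δ * τ := by rw [hε0]; field_simp
  clear_value ε0
  have εe' : ε0 * (16 * (Δ + 1)) = 16 * (Δ * ε0) + 16 * ε0 := by ring
  have Δε0 := mul_nonneg Δ0 ε00.le
  have f1 : 16 * ε0 ≤ c0 * x * P * δ * τ := by linarith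
  have f2 : 16 * (Δ * ε0) ≤ c0 * x * P * δ * τ := by linarith
  have τ1 : τ ≤ 1 := by linarith
  have c01 : c0 ≤ 1 := by linarith
  have k1 : c0 * x ≤ 1 := mul_le_one₀ c01 x0.le x1
  have k2 : c0 * x * P * δ * τ ≤ c0 * x := by
    have : c0 * x * P * δ * τ = c0 * x * (P * δ * τ) := by ring
    rw [this]; exact mul_le_left' (by positivity) (mul_le_one₀ Pδ1 τ0.le τ1)
  have k3 : c0 * x ≤ c0 := mul_le_left' c00.le x1
  have k4 : c0 * x * P * δ * τ ≤ P * δ := by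
    have : c0 * x * P * δ * τ = P * δ * (c0 * x * τ) := by ring
    rw [this]; exact mul_le_left' (by positivity) (mul_le_one₀ k1 τ0.le τ1)
  have k5 : c0 * x * P * δ * τ ≤ P * τ := by
    have : c0 * x * P * δ * τ = P * τ * (c0 * x * δ) := by ring
    rw [this]; exact mul_le_left' (by positivity) (mul_le_one₀ k1 hδ0.le hδ1)
  have Pδ : P * δ ≤ δ := by rw [mul_comm]; exact mul_le_left' hδ0.le P1
  set β0 : ℝ := γ / (4 * (Δ + 1)) with hβ0
  have β00 : 0 < β0 := by positivity
  have βe : (1 + Δ) * β0 = γ / 4 := by rw [hβ0]; field_simp; ring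
  clear_value β0
  have βe' : (1 + Δ) * β0 = β0 + Δ * β0 := by ring
  have Δβ0 := mul_nonneg Δ0 β00.le
  have γ1 : γ ≤ 1 := by linarith
  have βγ : β0 ≤ γ / 4 := by linarith
  -- threshold
  obtain ⟨n1, hn1⟩ := exists_nat_ge (4 / (P * μ))
  obtain ⟨n2, hn2⟩ := exists_nat_ge (4 * r / (P * κ))
  obtain ⟨n3, hn3⟩ := exists_nat_ge (4 * r * (2 / (Q * μ / 4) ^ 2))
  obtain ⟨n4, hn4⟩ := exists_nat_ge (4 * (r : ℝ))
  refine ⟨μ, κ, γ, c0, q, τ, γ', c2, ε0, β0, n1 + n2 + n3 + n4 + 1, ε00, β00, c20, c21, c00, μ0,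
    by linarith, ?_⟩
  intro ε β hε hεε hβ hββ N hN
  have N1 : (n1 : ℝ) + n2 + n3 + n4 + 1 ≤ N := by exact_mod_cast hN
  have p1 : (0 : ℝ) ≤ n1 := Nat.cast_nonneg _
  have p2 : (0 : ℝ) ≤ n2 := Nat.cast_nonneg _
  have p3 : (0 : ℝ) ≤ n3 := Nat.cast_nonneg _
  have p4 : (0 : ℝ) ≤ n4 := Nat.cast_nonneg _
  have Npos : (0 : ℝ) < N := by linarith
  have b1 : 4 ≤ P * μ * N := by
    have : 4 / (P * μ) ≤ N := by linarith
    rw [div_le_iff₀ (by positivity)] at this; linarith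
  have b2 : 4 * r ≤ P * κ * N := by
    have : 4 * r / (P * κ) ≤ N := by linarith
    rw [div_le_iff₀ (by positivity)] at this; linarith
  have b3 : 4 * r * (2 / (Q * μ / 4) ^ 2) ≤ N := by linarith
  have b4 : 4 * (r : ℝ) ≤ N := by linarith
  have hμN : P * μ * N ≤ μ * N := mul_le_mul_of_nonneg_right Pμ Npos.le
  refine ⟨⌈μ * N⌉₊, ?_⟩
  have m1 : μ * N ≤ ⌈μ * N⌉₊ := Nat.le_ceil _
  have m2 : (⌈μ * N⌉₊ : ℝ) ≤ 2 * μ * N := by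
    have := (Nat.ceil_lt_add_one (show 0 ≤ μ * N by positivity)).le
    linarith
  have sε : Δ * ε ≤ Δ * ε0 := mul_le_mul_of_nonneg_left hεε Δ0
  have rm : (r : ℝ) * ⌈μ * N⌉₊ * M ≤ P * α * δ * N / 8 := by
    calc (r : ℝ) * ⌈μ * N⌉₊ * M ≤ r * (2 * μ * N) * M := by gcongr
      _ = (16 * (r * μ * M)) * N / 8 := by ring
      _ ≤ _ := by gcongr
  have rmΔ : (r : ℝ) * ⌈μ * N⌉₊ * Δ ≤ P * α * δ * N / 8 := le_trans (by gcongr) rm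
  have h15 : Δ * (ε / c0) ≤ x := by
    rw [← mul_div_assoc, div_le_iff₀ c00]; linarith [mul_comm x c0]
  have tN : ∀ {a b : ℝ}, a ≤ b → a * N ≤ b * N := fun h => mul_le_mul_of_nonneg_right h Npos.le
  have t1 := tN Pαδ1
  have t2 := tN Pαδ2
  have t3 := tN a2
  have t4 := tN (show r * γ ≤ P * κ / 64 by linarith)
  have t5 := tN (show γ ≤ μ / 64 by linarith)
  have t6 := tN (show Δ * ε ≤ P * δ / 16 by linarith)
  have t7 := tN (show P * α * δ ≤ 1 by linarith)
  have t8 : (1 + Δ) * (β * N) ≤ 1 / 4 * N := by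
    calc (1 + Δ) * (β * N) = (1 + Δ) * β * N := by ring
      _ ≤ (1 + Δ) * β0 * N := by gcongr
      _ = γ / 4 * N := by rw [βe]
      _ ≤ _ := by gcongr
  refine
    { hd0 := by positivity, hd1 := by linarith, hδ0 := hδ0, hα0 := hα0, hε0 := hε, hκ0 := κ0,
      hγ0 := γ0, hc00 := c00, hμ0 := μ0, hq0 := q0, hq1 := q1, hN := by exact_mod_cast Npos,
      hm1 := m1, hm2 := m2, i1 := ?_, i2 := ?_, i3 := ?_, i4 := by rw [← hP]; linarith, i5 := by linarith,
      i6 := by linarith, i7 := ?_, i8 := by rw [← hP]; linarith, i9 := by rw [← hP]; linarith, i10 := h15.trans x1,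
      i11 := by linarith, i12 := by linarith, i13 := by linarith, i14 := ?_, hγ'0 := γ'0,
      hγ' := γ'e.le, i15 := by rw [← hx]; exact h15, i16 := ?_, i17 := ?_, hc20 := c20, i18 := by rw [← hQ]; linarith,
      i19 := by linarith, i20 := by linarith, i21 := by linarith, hεd := by linarith, hbuf := ?_ }
  · rw [← hP]
    have : 0 ≤ P * α * N := by positivity
    linarith
  · have : κ * N = P * μ * N / 4 := by rw [hκ]; ring
    rw [this, ← hP]
    have : 0 ≤ P * α * N := by positivity
    linarith
  · have : r * (γ * N + 1) = r * γ * N + r := by ring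
    rw [this, ← hP]
    linarith
  · have : (P * δ - q) * N = P * δ * N / 2 := by rw [hq]; ring
    rw [← hP, this]
    have : 0 ≤ P * δ * N := by positivity
    linarith
  · have : κ * N = P * μ * N / 4 := by rw [hκ]; ring
    rw [this, ← hP]
    linarith
  · set a : ℝ := Q * μ / 4 with ha
    have a0 : 0 < a := by positivity
    have e1 : Q * μ * N / 4 = a * N := by rw [ha]; ring
    rw [← hQ, e1, Real.exp_neg]
    have h1 : (a * N) ^ 2 / 2 ≤ Real.exp (a * N) := by
      have := Real.quadratic_le_exp_of_nonneg (show 0 ≤ a * N by positivity)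
      have : 0 ≤ a * N := by positivity
      linarith
    have h2 : (Real.exp (a * N))⁻¹ ≤ ((a * N) ^ 2 / 2)⁻¹ := inv_anti₀ (by positivity) h1
    calc r * N * (Real.exp (a * N))⁻¹ ≤ r * N * ((a * N) ^ 2 / 2)⁻¹ := by gcongr
      _ = (4 * r * (2 / a ^ 2)) / (4 * N) := by field_simp
      _ ≤ N / (4 * N) := by gcongr
      _ = 1 / 4 := by field_simp
  · rw [Real.exp_neg, ← div_eq_mul_inv, div_le_iff₀ (Real.exp_pos _)]
    have := Real.add_one_le_exp (2 * (N : ℝ))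
    linarith
  · rw [← hM]; linarith

/-- two vertices are at distance at most three (in a walk sense) -/
def near {VH : Type} (H : SimpleGraph VH) (b x : VH) : Prop :=
  b = x ∨ H.Adj b x ∨ (∃ y, H.Adj b y ∧ H.Adj y x) ∨ ∃ y, H.Adj b y ∧ ∃ z, H.Adj y z ∧ H.Adj z x

theorem near_symm {VH : Type} (H : SimpleGraph VH) {b x : VH} (h : near H b x) : near H x b := by
  rcases h with h | h | ⟨y, h1, h2⟩ | ⟨y, h1, z, h2, h3⟩
  · exact Or.inl h.symm
  · exact Or.inr (Or.inl h.symm)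
  · exact Or.inr (Or.inr (Or.inl ⟨y, h2.symm, h1.symm⟩))
  · exact Or.inr (Or.inr (Or.inr ⟨z, h3.symm, y, h2.symm, h1.symm⟩))

theorem ct_near {VH : Type} [Fintype VH] (H : SimpleGraph VH) (Δ : ℕ)
    (hdeg : ∀ x, nct (fun y => H.Adj x y) ≤ Δ) (b : VH) :
    ct (near H b) ≤ 1 + Δ + Δ * Δ + Δ * (Δ * Δ) := by
  have hd : ∀ x, ct (fun y => H.Adj x y) ≤ Δ := fun x => by unfold ct; exact_mod_cast hdeg x
  have h2 : ∀ x, ct (fun y => ∃ z, H.Adj x z ∧ H.Adj z y) ≤ Δ * Δ := fun x =>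
    ct_union (fun z => H.Adj x z) (fun z y => H.Adj z y) _ _ _ (hd x) (Nat.cast_nonneg _)
      (fun z _ => hd z) (fun y hy => hy)
  have h3 : ct (fun x => ∃ y, H.Adj b y ∧ ∃ z, H.Adj y z ∧ H.Adj z x) ≤ Δ * (Δ * Δ) :=
    ct_union (fun z => H.Adj b z) (fun z x => ∃ w, H.Adj z w ∧ H.Adj w x) _ _ _ (hd b)
      (by positivity) (fun z _ => h2 z) (fun y hy => hy)
  have e1 : ct (near H b) ≤ ct (fun x => x = b) + ct (fun x => H.Adj b x ∨
      (∃ y, H.Adj b y ∧ H.Adj y x) ∨ ∃ y, H.Adj b y ∧ ∃ z, H.Adj y z ∧ H.Adj z x) :=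
    ct_le_add fun x hx => by
      rcases hx with h | h
      · exact Or.inl h.symm
      · exact Or.inr h
  have e2 : ct (fun x => H.Adj b x ∨
      (∃ y, H.Adj b y ∧ H.Adj y x) ∨ ∃ y, H.Adj b y ∧ ∃ z, H.Adj y z ∧ H.Adj z x) ≤
      ct (fun x => H.Adj b x) + ct (fun x => (∃ y, H.Adj b y ∧ H.Adj y x) ∨
        ∃ y, H.Adj b y ∧ ∃ z, H.Adj y z ∧ H.Adj z x) := ct_le_add fun x hx => hx
  have e3 : ct (fun x => (∃ y, H.Adj b y ∧ H.Adj y x) ∨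
        ∃ y, H.Adj b y ∧ ∃ z, H.Adj y z ∧ H.Adj z x) ≤ ct (fun x => ∃ y, H.Adj b y ∧ H.Adj y x) +
        ct (fun x => ∃ y, H.Adj b y ∧ ∃ z, H.Adj y z ∧ H.Adj z x) := ct_le_add fun x hx => hx
  rw [ct_single] at e1
  linarith [hd b, h2 b]

theorem exists_buffer {VH : Type} [Fintype VH] {r : ℕ} (H : SimpleGraph VH) (Δ N m : ℕ) (h : VH → Fin r)
    (hX : ∀ i, ct (fun x => h x = i) = N)
    (hdeg : ∀ x, nct (fun y => H.Adj x y) ≤ Δ) (W : VH → Prop) (β : ℝ) (hW : ct W ≤ β * N)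
    (hbuf : r * m * (1 + Δ + Δ * Δ + Δ * (Δ * Δ)) + (1 + Δ) * (β * N) < (N : ℝ)) :
    ∃ B : VH → Prop, (∀ i, ct (fun x => B x ∧ h x = i) = m) ∧
      (∀ x y, B x → B y → near H x y → x = y) ∧
      (∀ x, B x → ¬ W x) ∧ ∀ x y, B x → H.Adj x y → ¬ W y := by
  let fam : Finset (Finset VH) := univ.filter fun B =>
    (∀ i, ct (fun x => x ∈ B ∧ h x = i) ≤ m) ∧ (∀ x ∈ B, ∀ y ∈ B, near H x y → x = y) ∧
    (∀ x ∈ B, ¬ W x) ∧ ∀ x ∈ B, ∀ y, H.Adj x y → ¬ W y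
  have hne : fam.Nonempty := ⟨∅, by
    simp only [fam, mem_filter, mem_univ, true_and]
    refine ⟨fun i => ?_, by simp, by simp, by simp⟩
    rw [ct, nct_zero (by simp)]; simp⟩
  obtain ⟨B, hB, hmax⟩ := fam.exists_max_image Finset.card hne
  have hB' := (mem_filter.mp hB).2
  obtain ⟨b1, b2, b3, b4⟩ := hB'
  refine ⟨fun x => x ∈ B, fun i => ?_, fun x y hx hy => b2 x hx y hy, b3, fun x y hx => b4 x hx y⟩
  refine le_antisymm (b1 i) ?_
  by_contra! hlt
  -- find a new vertex
  have hBc : ct (fun x => x ∈ B) ≤ r * m := by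
    refine ct_union (fun _ : Fin r => True) (fun i x => x ∈ B ∧ h x = i) _ _ _ ?_
      (Nat.cast_nonneg _) (fun i _ => b1 i) (fun x hx => ⟨h x, trivial, hx, rfl⟩)
    unfold ct; rw [nct_eq]; simp
  have n1 : ct (fun x => ∃ b, b ∈ B ∧ near H b x) ≤ r * m * (1 + Δ + Δ * Δ + Δ * (Δ * Δ)) :=
    ct_union (fun b => b ∈ B) (near H) _ _ _ hBc (by positivity)
      (fun b _ => ct_near H Δ hdeg b) (fun x hx => hx)
  have n2 : ct (fun x => ∃ y, W y ∧ H.Adj y x) ≤ β * N * Δ :=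
    ct_union W (fun y x => H.Adj y x) _ _ _ hW (Nat.cast_nonneg _)
      (fun b _ => by unfold ct; exact_mod_cast hdeg b) (fun x hx => hx)
  have n3 : ∃ x, h x = i ∧ (¬ ∃ b, b ∈ B ∧ near H b x) ∧ ¬ W x ∧ ¬ ∃ y, W y ∧ H.Adj y x := by
    by_contra! hcon
    have l1 : ct (fun x => h x = i) ≤ ct (fun x => ∃ b, b ∈ B ∧ near H b x) +
        ct (fun x => W x ∨ ∃ y, W y ∧ H.Adj y x) := ct_le_add fun x hx => by
      by_cases h1 : ∃ b, b ∈ B ∧ near H b x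
      · exact Or.inl h1
      · push Not at h1
        right
        by_cases h2 : W x
        · exact Or.inl h2
        · exact Or.inr (hcon x hx h1 h2)
    have l2 : ct (fun x => W x ∨ ∃ y, W y ∧ H.Adj y x) ≤ ct W + ct (fun x => ∃ y, W y ∧ H.Adj y x) :=
      ct_le_add fun x hx => hx
    rw [hX i] at l1
    linarith
  obtain ⟨x, hxi, hxn, hxW, hxNW⟩ := n3
  push Not at hxn hxNW
  have hxB : x ∉ B := fun hx => hxn x hx (Or.inl rfl)
  have hnew : insert x B ∈ fam := by
    simp only [fam, mem_filter, mem_univ, true_and]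
    refine ⟨fun j => ?_, ?_, ?_, ?_⟩
    · by_cases hj : j = i
      · subst hj
        have l1 : nct (fun y => y ∈ insert x B ∧ h y = j) ≤ nct (fun y => y ∈ B ∧ h y = j) + 1 := by
          have : ct (fun y => y ∈ insert x B ∧ h y = j) ≤ ct (fun y => y ∈ B ∧ h y = j) +
              ct (fun y => y = x) := ct_le_add fun y hy => by
            rcases mem_insert.mp hy.1 with h1 | h1
            · exact Or.inr h1
            · exact Or.inl ⟨h1, hy.2⟩
          rw [ct_single] at this
          unfold ct at this
          exact_mod_cast this
        have l2 : nct (fun y => y ∈ B ∧ h y = j) < m := by unfold ct at hlt; exact_mod_cast hlt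
        unfold ct
        exact_mod_cast (by omega : nct (fun y => y ∈ insert x B ∧ h y = j) ≤ m)
      · refine (ct_mono fun y hy => ?_).trans (b1 j)
        rcases mem_insert.mp hy.1 with h1 | h1
        · subst h1; exact absurd (hy.2.symm.trans hxi) hj
        · exact ⟨h1, hy.2⟩
    · intro a ha b hb hab
      rcases mem_insert.mp ha with h1 | h1 <;> rcases mem_insert.mp hb with h2 | h2
      · rw [h1, h2]
      · subst h1; exact absurd (near_symm H hab) (hxn b h2)
      · subst h2; exact absurd hab (hxn a h1)
      · exact b2 a h1 b h2 hab
    · intro a ha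
      rcases mem_insert.mp ha with h1 | h1
      · rw [h1]; exact hxW
      · exact b3 a h1
    · intro a ha y hy hWy
      rcases mem_insert.mp ha with h1 | h1
      · subst h1; exact hxNW y hWy hy.symm
      · exact b4 a h1 y hy hWy
  have := hmax _ hnew
  rw [card_insert_of_notMem hxB] at this
  omega

theorem ct_mem_filter {V : Type} [Fintype V] (A : Finset V) (P : V → Prop) [DecidablePred P] :
    ct (fun v => v ∈ A ∧ P v) = ((A.filter P).card : ℝ) := by
  unfold ct; rw [nct_eq]; congr 2; ext; simp

theorem density_ge {V : Type} {G : SimpleGraph V} {A B : Finset V} {ε δ : ℝ} {N : ℕ} (hN : 0 < N)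
    (h : IsSuperRegularPair G A B ε δ N) : δ ≤ edgeDensityR G A B := by
  obtain ⟨_, hA, hB, h1, _⟩ := h
  have hN' : (0 : ℝ) < N := by exact_mod_cast hN
  unfold edgeDensityR
  rw [hA, hB, le_div_iff₀ (by positivity)]
  have := Finset.card_nsmul_le_sum A (fun a => ((B.filter fun b => G.Adj a b).card : ℝ)) (δ * N) h1
  rw [hA, nsmul_eq_mul] at this
  linarith

theorem reg_of_super {V : Type} [Fintype V] {G : SimpleGraph V} {A B : Finset V} {ε δ : ℝ} {N : ℕ}
    (hN : 0 < N) (hε : 0 < ε) (hεδ : ε ≤ δ / 2)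
    (h : IsSuperRegularPair G A B ε δ N) (Y : V → Prop) (hY : ∀ v, Y v → v ∈ B)
    (hYc : ε * N ≤ ct Y) :
    ct (fun v => v ∈ A ∧ ct (fun u => Y u ∧ G.Adj u v) < δ / 2 * ct Y) ≤ ε * N := by
  have hd := density_ge hN h
  obtain ⟨hr, hA, hB, _, _⟩ := h
  have hN' : (0 : ℝ) < N := by exact_mod_cast hN
  by_contra! hcon
  set X := A.filter (fun v => ct (fun u => Y u ∧ G.Adj u v) < δ / 2 * ct Y) with hX
  have eX : ct (fun v => v ∈ A ∧ ct (fun u => Y u ∧ G.Adj u v) < δ / 2 * ct Y) = X.card :=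
    ct_mem_filter _ _
  have eY : ct Y = ((univ.filter Y).card : ℝ) := by unfold ct; rw [nct_eq]
  rw [eX] at hcon
  have h1 := hr X (filter_subset _ _) (univ.filter Y) (fun v hv => hY v (mem_filter.mp hv).2)
    (by rw [hA]; exact hcon.le) (by rw [hB, ← eY]; exact hYc)
  have hXp : (0 : ℝ) < X.card := lt_trans (by positivity) hcon
  have hYp : (0 : ℝ) < ct Y := lt_of_lt_of_le (by positivity) hYc
  have h2 : edgeDensityR G X (univ.filter Y) < δ / 2 := by
    unfold edgeDensityR
    rw [← eY, div_lt_iff₀ (by positivity)]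
    have : ∑ a ∈ X, (((univ.filter Y).filter fun b => G.Adj a b).card : ℝ) <
        ∑ a ∈ X, δ / 2 * ct Y := by
      refine Finset.sum_lt_sum_of_nonempty (Finset.card_pos.mp (by exact_mod_cast hXp)) fun a ha => ?_
      have := (mem_filter.mp ha).2
      refine lt_of_le_of_lt (le_of_eq ?_) this
      rw [← ct_mem_filter]
      exact ct_congr fun v => by rw [G.adj_comm]; simp
    rw [sum_const, nsmul_eq_mul] at this
    linarith
  have h3 := (abs_le.mp h1).1
  linarith

theorem pmf_of_weight {VH V : Type} [Fintype VH] [Fintype V] (S : (VH → V) → Prop)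
    (w : (VH → V) → ℝ) (w0 : ∀ φ, 0 ≤ w φ) (w1 : ∑ φ, w φ = 1) (wS : ∀ φ, w φ ≠ 0 → S φ) (q : ℝ)
    (hsp : ∀ (I : Finset VH) (g : VH → V), wt w (fun φ => ∀ x ∈ I, φ x = g x) ≤ q ^ I.card) :
    ∃ lam : PMF {φ : VH → V // S φ}, ∀ (k : ℕ) (x : Fin k → VH) (y : Fin k → V),
      Function.Injective x → Function.Injective y →
      lam.toOuterMeasure {φ | ∀ i, φ.1 (x i) = y i} ≤ ENNReal.ofReal (q ^ k) := by
  have hsub : ∀ f : (VH → V) → ℝ, (∀ φ, f φ ≠ 0 → S φ) →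
      ∑ φ : {φ : VH → V // S φ}, f φ.1 = ∑ φ, f φ := by
    intro f hf
    rw [← Finset.sum_subtype (univ.filter S) (fun x => by simp) f, Finset.sum_filter]
    refine Finset.sum_congr rfl fun φ _ => ?_
    split_ifs with h
    · rfl
    · by_contra hne; exact h (hf φ (Ne.symm hne))
  have hsum : ∑ φ : {φ : VH → V // S φ}, ENNReal.ofReal (w φ.1) = 1 := by
    rw [← ENNReal.ofReal_sum_of_nonneg (fun φ _ => w0 φ.1), hsub w wS, w1, ENNReal.ofReal_one]
  refine ⟨PMF.ofFintype _ hsum, fun k x y hx _ => ?_⟩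
  obtain ⟨φ0, _, _⟩ := Finset.exists_ne_zero_of_sum_ne_zero (show ∑ φ, w φ ≠ 0 by rw [w1]; norm_num)
  have h1 := hsp (univ.image x) (Function.extend x y φ0)
  rw [Finset.card_image_of_injective _ hx, Finset.card_univ, Fintype.card_fin] at h1
  refine le_trans (le_of_eq ?_) (ENNReal.ofReal_le_ofReal h1)
  rw [PMF.toOuterMeasure_apply_fintype]
  let f : (VH → V) → ℝ := fun φ =>
    @ite ℝ (∀ z ∈ univ.image x, φ z = Function.extend x y φ0 z) (Classical.propDecidable _) (w φ) 0
  have e : wt w (fun φ => ∀ z ∈ univ.image x, φ z = Function.extend x y φ0 z) = ∑ φ, f φ := by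
    unfold wt
    refine Finset.sum_congr rfl fun φ _ => ?_
    simp only [f]
  rw [e, ← hsub f (fun φ h => wS φ (by intro h0; simp [f, h0] at h)),
    ENNReal.ofReal_sum_of_nonneg]
  · refine Finset.sum_congr rfl fun φ _ => ?_
    have hiff : (∀ z ∈ univ.image x, φ.1 z = Function.extend x y φ0 z) ↔ ∀ i, φ.1 (x i) = y i := by
      simp [hx.extend_apply]
    simp only [f]
    by_cases h : ∀ i, φ.1 (x i) = y i
    · rw [if_pos (hiff.mpr h), Set.indicator_of_mem (by exact h)]; rfl
    · rw [if_neg (fun h' => h (hiff.mp h')), Set.indicator_of_notMem (by exact h)]; simp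
  · intro φ _
    simp only [f]
    split_ifs
    · exact w0 _
    · exact le_rfl

theorem full_case {r Δ N m : ℕ} {ε δ α β μ κ γ c0 q τ γ' c2 C0 : ℝ}
    (hC : Cst r Δ N m ε (δ / 2) δ α β μ κ γ c0 q τ γ' c2)
    (hM : MatchC c2 ((δ / 2) ^ Δ * c2 / 2) C0) (hC0 : 0 ≤ C0)
    (V VH : Type) [Fintype V] [Fintype VH] (R : SimpleGraph (Fin r)) (Vs : Fin r → Finset V)
    (G : SimpleGraph V) (H : SimpleGraph VH) (h : VH → Fin r) (c : V → Fin r)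
    (hcV : ∀ v i, c v = i ↔ v ∈ Vs i) (hVN : ∀ i, (Vs i).card = N)
    (hX : ∀ i, ct (fun x => h x = i) = N)
    (hS : ∀ i j : Fin r, R.Adj i j → IsSuperRegularPair G (Vs i) (Vs j) ε δ N)
    (hdeg : ∀ x, nct (fun y => H.Adj x y) ≤ Δ) (hom : ∀ x y, H.Adj x y → R.Adj (h x) (h y))
    (W : VH → Prop) (A : VH → V → Prop) (hW : ct W ≤ β * N) (hA : ∀ x v, A x v → c v = h x)
    (hAα : ∀ x, W x → α * N ≤ ct (A x)) (hα1 : α ≤ 1)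
    (hAW : ∀ x, ¬ W x → ∀ v, c v = h x → A x v) :
    ∃ w : (VH → V) → ℝ, (∀ φ, 0 ≤ w φ) ∧ ∑ φ, w φ = 1 ∧
        (∀ φ, w φ ≠ 0 → Function.Injective φ ∧ (∀ x y, H.Adj x y → G.Adj (φ x) (φ y)) ∧
          ∀ x, A x (φ x)) ∧
        ∀ (I : Finset VH) (g : VH → V),
          wt w (fun φ => ∀ x ∈ I, φ x = g x) ≤ (2 * (1 / c0 + 2 * C0 / μ) / N) ^ I.card := by
  obtain ⟨B, hBm, hB, hBW, hBNW⟩ := exists_buffer H Δ N m h hX hdeg W β hW hC.hbuf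
  have hc : ∀ i, ct (fun v => c v = i) = N := by
    intro i
    rw [ct, nct_eq, ← hVN i]
    congr 2
    ext v; simp [hcV]
  have hN : (0 : ℝ) < N := by exact_mod_cast hC.hN
  let D : BU r Δ N m V VH :=
    { G := G, H := H, R := R, h := h, c := c, A := A, W := W, B := B
      ε := ε, d := δ / 2, δ := δ, α := α, β := β, μ := μ, κ := κ, γ := γ, c0 := c0, q := q, τ := τ
      γ' := γ', c2 := c2, hc := hc, hX := hX
      reg := by
        intro i j hij Y hY hYc
        have := reg_of_super hC.hN hC.hε0 hC.hεd (hS i j hij) Y (fun v hv => (hcV v j).mp (hY v hv)) hYc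
        refine le_trans (le_of_eq ?_) this
        exact ct_congr fun v => by rw [hcV]
      mindeg := by
        intro v j hj
        obtain ⟨_, _, _, h1, _⟩ := hS _ _ hj
        refine (h1 v ((hcV v _).mp rfl)).trans (le_of_eq ?_)
        rw [← ct_mem_filter]
        exact ct_congr fun u => by rw [hcV, G.adj_comm]
      deg := hdeg, hom := hom, hA := hA
      hAα := by
        intro x
        by_cases hx : W x
        · exact hAα x hx
        · have h1 : ct (fun v => c v = h x) ≤ ct (A x) := ct_mono fun v hv => hAW x hx v hv
          rw [hc] at h1
          refine le_trans ?_ h1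
          exact mul_le_of_le_one_left hN.le hα1
      hAW := hAW, hW := hW, hBm := hBm
      hB1 := by
        intro x y hx hy hxy
        have := hB x y hx hy (Or.inr (Or.inl hxy))
        subst this; exact H.irrefl hxy
      hB2 := fun x x' y hx hx' h1 h2 => hB x x' hx hx' (Or.inr (Or.inr (Or.inl ⟨y, h1, h2.symm⟩)))
      hB3 := fun x x' y y' hx hx' h1 h2 h3 =>
        hB x x' hx hx' (Or.inr (Or.inr (Or.inr ⟨y, h1, y', h3, h2.symm⟩)))
      hBW := hBW, hBNW := hBNW, hd0 := hC.hd0, hd1 := hC.hd1, hδ0 := hC.hδ0, hα0 := hC.hα0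
      hε0 := hC.hε0, hκ0 := hC.hκ0, hγ0 := hC.hγ0, hc00 := hC.hc00, hμ0 := hC.hμ0, hq0 := hC.hq0
      hq1 := hC.hq1, hN := hC.hN, hm1 := hC.hm1, hm2 := hC.hm2, i1 := hC.i1, i2 := hC.i2
      i3 := hC.i3, i4 := hC.i4, i5 := hC.i5, i6 := hC.i6, i7 := hC.i7, i8 := hC.i8, i9 := hC.i9
      i10 := hC.i10, i11 := hC.i11, i12 := hC.i12, i13 := hC.i13, i14 := hC.i14
      hγ'0 := hC.hγ'0, hγ' := hC.hγ', i15 := hC.i15, i16 := hC.i16, i17 := hC.i17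
      hc20 := hC.hc20, i18 := hC.i18, i19 := hC.i19, i20 := hC.i20, i21 := hC.i21 }
  exact D.main hM hC0

theorem nct_sum {α β : Type} [Fintype α] [Fintype β] (P : α ⊕ β → Prop) :
    nct P = nct (fun a => P (Sum.inl a)) + nct (fun b => P (Sum.inr b)) := by
  rw [nct_eq, nct_eq, nct_eq]
  simp only [Finset.card_filter]
  rw [Fintype.sum_sum_type]

theorem nct_sigma {r : ℕ} (k : Fin r → ℕ) (i : Fin r) :
    nct (fun p : Σ i, Fin (k i) => p.1 = i) = k i := by
  rw [nct_eq, ← Fintype.card_subtype]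
  have e : {p : Σ i, Fin (k i) // p.1 = i} ≃ Fin (k i) := Equiv.sigmaSubtype i
  rw [Fintype.card_congr e, Fintype.card_fin]

/-- disjoint union with isolated padding vertices -/
def padGraph {α : Type} (β : Type) (H : SimpleGraph α) : SimpleGraph (α ⊕ β) where
  Adj x y := ∃ a b, x = Sum.inl a ∧ y = Sum.inl b ∧ H.Adj a b
  symm := ⟨by rintro x y ⟨a, b, rfl, rfl, h⟩; exact ⟨b, a, rfl, rfl, h.symm⟩⟩
  loopless := ⟨by
    rintro x ⟨a, b, h1, h2, h⟩
    rw [h1] at h2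
    exact h.ne (Sum.inl_injective h2)⟩

theorem padGraph_inl {α β : Type} (H : SimpleGraph α) (a b : α) :
    (padGraph β H).Adj (Sum.inl a) (Sum.inl b) ↔ H.Adj a b := by
  constructor
  · rintro ⟨a', b', h1, h2, h⟩
    rw [Sum.inl_injective h1, Sum.inl_injective h2]; exact h
  · exact fun h => ⟨a, b, rfl, rfl, h⟩

theorem restrict_weight {X Z V : Type} [Fintype X] [Fintype Z] [Fintype V] (w : (Z → V) → ℝ)
    (w0 : ∀ φ, 0 ≤ w φ) (w1 : ∑ φ, w φ = 1) (S : (Z → V) → Prop) (wS : ∀ φ, w φ ≠ 0 → S φ)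
    (f : X → Z) (hf : Function.Injective f) (hg : ∀ g : X → V, ∃ g' : Z → V, ∀ x, g' (f x) = g x)
    (q : ℝ) (wsp : ∀ (I : Finset Z) (g : Z → V),
      wt w (fun φ => ∀ x ∈ I, φ x = g x) ≤ q ^ I.card)
    (T : (X → V) → Prop) (hT : ∀ φ, S φ → T (fun x => φ (f x))) :
    ∃ w : (X → V) → ℝ, (∀ φ, 0 ≤ w φ) ∧ ∑ φ, w φ = 1 ∧ (∀ φ, w φ ≠ 0 → T φ) ∧
        ∀ (I : Finset X) (g : X → V), wt w (fun φ => ∀ x ∈ I, φ x = g x) ≤ q ^ I.card := by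
  refine ⟨push w (fun φ x => φ (f x)), fun φ => wt_nonneg w w0 _, ?_, ?_, ?_⟩
  · rw [← wt_true, wt_push, wt_true, w1]
  · intro φ hφ
    obtain ⟨ψ, hψ, rfl⟩ := wt_ne_zero _ _ hφ
    exact hT _ (wS ψ hψ)
  · intro I g
    rw [wt_push]
    obtain ⟨g', hg'⟩ := hg g
    have := wsp (I.map ⟨f, hf⟩) g'
    rw [Finset.card_map] at this
    refine le_trans (wt_mono _ w0 _ _ ?_) this
    intro φ _ hφ x hx
    obtain ⟨a, ha, rfl⟩ := Finset.mem_map.mp hx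
    exact (hφ a ha).trans (hg' a).symm

theorem large_case {r Δ N m : ℕ} {ε δ α β μ κ γ c0 q τ γ' c2 C0 : ℝ}
    (hC : Cst r Δ N m ε (δ / 2) δ α β μ κ γ c0 q τ γ' c2)
    (hM : MatchC c2 ((δ / 2) ^ Δ * c2 / 2) C0) (hC0 : 0 ≤ C0)
    (V VH : Type) [Fintype V] [Fintype VH] (R : SimpleGraph (Fin r)) (Vs : Fin r → Finset V)
    (G : SimpleGraph V) (H : SimpleGraph VH) (h : VH → Fin r) (c : V → Fin r)
    (hcV : ∀ v i, c v = i ↔ v ∈ Vs i) (hVN : ∀ i, (Vs i).card = N)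
    (hX : ∀ i, nct (fun x => h x = i) ≤ N)
    (hS : ∀ i j : Fin r, R.Adj i j → IsSuperRegularPair G (Vs i) (Vs j) ε δ N)
    (hdeg : ∀ x, nct (fun y => H.Adj x y) ≤ Δ) (hom : ∀ x y, H.Adj x y → R.Adj (h x) (h y))
    (W : VH → Prop) (A : VH → V → Prop) (hW : ct W ≤ β * N) (hA : ∀ x v, A x v → c v = h x)
    (hAα : ∀ x, W x → α * N ≤ ct (A x)) (hα1 : α ≤ 1)
    (hAW : ∀ x, ¬ W x → ∀ v, c v = h x → A x v) :
    ∃ w : (VH → V) → ℝ, (∀ φ, 0 ≤ w φ) ∧ ∑ φ, w φ = 1 ∧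
        (∀ φ, w φ ≠ 0 → Function.Injective φ ∧ (∀ x y, H.Adj x y → G.Adj (φ x) (φ y)) ∧
          ∀ x, A x (φ x)) ∧
        ∀ (I : Finset VH) (g : VH → V),
          wt w (fun φ => ∀ x ∈ I, φ x = g x) ≤ (2 * (1 / c0 + 2 * C0 / μ) / N) ^ I.card := by
  let k : Fin r → ℕ := fun i => N - nct (fun x => h x = i)
  let P := Σ i, Fin (k i)
  let h' : VH ⊕ P → Fin r := Sum.elim h Sigma.fst
  let W' : VH ⊕ P → Prop := Sum.elim W (fun _ => False)
  let A' : VH ⊕ P → V → Prop := Sum.elim A (fun p v => c v = p.1)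
  obtain ⟨w, w0, w1, wS, wsp⟩ := full_case hC hM hC0 V (VH ⊕ P) R Vs G (padGraph P H) h' c hcV hVN
    (by
      intro i
      rw [ct, nct_sum]
      have e1 : nct (fun a => h' (Sum.inl a) = i) = nct (fun x => h x = i) := rfl
      have e2 : nct (fun b => h' (Sum.inr b) = i) = k i := nct_sigma k i
      rw [e1, e2]
      have := hX i
      congr 1
      simp only [k]; omega)
    hS
    (by
      rintro (x | p)
      · rw [nct_sum, nct_zero (P := fun b => (padGraph P H).Adj (Sum.inl x) (Sum.inr b))]
        · rw [nct_congr (fun a => padGraph_inl H x a)]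
          simpa using hdeg x
        · rintro b ⟨_, _, _, h2, _⟩
          exact absurd h2 (by simp)
      · rw [nct_zero]
        · exact Nat.zero_le _
        · rintro b ⟨_, _, h1, _⟩
          exact absurd h1 (by simp))
    (by
      rintro x y ⟨a, b, rfl, rfl, hab⟩
      exact hom a b hab)
    W' A'
    (by
      rw [ct, nct_sum, nct_zero (P := fun b => W' (Sum.inr b)) (fun b hb => hb), add_zero]
      exact hW)
    (by
      rintro (x | p) v hv
      · exact hA x v hv
      · exact hv)
    (by
      rintro (x | p) hx
      · exact hAα x hx
      · exact hx.elim)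
    hα1
    (by
      rintro (x | p) hx v hv
      · exact hAW x hx v hv
      · exact hv)
  have hne : ∀ i, (Vs i).Nonempty := fun i => by
    rw [← Finset.card_pos, hVN i]; exact hC.hN
  choose z _ using hne
  refine restrict_weight w w0 w1 _ wS Sum.inl Sum.inl_injective
    (fun g => ⟨Sum.elim g fun p => z p.1, fun x => rfl⟩) _ wsp _ ?_
  rintro ψ ⟨a1, a2, a3⟩
  exact ⟨fun x y hxy => Sum.inl_injective (a1 hxy),
    fun x y hxy => a2 _ _ ((padGraph_inl H x y).mpr hxy), fun x => a3 (Sum.inl x)⟩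

theorem adj_of_small {N : ℕ} {ε δ : ℝ} (hN : 0 < N) (hε : ε * N ≤ 1) (hεδ : ε < δ)
    {V : Type} (G : SimpleGraph V) (A B : Finset V) (h : IsSuperRegularPair G A B ε δ N)
    {a b : V} (ha : a ∈ A) (hb : b ∈ B) : G.Adj a b := by
  by_contra hab
  have h1 := density_ge hN h
  obtain ⟨hr, hA, hB, _⟩ := h
  have := hr {a} (by simpa using ha) {b} (by simpa using hb) (by rw [hA]; simpa using hε)
    (by rw [hB]; simpa using hε)
  have e : edgeDensityR G {a} {b} = 0 := by
    unfold edgeDensityR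
    simp [Finset.filter_singleton, hab]
  rw [e] at this
  have := (abs_le.mp this).1
  linarith

theorem small_case {r N N0 : ℕ} {ε δ C : ℝ} (hN0 : N < N0) (hε : ε * N ≤ 1)
    (hεδ : ε < δ) (hCN : (N0 : ℝ) ≤ C)
    (V VH : Type) [Fintype V] [Fintype VH] (R : SimpleGraph (Fin r)) (Vs : Fin r → Finset V)
    (G : SimpleGraph V) (H : SimpleGraph VH) (h : VH → Fin r) (c : V → Fin r)
    (hcV : ∀ v i, c v = i ↔ v ∈ Vs i) (hVN : ∀ i, (Vs i).card = N)
    (hX : ∀ i, nct (fun x => h x = i) ≤ N)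
    (hS : ∀ i j : Fin r, R.Adj i j → IsSuperRegularPair G (Vs i) (Vs j) ε δ N)
    (hom : ∀ x y, H.Adj x y → R.Adj (h x) (h y)) (A : VH → V → Prop)
    (hAW : ∀ x v, c v = h x → A x v) :
    ∃ w : (VH → V) → ℝ, (∀ φ, 0 ≤ w φ) ∧ ∑ φ, w φ = 1 ∧
        (∀ φ, w φ ≠ 0 → Function.Injective φ ∧ (∀ x y, H.Adj x y → G.Adj (φ x) (φ y)) ∧
          ∀ x, A x (φ x)) ∧
        ∀ (I : Finset VH) (g : VH → V),
          wt w (fun φ => ∀ x ∈ I, φ x = g x) ≤ (C / N) ^ I.card := by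
  have hpos : ∀ x : VH, 0 < N := fun x =>
    lt_of_lt_of_le (nct_pos (P := fun y => h y = h x) x rfl) (hX (h x))
  have hemb : ∀ i, Nonempty ({x // h x = i} ↪ {v // v ∈ Vs i}) := fun i => by
    refine Function.Embedding.nonempty_of_card_le ?_
    rw [Fintype.card_subtype, ← nct_eq, Fintype.card_coe, hVN i]
    exact hX i
  let e : ∀ i, {x // h x = i} ↪ {v // v ∈ Vs i} := fun i => (hemb i).some
  let φ0 : VH → V := fun x => (e (h x) ⟨x, rfl⟩).1
  have hφc : ∀ x, c (φ0 x) = h x := fun x => (hcV _ _).mpr (e (h x) ⟨x, rfl⟩).2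
  have hφe : ∀ x i (hi : h x = i), φ0 x = (e i ⟨x, hi⟩).1 := by
    rintro x i rfl; rfl
  have hinj : Function.Injective φ0 := by
    intro x y hxy
    have h1 : h x = h y := by rw [← hφc x, ← hφc y, hxy]
    rw [hφe x _ h1, hφe y _ rfl] at hxy
    have := (e (h y)).injective (Subtype.ext hxy)
    exact congrArg Subtype.val this
  have w0 : ∀ φ, 0 ≤ (if φ = φ0 then (1 : ℝ) else 0) := fun φ => by split_ifs <;> norm_num
  refine ⟨fun φ => if φ = φ0 then 1 else 0, w0, by simp, ?_, ?_⟩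
  · intro φ hφ
    have : φ = φ0 := by by_contra hne; simp [hne] at hφ
    subst this
    refine ⟨hinj, fun x y hxy => ?_, fun x => hAW x _ (hφc x)⟩
    exact adj_of_small (hpos x) hε hεδ G _ _ (hS _ _ (hom x y hxy))
      ((hcV _ _).mp (hφc x)) ((hcV _ _).mp (hφc y))
  · intro I g
    have h1 : wt (fun φ => if φ = φ0 then (1 : ℝ) else 0) (fun φ => ∀ x ∈ I, φ x = g x) ≤ 1 := by
      refine le_trans (wt_mono _ w0 _ (fun _ => True) (fun _ _ _ => trivial)) ?_
      rw [wt_true]; simp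
    refine h1.trans ?_
    rcases I.eq_empty_or_nonempty with rfl | ⟨x, _⟩
    · simp
    · refine one_le_pow₀ ?_
      have hN : (0 : ℝ) < N := by exact_mod_cast hpos x
      rw [le_div_iff₀ hN, one_mul]
      exact le_trans (by exact_mod_cast hN0.le) hCN

/-- Spread blow-up lemma. -/
theorem spread_blow_up_lemma (r Δ : ℕ) (δ α : ℝ) (hδ : 0 < δ) (hα : 0 < α) :
    ∃ ε β C : ℝ, 0 < ε ∧ 0 < β ∧ 0 < C ∧
      ∀ (N : ℕ) (V : Type) [Fintype V] [DecidableEq V]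
        (R : SimpleGraph (Fin r)) (Vs : Fin r → Finset V) (G : SimpleGraph V)
        (VH : Type) [Fintype VH] [DecidableEq VH]
        (H : SimpleGraph VH) (h : VH → Fin r) (W : Finset VH) (Wx : VH → Finset V),
        -- the sets `V_1, …, V_r` have size `N`, are pairwise disjoint and cover `V`
        (∀ i, (Vs i).card = N) →
        (∀ i j : Fin r, i ≠ j → Disjoint (Vs i) (Vs j)) →
        (univ.biUnion Vs = (univ : Finset V)) →
        -- `(V_i, V_j)` is `(ε, δ)`-super-regular for every edge `{i, j}` of `R`
        (∀ i j : Fin r, R.Adj i j → IsSuperRegularPair G (Vs i) (Vs j) ε δ N) →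
        -- `H` has maximum degree at most `Δ`
        (∀ x : VH, (univ.filter fun y => H.Adj x y).card ≤ Δ) →
        -- `h` is a homomorphism from `H` to `R` with fibres of size at most `N`
        (∀ x y : VH, H.Adj x y → R.Adj (h x) (h y)) →
        (∀ i : Fin r, (univ.filter fun x => h x = i).card ≤ N) →
        -- `W` has size at most `βN` and target sets have size at least `αN`
        ((W.card : ℝ) ≤ β * N) →
        (∀ x ∈ W, Wx x ⊆ Vs (h x) ∧ α * N ≤ ((Wx x).card : ℝ)) →
        (∀ x ∉ W, Wx x = Vs (h x)) →
        -- conclusion: a `(C/N)`-vertex-spread distribution over embeddings of `H`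
        -- into `G` respecting the constraints `φ(x) ∈ W_x`
        ∃ lam : PMF {φ : VH → V // Function.Injective φ ∧
            (∀ x y : VH, H.Adj x y → G.Adj (φ x) (φ y)) ∧ ∀ x : VH, φ x ∈ Wx x},
          ∀ (k : ℕ) (x : Fin k → VH) (y : Fin k → V),
            Function.Injective x → Function.Injective y →
            lam.toOuterMeasure {φ | ∀ i, φ.1 (x i) = y i} ≤
              ENNReal.ofReal ((C / N) ^ k) := by
  have hδ0 : 0 < min δ 1 := lt_min hδ one_pos
  have hδ1 : min δ 1 ≤ 1 := min_le_right _ _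
  have hα0 : 0 < min α 1 := lt_min hα one_pos
  have hα1 : min α 1 ≤ 1 := min_le_right _ _
  obtain ⟨μ, κ, γ, c0, q, τ, γ', c2, ε0, β0, N0, hε0, hβ0, hc20, hc21, hc00, hμ0, hεδ, hcst⟩ :=
    constants r Δ (min δ 1) (min α 1) hδ0 hδ1 hα0 hα1
  have hp1 : (min δ 1 / 2) ^ Δ ≤ 1 := pow_le_one₀ (by positivity) (by linarith)
  have hp0 : 0 < (min δ 1 / 2) ^ Δ := by positivity
  obtain ⟨C0, hC0, hM⟩ := exists_matchC c2 ((min δ 1 / 2) ^ Δ * c2 / 2) hc20 (by positivity)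
    (by nlinarith)
  have hN1 : (0 : ℝ) < (N0 : ℝ) + 1 := by positivity
  have hC1 : 0 ≤ 2 * (1 / c0 + 2 * C0 / μ) := by positivity
  have hεpos : 0 < min ε0 (1 / ((N0 : ℝ) + 1)) := lt_min hε0 (by positivity)
  have hβpos : 0 < min β0 (1 / ((N0 : ℝ) + 1)) := lt_min hβ0 (by positivity)
  refine ⟨min ε0 (1 / ((N0 : ℝ) + 1)), min β0 (1 / ((N0 : ℝ) + 1)),
    2 * (1 / c0 + 2 * C0 / μ) + N0 + 1, hεpos, hβpos, by positivity, ?_⟩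
  intro N V _ _ R Vs G VH _ _ H h W Wx hVN hdisj hcov hS hdeg hom hfib hW hWx hWx'
  have hcex : ∀ v, ∃ i, v ∈ Vs i := by
    intro v
    have : v ∈ univ.biUnion Vs := by rw [hcov]; exact mem_univ v
    simpa using this
  choose c hc using hcex
  have hcV : ∀ v i, c v = i ↔ v ∈ Vs i := by
    intro v i
    constructor
    · rintro rfl; exact hc v
    · intro hv
      by_contra hne
      exact Finset.disjoint_left.mp (hdisj _ _ hne) (hc v) hv
  have hS' : ∀ i j : Fin r, R.Adj i j →
      IsSuperRegularPair G (Vs i) (Vs j) (min ε0 (1 / ((N0 : ℝ) + 1))) (min δ 1) N := by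
    intro i j hij
    obtain ⟨a1, a2, a3, a4, a5⟩ := hS i j hij
    have hm : min δ 1 * N ≤ δ * N :=
      mul_le_mul_of_nonneg_right (min_le_left _ _) (Nat.cast_nonneg _)
    exact ⟨a1, a2, a3, fun v hv => hm.trans (a4 v hv), fun v hv => hm.trans (a5 v hv)⟩
  have hfib' : ∀ i, nct (fun x => h x = i) ≤ N := fun i => by rw [nct_eq]; exact hfib i
  have hdeg' : ∀ x, nct (fun y => H.Adj x y) ≤ Δ := fun x => by rw [nct_eq]; exact hdeg x
  have key : ∃ w : (VH → V) → ℝ, (∀ φ, 0 ≤ w φ) ∧ ∑ φ, w φ = 1 ∧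
        (∀ φ, w φ ≠ 0 → Function.Injective φ ∧ (∀ x y, H.Adj x y → G.Adj (φ x) (φ y)) ∧
          ∀ x, φ x ∈ Wx x) ∧
        ∀ (I : Finset VH) (g : VH → V), wt w (fun φ => ∀ x ∈ I, φ x = g x) ≤
          ((2 * (1 / c0 + 2 * C0 / μ) + N0 + 1) / N) ^ I.card := by
    by_cases hN : N0 ≤ N
    · obtain ⟨m, hC⟩ := hcst _ _ hεpos (min_le_left _ _) hβpos (min_le_left _ _) N hN
      obtain ⟨w, w0, w1, wS, wsp⟩ := large_case hC hM hC0.le V VH R Vs G H h c hcV hVN hfib' hS'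
        hdeg' hom (fun x => x ∈ W) (fun x v => v ∈ Wx x)
        (by rw [ct, nct_eq, Finset.filter_univ_mem]; exact hW)
        (by
          intro x v hv
          rw [hcV]
          by_cases hx : x ∈ W
          · exact (hWx x hx).1 hv
          · rw [← hWx' x hx]; exact hv)
        (by
          intro x hx
          rw [ct, nct_eq, Finset.filter_univ_mem]
          exact le_trans (mul_le_mul_of_nonneg_right (min_le_left _ _) (Nat.cast_nonneg _))
            (hWx x hx).2)
        hα1
        (by
          intro x hx v hv
          rw [hWx' x hx, ← hcV]; exact hv)
      refine ⟨w, w0, ?_, wS, fun I g => le_trans (b := (2 * (1 / c0 + 2 * C0 / μ) / N) ^ I.card)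
        (by convert wsp I g; rfl) ?_⟩
      · convert w1
      · refine pow_le_pow_left₀ (by positivity) ?_ _
        refine div_le_div_of_nonneg_right ?_ (Nat.cast_nonneg _)
        have : (0 : ℝ) ≤ N0 := Nat.cast_nonneg _
        linarith
    · push Not at hN
      have hNN : (N : ℝ) < (N0 : ℝ) + 1 := by
        have : (N : ℝ) < N0 := by exact_mod_cast hN
        linarith
      have hle : 1 / ((N0 : ℝ) + 1) * N < 1 := by
        rw [one_div, inv_mul_lt_iff₀ hN1]; linarith
      have hWe : W = ∅ := by
        rw [← Finset.card_eq_zero]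
        have h1 : (W.card : ℝ) < 1 := lt_of_le_of_lt (hW.trans
          (mul_le_mul_of_nonneg_right (min_le_right _ _) (Nat.cast_nonneg _))) hle
        have h2 : W.card < 1 := by exact_mod_cast h1
        omega
      obtain ⟨w, w0, w1, wS, wsp⟩ := small_case (C := 2 * (1 / c0 + 2 * C0 / μ) + N0 + 1) hN
        ((mul_le_mul_of_nonneg_right (min_le_right _ _) (Nat.cast_nonneg _)).trans hle.le)
        (lt_of_le_of_lt (min_le_left _ _) (by linarith : ε0 < min δ 1)) (by linarith)
        V VH R Vs G H h c hcV hVN hfib' hS' hom (fun x v => v ∈ Wx x)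
        (by
          intro x v hv
          rw [hWx' x (by simp [hWe]), ← hcV]; exact hv)
      refine ⟨w, w0, ?_, wS, fun I g => by convert wsp I g⟩
      convert w1
  obtain ⟨w, w0, w1, wS, wsp⟩ := key
  exact pmf_of_weight _ w w0 (by convert w1) wS _ (fun I g => by convert wsp I g)
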